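/- Suppose 𝒳 is a compact metric space, φ:𝒳^v→ℝ is continuous, H is a tree, δ_□(W_{Q_n},W)→0 for some W∈𝒲, limsup_{n→∞} ‖𝔑_{W_{Q_n}}‖_∞ < ∞, and ‖𝔑_W‖_∞ < ∞ (essential supremum norms on [0,1]). Then both U_n(X) and V_n(X) satisfy a large deviation principle at speed n with the good rate function I₀(t) = inf{ D(ν|ρ) : ν ∈ 𝒯ℳ, D(ν|ρ) < ∞, T_{W,φ}(ν) = t }. -/

import Mathlib

open MeasureTheory Filter Set
open scoped ENNReal NNReal

noncomputable section

/-- The uniform probability measure on `[0,1]`. -/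
def unif01 : Measure ℝ := volume.restrict (Set.Icc 0 1)

instance : IsProbabilityMeasure unif01 :=
  ⟨by rw [unif01, Measure.restrict_apply_univ, Real.volume_Icc]; norm_num⟩

/-- The `L^r` norm (`r : ℝ≥0∞`) of a kernel, viewed as a function on `[0,1]²`. -/
def kerNorm (W : ℝ → ℝ → ℝ) (r : ℝ≥0∞) : ℝ≥0∞ :=
  eLpNorm (fun z : ℝ × ℝ => W z.1 z.2) r (unif01.prod unif01)

/-- The (strong) cut distance `d_□` between two kernels on `[0,1]²`. -/
def cutDist (W₁ W₂ : ℝ → ℝ → ℝ) : ℝ :=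
  ⨆ S : {S : Set ℝ // MeasurableSet S}, ⨆ T : {T : Set ℝ // MeasurableSet T},
    |∫ x in Set.Icc (0:ℝ) 1 ∩ S.1, ∫ y in Set.Icc (0:ℝ) 1 ∩ T.1, (W₁ x y - W₂ x y)|

/-- A Lebesgue-measure-preserving bijection of `[0,1]`. -/
def MPB (σ : ℝ → ℝ) : Prop :=
  Set.BijOn σ (Set.Icc 0 1) (Set.Icc 0 1) ∧ MeasurePreserving σ unif01 unif01

/-- The weak cut distance `δ_□`. -/
def weakCutDist (W₁ W₂ : ℝ → ℝ → ℝ) : ℝ :=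
  ⨅ σ : {σ : ℝ → ℝ // MPB σ}, cutDist (fun x y => W₁ (σ.1 x) (σ.1 y)) W₂

/-- The step kernel `W_{Q_n}` associated to an `n × n` matrix `Q`:
it equals `Q i j` when `⌈n x⌉ = i, ⌈n y⌉ = j`. -/
def stepKernel (n : ℕ) (Q : Fin n → Fin n → ℝ) : ℝ → ℝ → ℝ := fun x y =>
  ∑ i : Fin n, ∑ j : Fin n,
    if x ∈ Set.Ioc (((i : ℕ) : ℝ)/n) ((((i : ℕ) : ℝ)+1)/n) ∧
       y ∈ Set.Ioc (((j : ℕ) : ℝ)/n) ((((j : ℕ) : ℝ)+1)/n)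
    then Q i j else 0

/-- Product over the edges of `H` (each edge counted once) of `f a b`. -/
def edgeProd {v : ℕ} (G : SimpleGraph (Fin v)) [DecidableRel G.Adj]
    (f : Fin v → Fin v → ℝ) : ℝ :=
  ∏ p ∈ Finset.univ.filter (fun p : Fin v × Fin v => G.Adj p.1 p.2 ∧ p.1 < p.2), f p.1 p.2

/-- The number of edges `|E(H)|`. -/
def edgeCard {v : ℕ} (G : SimpleGraph (Fin v)) [DecidableRel G.Adj] : ℕ :=
  (Finset.univ.filter (fun p : Fin v × Fin v => G.Adj p.1 p.2 ∧ p.1 < p.2)).card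

/-- The inhomogeneous U-statistic `U_n(X)` (sum over distinct indices). -/
def Ustat {X : Type*} {v : ℕ} (G : SimpleGraph (Fin v)) [DecidableRel G.Adj]
    (φ : (Fin v → X) → ℝ) (n : ℕ) (Q : Fin n → Fin n → ℝ) (x : Fin n → X) : ℝ :=
  (∑ i ∈ Finset.univ.filter (fun i : Fin v → Fin n => Function.Injective i),
      φ (x ∘ i) * edgeProd G (fun a b => Q (i a) (i b))) / (n : ℝ) ^ v

/-- The inhomogeneous V-statistic `V_n(X)` (sum over all indices). -/
def Vstat {X : Type*} {v : ℕ} (G : SimpleGraph (Fin v)) [DecidableRel G.Adj]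
    (φ : (Fin v → X) → ℝ) (n : ℕ) (Q : Fin n → Fin n → ℝ) (x : Fin n → X) : ℝ :=
  (∑ i : Fin v → Fin n, φ (x ∘ i) * edgeProd G (fun a b => Q (i a) (i b))) / (n : ℝ) ^ v

open Classical in
/-- Kullback-Leibler divergence `D(ν | ρ) ∈ [0,∞]`. -/
def KLdiv {α : Type*} [MeasurableSpace α] (ν ρ : Measure α) : ℝ≥0∞ :=
  if ν ≪ ρ ∧ Integrable (llr ν ρ) ν then ENNReal.ofReal (∫ a, llr ν ρ a ∂ν) else ⊤

open Classical in
/-- `ν` itself if it is a probability measure, junk value `0` otherwise. -/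
def probOr {α : Type*} [MeasurableSpace α] (ν : Measure α) : Measure α :=
  if IsProbabilityMeasure ν then ν else 0

instance {α : Type*} [MeasurableSpace α] (ν : Measure α) : SigmaFinite (probOr ν) := by
  unfold probOr
  split_ifs with h
  · haveI := h; infer_instance
  · infer_instance

/-- `v`-fold product of a (probability) measure. -/
def piProb {α : Type*} [MeasurableSpace α] (v : ℕ) (ν : Measure α) : Measure (Fin v → α) :=
  Measure.pi fun _ => probOr ν

/-- The functional `T_{W,φ}(ν) = E[φ(B₁,…,B_v) ∏_{(a,b) ∈ E(H)} W(A_a,A_b)]`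
for `(A_a,B_a)` i.i.d. with law `ν`. -/
def TWphi {X : Type*} [MeasurableSpace X] {v : ℕ} (G : SimpleGraph (Fin v))
    [DecidableRel G.Adj] (W : ℝ → ℝ → ℝ) (φ : (Fin v → X) → ℝ)
    (ν : Measure (ℝ × X)) : ℝ :=
  ∫ z : Fin v → ℝ × X,
    φ (fun a => (z a).2) * edgeProd G (fun a b => W (z a).1 (z b).1) ∂(piProb v ν)

/-- Membership in `𝒯ℳ`: probability measures on `[0,1] × 𝒳` whose first marginal
is uniform on `[0,1]`. -/
def inTM {X : Type*} [MeasurableSpace X] (ν : Measure (ℝ × X)) : Prop :=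
  IsProbabilityMeasure ν ∧ ν.map Prod.fst = unif01

/-- The rate function `I₀(t) = inf { D(ν|ρ) : ν ∈ 𝒯ℳ, D(ν|ρ) < ∞, T_{W,φ}(ν) = t }`. -/
def rate0 {X : Type*} [MeasurableSpace X] {v : ℕ} (G : SimpleGraph (Fin v))
    [DecidableRel G.Adj] (W : ℝ → ℝ → ℝ) (φ : (Fin v → X) → ℝ) (μ : Measure X)
    (t : ℝ) : ℝ≥0∞ :=
  ⨅ ν : {ν : Measure (ℝ × X) //
      inTM ν ∧ KLdiv ν (unif01.prod μ) ≠ ⊤ ∧ TWphi G W φ ν = t},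
    KLdiv ν.1 (unif01.prod μ)

/-- Tail assumption (T): `E_μ[e^{λ ψ(X)^p}] < ∞` for all `λ > 0`; for `p = ∞`
it means `ψ` is bounded. -/
def TailCond {X : Type*} [MeasurableSpace X] (μ : Measure X) (ψ : X → ℝ)
    (p : ℝ≥0∞) : Prop :=
  if p = ⊤ then ∃ C : ℝ, ∀ x, ψ x ≤ C
  else ∀ lam : ℝ, 0 < lam →
    ∫⁻ x, ENNReal.ofReal (Real.exp (lam * ψ x ^ p.toReal)) ∂μ < ⊤

/-- A sequence of random elements `T n` defined on probability spaces `(Ω n, P n)`,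
taking values in a topological space `E`, satisfies a large deviation principle at
speed `n` with good rate function `I`. -/
def SatisfiesLDP {E : Type*} [TopologicalSpace E] {Ω : ℕ → Type*}
    [∀ n, MeasurableSpace (Ω n)] (P : ∀ n, Measure (Ω n)) (T : ∀ n, Ω n → E)
    (I : E → ℝ≥0∞) : Prop :=
  (∀ c : ℝ≥0∞, c ≠ ⊤ → IsCompact {x | I x ≤ c}) ∧
  ∀ F : Set E, MeasurableSet[borel E] F →
    (-(⨅ x ∈ interior F, (I x : EReal)) ≤
      Filter.atTop.liminf fun n : ℕ =>
        (((n : ℝ)⁻¹ : ℝ) : EReal) * ENNReal.log (P n {ω | T n ω ∈ F})) ∧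
    (Filter.atTop.limsup (fun n : ℕ =>
        (((n : ℝ)⁻¹ : ℝ) : EReal) * ENNReal.log (P n {ω | T n ω ∈ F})) ≤
      -(⨅ x ∈ closure F, (I x : EReal)))

end
/-- `𝔑_W(x) = ∫₀¹ |W(x,y)| dy`. -/
noncomputable def degFun (W : ℝ → ℝ → ℝ) : ℝ → ℝ := fun x => ∫ y, |W x y| ∂unif01

/-!
Identify `[n]` with the cells of an equipartition `τ : [0,1] → [n]`. The V-statistic is then
`T_{W_Q,φ}` evaluated at the empirical measure of the sample along `τ`, a random element of `𝒯ℳ`.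

Because `H` is a tree, it can be peeled leaf by leaf: a kernel with degrees at most `M` maps `L^∞`
to `L^∞`, so in a product of such kernels over the edges one kernel at a time can be replaced by
another one close to it as an operator `L^∞ → L¹`, which is closeness in the cut distance. This is a
counting lemma for tree functionals that needs degree bounds instead of bounded kernels, and it
lets `W` take the place of the step kernels. The bound on the degrees of `W` holds only almost
everywhere; setting `W` to zero off a set of full measure makes it hold everywhere and does not
change the functional on `𝒯ℳ`.

The empirical measures obey large deviation bounds in `𝒯ℳ` with rate `D(· | ρ)`: the upper bound
is the exponential Chebyshev inequality combined with the Donsker–Varadhan formula and compactness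
of `𝒯ℳ`, the lower bound a change of measure. These bounds pass to `T_{W,φ}` because it is,
uniformly on `𝒯ℳ`, a limit of polynomials in integrals of continuous functions.

Finally `U_n - V_n` is a sum over tuples with a repeated vertex. Peeling off the leaves outside the
tree path between two equal vertices and contracting that path by Cauchy–Schwarz bounds it by a
constant times `n⁻¹ ∑ i j, (Q i j / n)²`, which vanishes as `W_Q` converges to an integrable kernel.
-/

/-! ### Recursive trees -/

section LeafSums

variable {V : Type*} [Fintype V] [DecidableEq V] (G : SimpleGraph V) [DecidableRel G.Adj]

theorem edgeFinset_eq_insert_map_induce_of_leaf {l u : V} (hl : ∀ b, G.Adj l b ↔ b = u) :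
    G.edgeFinset = insert s(l, u) ((G.induce {l}ᶜ).edgeFinset.map
      ⟨Sym2.map Subtype.val, Sym2.map.injective Subtype.val_injective⟩) := by
  ext s
  induction s using Sym2.ind with | h a b =>
  simp only [SimpleGraph.mem_edgeFinset, SimpleGraph.mem_edgeSet, Finset.mem_insert,
    Finset.mem_map, Function.Embedding.coeFn_mk]
  constructor
  · intro hab
    rcases eq_or_ne a l with rfl | ha
    · exact .inl (by rw [(hl b).1 hab])
    rcases eq_or_ne b l with rfl | hb
    · exact .inl (by rw [(hl a).1 hab.symm, Sym2.eq_swap])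
    · exact .inr ⟨s(⟨a, ha⟩, ⟨b, hb⟩), by simpa using hab, by simp⟩
  · rintro (hab | ⟨s, hs, hab⟩)
    · rw [← SimpleGraph.mem_edgeSet, hab, SimpleGraph.mem_edgeSet, hl]
    · induction s using Sym2.ind with | h c d =>
      rw [← SimpleGraph.mem_edgeSet, ← hab]
      simpa using hs

theorem prod_edgeFinset_of_leaf {R : Type*} [CommMonoid R] {l u : V}
    (hl : ∀ b, G.Adj l b ↔ b = u) (F : Sym2 V → R) :
    ∏ s ∈ G.edgeFinset, F s =
      (∏ s ∈ (G.induce {l}ᶜ).edgeFinset, F (s.map Subtype.val)) * F s(l, u) := by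
  rw [edgeFinset_eq_insert_map_induce_of_leaf G hl, Finset.prod_insert, Finset.prod_map, mul_comm]
  · rfl
  · simp only [Finset.mem_map, Function.Embedding.coeFn_mk, not_exists, not_and]
    intro s _ h
    have hmem : l ∈ Sym2.map Subtype.val s := h ▸ Sym2.mem_mk_left l u
    obtain ⟨c, -, hc⟩ := Sym2.mem_map.1 hmem
    exact c.2 hc

end LeafSums

theorem bijective_snoc_of_equiv_compl {V : Type*} {m : ℕ} {l : V} (e : Fin m ≃ ({l}ᶜ : Set V)) :
    Function.Bijective (Fin.snoc (α := fun _ => V) (fun i => (e i : V)) l : Fin (m + 1) → V) := by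
  rw [Function.Bijective, Fin.snoc_injective_iff]
  refine ⟨⟨Subtype.val_injective.comp e.injective, ?_⟩, fun x => ?_⟩
  · rintro ⟨i, hi⟩
    exact (e i).2 hi
  · rcases eq_or_ne x l with rfl | hx
    · exact ⟨Fin.last m, Fin.snoc_last _ _⟩
    · exact ⟨(e.symm ⟨x, hx⟩).castSucc, by simp⟩

/-- A recursive tree on the vertices `0, …, m`: every vertex `k + 1` is joined to one earlier
vertex. Each finite tree has such a numbering, so structural induction on `RecTree` is induction by
removing a leaf. -/
inductive RecTree : ℕ → Type
  | single : RecTree 0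
  | attach {m : ℕ} (t : RecTree m) (p : Fin (m + 1)) : RecTree (m + 1)

namespace RecTree

variable {α β R : Type*} [CommMonoid R]

/-- The edge product `∏ K (z a) (z b)` of a kernel along a recursive tree, where `a` is the later
endpoint of each edge. -/
def weight (K : α → α → R) : {m : ℕ} → RecTree m → (Fin (m + 1) → α) → R
  | _, .single, _ => 1
  | _, .attach t p, z => t.weight K (Fin.init z) * K (z (Fin.last _)) (z p.castSucc)

theorem weight_snoc (K : α → α → R) {m : ℕ} (t : RecTree m) (p : Fin (m + 1))
    (z : Fin (m + 1) → α) (x : α) :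
    (t.attach p).weight K (Fin.snoc (α := fun _ => α) z x) = t.weight K z * K x (z p) := by
  simp [weight]

theorem weight_comp (K : β → β → R) (g : α → β) {m : ℕ} (t : RecTree m) (z : Fin (m + 1) → α) :
    t.weight K (g ∘ z) = t.weight (fun a b => K (g a) (g b)) z := by
  induction t with
  | single => rfl
  | attach t p ih => exact congrArg (· * _) (ih _)

theorem weight_congr {K K' : α → α → R} {A : Set α} (h : ∀ x ∈ A, ∀ y ∈ A, K x y = K' x y)
    {m : ℕ} (t : RecTree m) {z : Fin (m + 1) → α} (hz : ∀ a, z a ∈ A) :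
    t.weight K z = t.weight K' z := by
  induction t with
  | single => rfl
  | attach t p ih => exact congrArg₂ (· * ·) (ih fun _ => hz _) (h _ (hz _) _ (hz _))

end RecTree

theorem exists_recTree_prod_edgeFinset_eq {m : ℕ} {V : Type*} [Fintype V]
    (G : SimpleGraph V) [DecidableRel G.Adj] (hcard : Fintype.card V = m + 1) (hG : G.IsTree) :
    ∃ (t : RecTree m) (e : Fin (m + 1) ≃ V), ∀ {R : Type} [CommMonoid R] (f : V → V → R)
      (hf : ∀ a b, f a b = f b a), ∏ s ∈ G.edgeFinset, Sym2.lift ⟨f, hf⟩ s = t.weight f e := by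
  classical
  induction m generalizing V with
  | zero =>
    have := Fintype.card_le_one_iff_subsingleton.1 hcard.le
    refine ⟨.single, (Fintype.equivFinOfCardEq hcard).symm, fun f hf => ?_⟩
    rw [SimpleGraph.edgeFinset_eq_empty.2 (Subsingleton.elim G ⊥)]
    simp [RecTree.weight]
  | succ m ih =>
    have : Nontrivial V := Fintype.one_lt_card_iff_nontrivial.1 (by lia)
    obtain ⟨l, hl⟩ := hG.exists_vert_degree_one_of_nontrivial
    obtain ⟨u, hu, huniq⟩ := SimpleGraph.degree_eq_one_iff_existsUnique_adj.1 hl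
    have hleaf : ∀ b, G.Adj l b ↔ b = u := fun b => ⟨huniq b, by rintro rfl; exact hu⟩
    obtain ⟨t, e, hte⟩ := ih (G.induce {l}ᶜ) (by rw [Fintype.card_compl_set]; simp [hcard])
      ⟨hG.connected.induce_compl_singleton_of_degree_eq_one hl, hG.isAcyclic.induce {l}ᶜ⟩
    refine ⟨t.attach (e.symm ⟨u, hu.ne'⟩), .ofBijective _ (bijective_snoc_of_equiv_compl e),
      fun f hf => ?_⟩
    rw [prod_edgeFinset_of_leaf G hleaf, Equiv.coe_ofBijective, RecTree.weight_snoc]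
    congr 1
    · rw [show (fun i => (e i : V)) = Subtype.val ∘ e from rfl, RecTree.weight_comp,
        ← hte _ fun _ _ => hf _ _]
      refine Finset.prod_congr rfl fun s _ => ?_
      induction s using Sym2.ind with | h c d => rfl
    · simp

theorem exists_recTree_edgeProd_eq {m : ℕ} (G : SimpleGraph (Fin (m + 1))) [DecidableRel G.Adj]
    (hG : G.IsTree) :
    ∃ (t : RecTree m) (e : Fin (m + 1) ≃ Fin (m + 1)),
      ∀ {α : Type*} {K : α → α → ℝ} (_ : ∀ a b, K a b = K b a) (z : Fin (m + 1) → α),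
        edgeProd G (fun a b => K (z a) (z b)) = t.weight K (z ∘ e) := by
  obtain ⟨t, e, h⟩ := exists_recTree_prod_edgeFinset_eq G (Fintype.card_fin _) hG
  refine ⟨t, e, fun {α K} hK z => ?_⟩
  rw [RecTree.weight_comp, ← h _ fun _ _ => hK _ _, edgeProd]
  refine Finset.prod_bij (fun p _ => s(p.1, p.2)) (fun p hp => ?_) (fun p hp q hq hpq => ?_)
    (fun s hs => ?_) fun _ _ => rfl
  · simpa using (Finset.mem_filter.1 hp).2.1
  · rcases Sym2.eq_iff.1 hpq with ⟨h₁, h₂⟩ | ⟨h₁, h₂⟩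
    · exact Prod.ext h₁ h₂
    · have hlt := (Finset.mem_filter.1 hp).2.2
      rw [h₁, h₂] at hlt
      exact absurd hlt (Finset.mem_filter.1 hq).2.2.asymm
  · induction s using Sym2.ind with | h a b =>
    have hab : G.Adj a b := by simpa using hs
    rcases lt_or_gt_of_ne hab.ne with hlt | hlt
    · exact ⟨(a, b), by simp [hab, hlt], rfl⟩
    · exact ⟨(b, a), by simp [hab.symm, hlt], Sym2.eq_swap⟩

/-! ### The counting lemma for recursive trees -/

/-- A measurable kernel whose row and column `L¹` norms (its degrees) are bounded by `M`
everywhere, not only almost everywhere. -/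
structure HasDegreeLE {α : Type*} [MeasurableSpace α] (ν : Measure α) (K : α → α → ℝ)
    (M : ℝ≥0) : Prop where
  measurable : Measurable (Function.uncurry K)
  lintegral_left_le : ∀ x, ∫⁻ y, ‖K y x‖ₑ ∂ν ≤ M
  lintegral_right_le : ∀ x, ∫⁻ y, ‖K x y‖ₑ ∂ν ≤ M

/-- The integral operator of a kernel, integrating out the first variable. -/
noncomputable def kernelOp {α : Type*} [MeasurableSpace α] (ν : Measure α) (K : α → α → ℝ)
    (f : α → ℝ) (x : α) : ℝ :=
  ∫ y, K y x * f y ∂ν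

/-- `‖K - K'‖_{L^∞ → L¹} ≤ δ` for the integral operators; this norm is equivalent to the
cut norm. -/
def OpDistLE {α : Type*} [MeasurableSpace α] (ν : Measure α) (K K' : α → α → ℝ) (δ : ℝ) : Prop :=
  ∀ g : α → ℝ, Measurable g → (∀ x, |g x| ≤ 1) →
    ∫ x, |kernelOp ν K g x - kernelOp ν K' g x| ∂ν ≤ δ

section Measurability

variable {α : Type*} [MeasurableSpace α]

theorem measurable_snoc (m : ℕ) :
    Measurable fun q : (Fin (m + 1) → α) × α => (Fin.snoc q.1 q.2 : Fin (m + 2) → α) := by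
  refine measurable_pi_lambda _ fun a => Fin.lastCases ?_ (fun a => ?_) a
  · simpa using measurable_snd
  · simp only [Fin.snoc_castSucc]
    exact (measurable_pi_apply a).comp measurable_fst

theorem measurePreserving_snoc (ν : Measure α) [SigmaFinite ν] (m : ℕ) :
    MeasurePreserving (fun q : (Fin (m + 1) → α) × α => (Fin.snoc q.1 q.2 : Fin (m + 2) → α))
      ((Measure.pi fun _ => ν).prod ν) (Measure.pi fun _ => ν) := by
  have hinsert := (measurePreserving_piFinSuccAbove (α := fun _ : Fin (m + 2) => α)
    (fun _ => ν) (Fin.last _)).symm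
  convert hinsert.comp (Measure.measurePreserving_swap
    (μ := Measure.pi fun _ : Fin (m + 1) => ν) (ν := ν)) using 1
  ext q a
  simp only [Function.comp, MeasurableEquiv.piFinSuccAbove, MeasurableEquiv.symm_mk,
    MeasurableEquiv.coe_mk, Fin.insertNthEquiv]
  simp [Fin.insertNth_last']

theorem lintegral_snoc (ν : Measure α) [SigmaFinite ν] {m : ℕ} {F : (Fin (m + 2) → α) → ℝ≥0∞}
    (hF : Measurable F) :
    ∫⁻ z, F z ∂(Measure.pi fun _ => ν) =
      ∫⁻ y, ∫⁻ x, F (Fin.snoc (α := fun _ => α) y x) ∂ν ∂(Measure.pi fun _ => ν) := by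
  rw [← (measurePreserving_snoc ν m).lintegral_comp hF]
  exact lintegral_prod _ (hF.comp (measurable_snoc m)).aemeasurable

theorem integral_snoc (ν : Measure α) [SigmaFinite ν] {m : ℕ} {F : (Fin (m + 2) → α) → ℝ}
    (hF : Integrable F (Measure.pi fun _ => ν)) :
    ∫ z, F z ∂(Measure.pi fun _ => ν) =
      ∫ y, ∫ x, F (Fin.snoc (α := fun _ => α) y x) ∂ν ∂(Measure.pi fun _ => ν) := by
  have hmp := measurePreserving_snoc ν m
  rw [← hmp.map_eq, integral_map hmp.measurable.aemeasurable
    (by rw [hmp.map_eq]; exact hF.aestronglyMeasurable)]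
  exact integral_prod _ (hmp.integrable_comp_of_integrable hF)

theorem integrable_of_abs_le {ν : Measure α} [IsFiniteMeasure ν] {f : α → ℝ} {C : ℝ}
    (hf : Measurable f) (hC : ∀ x, |f x| ≤ C) : Integrable f ν :=
  .of_bound hf.aestronglyMeasurable C (.of_forall hC)

end Measurability

namespace RecTree

variable {α : Type*} [MeasurableSpace α] {ν : Measure α} {K : α → α → ℝ} {M : ℝ≥0} {m : ℕ}

theorem measurable_weight (hK : Measurable (Function.uncurry K)) (t : RecTree m) :
    Measurable (t.weight K) := by
  induction t with
  | single => exact measurable_const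
  | attach t p ih =>
    have hpair : Measurable fun z : Fin _ → α => (z (Fin.last _), z p.castSucc) :=
      (measurable_pi_apply _).prodMk (measurable_pi_apply _)
    exact (ih.comp (measurable_pi_lambda _ fun a => measurable_pi_apply _)).mul (hK.comp hpair)

variable [IsProbabilityMeasure ν]

theorem lintegral_weight_le (hK : HasDegreeLE ν K M) (t : RecTree m) :
    ∫⁻ z, ‖t.weight K z‖ₑ ∂(Measure.pi fun _ => ν) ≤ (M : ℝ≥0∞) ^ m := by
  induction t with
  | single => simp [weight]
  | attach t p ih =>
    rw [lintegral_snoc ν (measurable_weight hK.measurable _).enorm]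
    calc _ = ∫⁻ y, ‖t.weight K y‖ₑ * ∫⁻ x, ‖K x (y p)‖ₑ ∂ν ∂(Measure.pi fun _ => ν) := by
          simp only [weight_snoc, enorm_mul, lintegral_const_mul' _ _ enorm_ne_top]
      _ ≤ ∫⁻ y, ‖t.weight K y‖ₑ * M ∂(Measure.pi fun _ => ν) := by
          gcongr
          exact hK.lintegral_left_le _
      _ ≤ _ := by
          rw [lintegral_mul_const _ (measurable_weight hK.measurable t).enorm, pow_succ]
          gcongr

theorem integrable_weight (hK : HasDegreeLE ν K M) (t : RecTree m) :
    Integrable (t.weight K) (Measure.pi fun _ => ν) :=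
  ⟨(measurable_weight hK.measurable t).aestronglyMeasurable,
    (lintegral_weight_le hK t).trans_lt (by finiteness)⟩

theorem integrable_mul_weight (hK : HasDegreeLE ν K M) (t : RecTree m)
    {F : (Fin (m + 1) → α) → ℝ} (hF : Measurable F) {C : ℝ} (hC : ∀ z, |F z| ≤ C) :
    Integrable (fun z => F z * t.weight K z) (Measure.pi fun _ => ν) :=
  (integrable_weight hK t).bdd_mul hF.aestronglyMeasurable (.of_forall hC)

theorem integral_abs_weight_le (hK : HasDegreeLE ν K M) (t : RecTree m) :
    ∫ z, |t.weight K z| ∂(Measure.pi fun _ => ν) ≤ M ^ m := by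
  simp_rw [← Real.norm_eq_abs]
  rw [integral_norm_eq_lintegral_enorm (integrable_weight hK t).1]
  exact ENNReal.toReal_le_of_le_ofReal (by positivity) (by simpa using lintegral_weight_le hK t)

theorem abs_integral_mul_weight_le (hK : HasDegreeLE ν K M) (t : RecTree m)
    {F : (Fin (m + 1) → α) → ℝ} (hF : Measurable F) {C : ℝ} (hC : ∀ z, |F z| ≤ C) :
    |∫ z, F z * t.weight K z ∂(Measure.pi fun _ => ν)| ≤ C * M ^ m := by
  obtain ⟨z₀⟩ := nonempty_of_isProbabilityMeasure (Measure.pi fun _ : Fin (m + 1) => ν)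
  have hC0 : 0 ≤ C := (abs_nonneg _).trans (hC z₀)
  calc _ ≤ ∫ z, |F z * t.weight K z| ∂(Measure.pi fun _ => ν) := abs_integral_le_integral_abs
    _ ≤ ∫ z, C * |t.weight K z| ∂(Measure.pi fun _ => ν) := by
      refine integral_mono (integrable_mul_weight hK t hF hC).abs
        ((integrable_weight hK t).abs.const_mul C) fun z => ?_
      dsimp only
      rw [abs_mul]
      exact mul_le_mul_of_nonneg_right (hC z) (abs_nonneg _)
    _ ≤ _ := by
      rw [integral_const_mul]
      exact mul_le_mul_of_nonneg_left (integral_abs_weight_le hK t) hC0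

end RecTree

namespace HasDegreeLE

variable {α : Type*} [MeasurableSpace α] {ν : Measure α} {K : α → α → ℝ} {M : ℝ≥0}
  {f : α → ℝ} {C : ℝ}

theorem integrable_left (hK : HasDegreeLE ν K M) (x : α) : Integrable (fun y => K y x) ν :=
  ⟨(hK.measurable.comp (measurable_id.prodMk measurable_const)).aestronglyMeasurable,
    (hK.lintegral_left_le x).trans_lt (by finiteness)⟩

theorem integrable_left_mul (hK : HasDegreeLE ν K M) (x : α) (hf : Measurable f)
    (hC : ∀ x, |f x| ≤ C) : Integrable (fun y => K y x * f y) ν :=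
  (hK.integrable_left x).mul_bdd hf.aestronglyMeasurable (.of_forall hC)

theorem kernelOp_sub (hK : HasDegreeLE ν K M) {g : α → ℝ} (hf : Measurable f)
    (hC : ∀ x, |f x| ≤ C) (hg : Measurable g) (hgC : ∀ x, |g x| ≤ C) (x : α) :
    kernelOp ν K (f - g) x = kernelOp ν K f x - kernelOp ν K g x := by
  rw [kernelOp, kernelOp, kernelOp,
    ← integral_sub (hK.integrable_left_mul x hf hC) (hK.integrable_left_mul x hg hgC)]
  simp only [Pi.sub_apply, mul_sub]

theorem abs_kernelOp_le (hK : HasDegreeLE ν K M) (hf : Measurable f) (hC : ∀ x, |f x| ≤ C)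
    (x : α) : |kernelOp ν K f x| ≤ C * M := by
  have hC0 : 0 ≤ C := (abs_nonneg _).trans (hC x)
  calc _ ≤ ∫ y, |K y x * f y| ∂ν := abs_integral_le_integral_abs
    _ ≤ ∫ y, C * |K y x| ∂ν := by
      refine integral_mono (hK.integrable_left_mul x hf hC).abs
        ((hK.integrable_left x).abs.const_mul C) fun y => ?_
      dsimp only
      rw [abs_mul, mul_comm]
      exact mul_le_mul_of_nonneg_right (hC y) (abs_nonneg _)
    _ ≤ _ := by
      rw [integral_const_mul]
      gcongr
      simp_rw [← Real.norm_eq_abs]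
      rw [integral_norm_eq_lintegral_enorm (hK.integrable_left x).1]
      exact ENNReal.toReal_mono ENNReal.coe_ne_top (hK.lintegral_left_le x)

theorem measurable_kernelOp [SFinite ν] (hK : HasDegreeLE ν K M) (hf : Measurable f) :
    Measurable (kernelOp ν K f) :=
  (((hK.measurable.comp measurable_swap).mul
    (hf.comp measurable_snd)).stronglyMeasurable.integral_prod_right' (ν := ν)).measurable

theorem integrable_kernelOp [IsFiniteMeasure ν] (hK : HasDegreeLE ν K M) (hf : Measurable f)
    (hC : ∀ x, |f x| ≤ C) : Integrable (kernelOp ν K f) ν :=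
  integrable_of_abs_le (hK.measurable_kernelOp hf) (hK.abs_kernelOp_le hf hC)

theorem lintegral_kernelOp_le [SFinite ν] (hK : HasDegreeLE ν K M) (hf : Measurable f) :
    ∫⁻ x, ‖kernelOp ν K f x‖ₑ ∂ν ≤ M * ∫⁻ y, ‖f y‖ₑ ∂ν := by
  have hmeas : Measurable (Function.uncurry fun x y => ‖K y x * f y‖ₑ) :=
    ((hK.measurable.comp measurable_swap).mul (hf.comp measurable_snd)).enorm
  calc _ ≤ ∫⁻ x, ∫⁻ y, ‖K y x * f y‖ₑ ∂ν ∂ν := by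
        gcongr
        exact enorm_integral_le_lintegral_enorm _
    _ = ∫⁻ y, ∫⁻ x, ‖K y x * f y‖ₑ ∂ν ∂ν := lintegral_lintegral_swap hmeas.aemeasurable
    _ ≤ ∫⁻ y, M * ‖f y‖ₑ ∂ν := by
        gcongr with y
        simp_rw [enorm_mul]
        rw [lintegral_mul_const' _ _ enorm_ne_top]
        gcongr
        exact hK.lintegral_right_le y
    _ = _ := lintegral_const_mul _ hf.enorm

theorem integral_abs_kernelOp_le [IsFiniteMeasure ν] (hK : HasDegreeLE ν K M)
    (hf : Measurable f) (hC : ∀ x, |f x| ≤ C) :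
    ∫ x, |kernelOp ν K f x| ∂ν ≤ M * ∫ y, |f y| ∂ν := by
  have hfin : ∫⁻ y, ‖f y‖ₑ ∂ν ≠ ⊤ := (integrable_of_abs_le hf hC).2.ne
  simp_rw [← Real.norm_eq_abs]
  rw [integral_norm_eq_lintegral_enorm (hK.measurable_kernelOp hf).aestronglyMeasurable,
    integral_norm_eq_lintegral_enorm hf.aestronglyMeasurable]
  simpa using ENNReal.toReal_mono (by finiteness) (hK.lintegral_kernelOp_le hf)

end HasDegreeLE

namespace OpDistLE

variable {α : Type*} [MeasurableSpace α] {ν : Measure α} {K K' : α → α → ℝ} {δ : ℝ}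

theorem nonneg (h : OpDistLE ν K K' δ) : 0 ≤ δ :=
  (integral_nonneg fun _ => abs_nonneg _).trans (h (fun _ => 0) measurable_const (by simp))

theorem integral_le_mul (h : OpDistLE ν K K' δ) {g : α → ℝ} (hg : Measurable g) {C : ℝ}
    (hC0 : 0 < C) (hC : ∀ x, |g x| ≤ C) :
    ∫ x, |kernelOp ν K g x - kernelOp ν K' g x| ∂ν ≤ C * δ := by
  have hscale : ∀ L x, kernelOp ν L g x = C * kernelOp ν L (fun y => g y / C) x := fun L x => by
    simp_rw [kernelOp, ← mul_div_assoc, integral_div]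
    field_simp
  simp_rw [hscale, ← mul_sub, abs_mul, abs_of_pos hC0, integral_const_mul]
  refine mul_le_mul_of_nonneg_left (h _ (hg.div_const C) fun x => ?_) hC0.le
  rw [abs_div, abs_of_pos hC0, div_le_one hC0]
  exact hC x

end OpDistLE

theorem abs_mul_sub_mul_le {a a' b b' c C D : ℝ} (ha : |a| ≤ C) (hb' : |b'| ≤ D) :
    |a * b - a' * b'| ≤ C * |b - c| + C * |c - b'| + D * |a - a'| := by
  calc |a * b - a' * b'| = |a * (b - c) + a * (c - b') + b' * (a - a')| := by ring_nf
    _ ≤ |a * (b - c)| + |a * (c - b')| + |b' * (a - a')| := abs_add_three _ _ _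
    _ ≤ _ := by
      simp only [abs_mul]
      gcongr

theorem integral_abs_mul_kernelOp_sub_le {α : Type*} [MeasurableSpace α] {ν : Measure α}
    [IsFiniteMeasure ν] {K K' : α → α → ℝ} {M : ℝ≥0} {δ C η : ℝ} (hK : HasDegreeLE ν K M)
    (hK' : HasDegreeLE ν K' M) (hδ : OpDistLE ν K K' δ) (hC1 : 1 ≤ C) {f f' g g' : α → ℝ}
    (hf : Measurable f) (hf' : Measurable f') (hg : Measurable g) (hg' : Measurable g')
    (hfC : ∀ x, |f x| ≤ C) (hfC' : ∀ x, |f' x| ≤ C) (hgC : ∀ x, |g x| ≤ C)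
    (hgC' : ∀ x, |g' x| ≤ C) (hff : ∫ x, |f x - f' x| ∂ν ≤ η) (hgg : ∫ x, |g x - g' x| ∂ν ≤ η) :
    ∫ x, |f x * kernelOp ν K g x - f' x * kernelOp ν K' g' x| ∂ν ≤
      (2 * C * M + C * C + 1) * (η + δ) := by
  have : 0 ≤ C := zero_le_one.trans hC1
  have hδ0 := hδ.nonneg
  have hη0 : 0 ≤ η := (integral_nonneg fun _ => abs_nonneg _).trans hff
  have hmeas : Measurable (g - g') := hg.sub hg'
  have hbound : ∀ x, |(g - g') x| ≤ C + C := fun x =>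
    (abs_sub _ _).trans (add_le_add (hgC x) (hgC' x))
  have hint₁ : Integrable (fun x => C * |kernelOp ν K (g - g') x|) ν :=
    (hK.integrable_kernelOp hmeas hbound).abs.const_mul C
  have hint₂ : Integrable (fun x => C * |kernelOp ν K g' x - kernelOp ν K' g' x|) ν :=
    ((hK.integrable_kernelOp hg' hgC').sub (hK'.integrable_kernelOp hg' hgC')).abs.const_mul C
  have hint₃ : Integrable (fun x => C * M * |f x - f' x|) ν :=
    ((integrable_of_abs_le hf hfC).sub (integrable_of_abs_le hf' hfC')).abs.const_mul (C * M)
  calc _ ≤ ∫ x, (C * |kernelOp ν K (g - g') x| + C * |kernelOp ν K g' x - kernelOp ν K' g' x| +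
        (C * M) * |f x - f' x|) ∂ν := by
        refine integral_mono_of_nonneg (.of_forall fun _ => abs_nonneg _)
          ((hint₁.add hint₂).add hint₃) (.of_forall fun x => ?_)
        simp only [hK.kernelOp_sub hg hgC hg' hgC' x]
        exact abs_mul_sub_mul_le (hfC x) (hK'.abs_kernelOp_le hg' hgC' x)
    _ = C * ∫ x, |kernelOp ν K (g - g') x| ∂ν +
        C * ∫ x, |kernelOp ν K g' x - kernelOp ν K' g' x| ∂ν +
          (C * M) * ∫ x, |f x - f' x| ∂ν := by
        rw [← integral_const_mul, ← integral_const_mul, ← integral_const_mul,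
          ← integral_add hint₁ hint₂]
        exact integral_add (hint₁.add hint₂) hint₃
    _ ≤ C * (M * η) + C * (C * δ) + (C * M) * η := by
        gcongr
        · exact (hK.integral_abs_kernelOp_le hmeas hbound).trans
            (mul_le_mul_of_nonneg_left hgg M.coe_nonneg)
        · exact hδ.integral_le_mul hg' (by linarith) hgC'
    _ ≤ _ := by
      have : 0 ≤ C * M * δ := by positivity
      have : 0 ≤ C * C * η := by positivity
      nlinarith

/-- Integrating out the last vertex, a leaf attached to `p`, multiplies the vertex function at `p`
by the kernel operator applied to the vertex function of the leaf. -/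
noncomputable def absorbLeaf {α : Type*} [MeasurableSpace α] (ν : Measure α) (K : α → α → ℝ)
    {m : ℕ} (p : Fin (m + 1)) (f : Fin (m + 2) → α → ℝ) : Fin (m + 1) → α → ℝ :=
  Function.update (fun a => f a.castSucc) p
    (fun x => f p.castSucc x * kernelOp ν K (f (Fin.last _)) x)

section AbsorbLeaf

variable {α : Type*} [MeasurableSpace α] {ν : Measure α} {K K' : α → α → ℝ} {M : ℝ≥0} {m : ℕ}
  {p : Fin (m + 1)} {f f' : Fin (m + 2) → α → ℝ} {C : ℝ}

theorem measurable_absorbLeaf [SFinite ν] (hK : HasDegreeLE ν K M) (hf : ∀ a, Measurable (f a))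
    (a : Fin (m + 1)) : Measurable (absorbLeaf ν K p f a) :=
  (Function.forall_update_iff _ fun _ (g : α → ℝ) => Measurable g).2
    ⟨(hf _).mul (hK.measurable_kernelOp (hf _)), fun _ _ => hf _⟩ a

theorem abs_absorbLeaf_le (hK : HasDegreeLE ν K M) (hf : ∀ a, Measurable (f a))
    (hC : ∀ a x, |f a x| ≤ C) (a : Fin (m + 1)) (x : α) :
    |absorbLeaf ν K p f a x| ≤ C * (C * M) + C := by
  have hC0 : 0 ≤ C := (abs_nonneg _).trans (hC 0 x)
  revert a
  refine (Function.forall_update_iff _ fun _ (g : α → ℝ) => |g x| ≤ C * (C * M) + C).2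
    ⟨?_, fun a _ => (hC _ x).trans (le_add_of_nonneg_left (by positivity))⟩
  rw [abs_mul]
  exact (mul_le_mul (hC _ x) (hK.abs_kernelOp_le (hf _) (hC _) x) (abs_nonneg _) hC0).trans
    (le_add_of_nonneg_right hC0)

theorem integral_abs_absorbLeaf_sub_le [IsFiniteMeasure ν] {δ η : ℝ} (hK : HasDegreeLE ν K M)
    (hK' : HasDegreeLE ν K' M) (hδ : OpDistLE ν K K' δ) (hC1 : 1 ≤ C)
    (hf : ∀ a, Measurable (f a)) (hf' : ∀ a, Measurable (f' a)) (hC : ∀ a x, |f a x| ≤ C)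
    (hC' : ∀ a x, |f' a x| ≤ C) (hη : ∀ a, ∫ x, |f a x - f' a x| ∂ν ≤ η) (a : Fin (m + 1)) :
    ∫ x, |absorbLeaf ν K p f a x - absorbLeaf ν K' p f' a x| ∂ν ≤
      (2 * C * M + C * C + 1) * (η + δ) := by
  have hη0 : 0 ≤ η := (integral_nonneg fun _ => abs_nonneg _).trans (hη 0)
  by_cases h : a = p
  · subst h
    simp only [absorbLeaf, Function.update_self]
    exact integral_abs_mul_kernelOp_sub_le hK hK' hδ hC1 (hf _) (hf' _) (hf _) (hf' _)
      (hC _) (hC' _) (hC _) (hC' _) (hη _) (hη _)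
  · simp only [absorbLeaf, Function.update_of_ne h]
    refine (hη _).trans ?_
    have : 0 ≤ (2 * C * M + C * C) * (η + δ) := by have := hδ.nonneg; positivity
    linarith [hδ.nonneg]

theorem prod_absorbLeaf (y : Fin (m + 1) → α) :
    ∏ a, absorbLeaf ν K p f a (y a) =
      (∏ a : Fin (m + 1), f a.castSucc (y a)) * kernelOp ν K (f (Fin.last _)) (y p) := by
  rw [← Finset.mul_prod_erase _ _ (Finset.mem_univ p),
    ← Finset.mul_prod_erase Finset.univ (fun a : Fin (m + 1) => f a.castSucc (y a))
      (Finset.mem_univ p),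
    Finset.prod_congr rfl (g := fun a : Fin (m + 1) => f a.castSucc (y a)) fun a ha => by
      rw [absorbLeaf, Function.update_of_ne (Finset.ne_of_mem_erase ha)],
    absorbLeaf, Function.update_self]
  ring

end AbsorbLeaf

namespace RecTree

/-- The integral of `∏ f a (z a)` times the edge product of `K` along a recursive tree, computed by
integrating out the vertices from the last one down. -/
noncomputable def leafIntegral {α : Type*} [MeasurableSpace α] (ν : Measure α) (K : α → α → ℝ) :
    {m : ℕ} → RecTree m → (Fin (m + 1) → α → ℝ) → ℝ
  | _, .single, f => ∫ x, f 0 x ∂ν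
  | _, .attach t p, f => leafIntegral ν K t (absorbLeaf ν K p f)

variable {α : Type*} [MeasurableSpace α] {M : ℝ≥0} {m : ℕ}

theorem integral_prod_mul_weight_eq_leafIntegral {ν : Measure α} [IsProbabilityMeasure ν]
    {K : α → α → ℝ} (hK : HasDegreeLE ν K M) (t : RecTree m) {f : Fin (m + 1) → α → ℝ} {C : ℝ}
    (hf : ∀ a, Measurable (f a)) (hC : ∀ a x, |f a x| ≤ C) :
    ∫ z, (∏ a, f a (z a)) * t.weight K z ∂(Measure.pi fun _ => ν) = t.leafIntegral ν K f := by
  induction t generalizing C with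
  | single =>
    simp only [weight, leafIntegral, mul_one]
    rw [← integral_comp_eval (μ := fun _ : Fin 1 => ν) (i := 0) (hf 0).aestronglyMeasurable]
    exact integral_congr_ae (.of_forall fun z => Fin.prod_univ_one _)
  | @attach m t p ih =>
    have hint : Integrable (fun z => (∏ a, f a (z a)) * (t.attach p).weight K z)
        (Measure.pi fun _ => ν) := by
      refine integrable_mul_weight hK _ (C := C ^ (m + 2))
        (Finset.measurable_prod _ fun a _ => (hf a).comp (measurable_pi_apply a)) fun z => ?_
      rw [Finset.abs_prod]
      exact (Finset.prod_le_prod (fun _ _ => abs_nonneg _) fun a _ => hC a _).trans (by simp)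
    rw [integral_snoc ν hint, leafIntegral,
      ← ih (measurable_absorbLeaf hK hf) (abs_absorbLeaf_le hK hf hC)]
    refine integral_congr_ae (.of_forall fun y => ?_)
    dsimp only
    rw [prod_absorbLeaf, kernelOp, mul_right_comm, ← integral_const_mul]
    refine integral_congr_ae (.of_forall fun x => ?_)
    simp only [Fin.prod_univ_castSucc (n := m + 1), Fin.snoc_castSucc, Fin.snoc_last, weight_snoc]
    ring

theorem exists_abs_leafIntegral_sub_le (M : ℝ≥0) (t : RecTree m) {C : ℝ} (hC1 : 1 ≤ C) :
    ∃ L : ℝ, 0 ≤ L ∧ ∀ (ν : Measure α) [IsProbabilityMeasure ν] (K K' : α → α → ℝ) (δ η : ℝ)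
      (f f' : Fin (m + 1) → α → ℝ), HasDegreeLE ν K M → HasDegreeLE ν K' M →
      OpDistLE ν K K' δ → (∀ a, Measurable (f a)) → (∀ a, Measurable (f' a)) →
      (∀ a x, |f a x| ≤ C) → (∀ a x, |f' a x| ≤ C) → (∀ a, ∫ x, |f a x - f' a x| ∂ν ≤ η) →
      |t.leafIntegral ν K f - t.leafIntegral ν K' f'| ≤ L * (η + δ) := by
  induction t generalizing C with
  | single =>
    refine ⟨1, zero_le_one, fun ν _ K K' δ η f f' _ _ hδ hf hf' hC hC' hη => ?_⟩
    simp only [leafIntegral]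
    rw [← integral_sub (integrable_of_abs_le (hf 0) (hC 0)) (integrable_of_abs_le (hf' 0) (hC' 0))]
    linarith [abs_integral_le_integral_abs (μ := ν) (f := fun x => f 0 x - f' 0 x), hη 0,
      hδ.nonneg]
  | attach t p ih =>
    have : 0 ≤ C := zero_le_one.trans hC1
    obtain ⟨L, hL0, hL⟩ := ih (C := C * (C * M) + C)
      (hC1.trans (le_add_of_nonneg_left (by positivity)))
    refine ⟨L * (2 * C * M + C * C + 2), by positivity,
      fun ν _ K K' δ η f f' hK hK' hδ hf hf' hC hC' hη => ?_⟩
    have hη0 : 0 ≤ η := (integral_nonneg fun _ => abs_nonneg _).trans (hη 0)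
    calc _ ≤ L * ((2 * C * M + C * C + 1) * (η + δ) + δ) :=
          hL ν K K' δ _ _ _ hK hK' hδ (measurable_absorbLeaf hK hf) (measurable_absorbLeaf hK' hf')
            (abs_absorbLeaf_le hK hf hC) (abs_absorbLeaf_le hK' hf' hC')
            (integral_abs_absorbLeaf_sub_le hK hK' hδ hC1 hf hf' hC hC' hη)
      _ ≤ L * ((2 * C * M + C * C + 2) * (η + δ)) := by gcongr; linarith
      _ = _ := by ring

end RecTree

/-! ### The Donsker–Varadhan variational formula -/

/-- The Donsker–Varadhan variational inequality with constant `c`, for bounded measurable test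
functions; between probability measures it says that the relative entropy of `ν` with respect
to `ρ` is at most `c`. -/
def EntropyBound {α : Type*} [MeasurableSpace α] (ν ρ : Measure α) (c : ℝ) : Prop :=
  ∀ h : α → ℝ, Measurable h → (∃ C, ∀ x, |h x| ≤ C) →
    ∫ x, h x ∂ν ≤ Real.log (∫ x, Real.exp (h x) ∂ρ) + c

section EntropyBound

variable {α β : Type*} [MeasurableSpace α] [MeasurableSpace β]

theorem KLdiv_eq_klDiv (ν ρ : Measure α) [IsProbabilityMeasure ν] [IsProbabilityMeasure ρ] :
    KLdiv ν ρ = InformationTheory.klDiv ν ρ := by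
  rw [KLdiv, InformationTheory.klDiv_def]
  simp

theorem integrable_exp_of_abs_le {ρ : Measure α} [IsFiniteMeasure ρ] {h : α → ℝ} {C : ℝ}
    (hm : Measurable h) (hC : ∀ x, |h x| ≤ C) : Integrable (fun x => Real.exp (h x)) ρ :=
  integrable_of_abs_le (C := Real.exp C) hm.exp fun x => by
    rw [Real.abs_exp]
    exact Real.exp_le_exp.mpr ((le_abs_self _).trans (hC x))

section Bounds

variable {ρ : Measure α} [IsProbabilityMeasure ρ] {h : α → ℝ} {C : ℝ}

theorem exp_neg_le_integral_exp (hm : Measurable h) (hC : ∀ x, |h x| ≤ C) :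
    Real.exp (-C) ≤ ∫ x, Real.exp (h x) ∂ρ := by
  simpa using integral_mono (integrable_const (μ := ρ) _) (integrable_exp_of_abs_le hm hC)
    fun x => Real.exp_le_exp.mpr (neg_le_of_abs_le (hC x))

theorem integral_exp_le_exp (hm : Measurable h) (hC : ∀ x, |h x| ≤ C) :
    ∫ x, Real.exp (h x) ∂ρ ≤ Real.exp C := by
  simpa using integral_mono (integrable_exp_of_abs_le hm hC) (integrable_const (μ := ρ) _)
    fun x => Real.exp_le_exp.mpr (le_of_abs_le (hC x))

theorem integral_exp_pos_of_abs_le (hm : Measurable h) (hC : ∀ x, |h x| ≤ C) :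
    0 < ∫ x, Real.exp (h x) ∂ρ :=
  (Real.exp_pos _).trans_le (exp_neg_le_integral_exp hm hC)

theorem abs_log_integral_exp_le (hm : Measurable h) (hC : ∀ x, |h x| ≤ C) :
    |Real.log (∫ x, Real.exp (h x) ∂ρ)| ≤ C := by
  have hpos := integral_exp_pos_of_abs_le (ρ := ρ) hm hC
  rw [abs_le, Real.le_log_iff_exp_le hpos, Real.log_le_iff_le_exp hpos]
  exact ⟨exp_neg_le_integral_exp hm hC, integral_exp_le_exp hm hC⟩

end Bounds

namespace EntropyBound

variable {ν ρ : Measure α} {ν' ρ' : Measure β} {c c' : ℝ}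

theorem mono (h : EntropyBound ν ρ c) (hc : c ≤ c') : EntropyBound ν ρ c' :=
  fun f hf hb => (h f hf hb).trans (by gcongr)

theorem map (h : EntropyBound ν ρ c) {f : α → β} (hf : Measurable f) :
    EntropyBound (ν.map f) (ρ.map f) c := by
  rintro g hg ⟨C, hC⟩
  rw [integral_map hf.aemeasurable hg.aestronglyMeasurable,
    integral_map hf.aemeasurable hg.exp.aestronglyMeasurable]
  exact h (g ∘ f) (hg.comp hf) ⟨C, fun x => hC _⟩

variable [IsProbabilityMeasure ρ]

theorem mul_measureReal_le (h : EntropyBound ν ρ c) {E : Set α} (hE : MeasurableSet E) (l : ℝ) :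
    l * ν.real E ≤ Real.log (1 + (Real.exp l - 1) * ρ.real E) + c := by
  have hl := h (E.indicator fun _ => l) (measurable_const.indicator hE)
    ⟨|l|, fun x => by by_cases hx : x ∈ E <;> simp [hx]⟩
  have hexp : (fun x => Real.exp (E.indicator (fun _ => l) x)) =
      fun x => 1 + E.indicator (fun _ => Real.exp l - 1) x := by
    ext x
    by_cases hx : x ∈ E <;> simp [hx]
  rw [integral_indicator_const _ hE, hexp,
    integral_add (integrable_const _) ((integrable_const _).indicator hE),
    integral_indicator_const _ hE] at hl
  simpa [mul_comm] using hl

theorem measureReal_pos (h : EntropyBound ν ρ c) {E : Set α} (hE : MeasurableSet E)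
    (hEpos : 0 < ν.real E) : 0 < ρ.real E := by
  by_contra! hcon
  have hzero : ρ.real E = 0 := hcon.antisymm measureReal_nonneg
  have hle := h.mul_measureReal_le hE ((c + 1) / ν.real E)
  rw [hzero, div_mul_cancel₀ _ hEpos.ne', mul_zero, add_zero, Real.log_one] at hle
  linarith

theorem neg_add_log_two_le (h : EntropyBound ν ρ c) {E : Set α} (hE : MeasurableSet E)
    (hEpos : 0 < ν.real E) : -(c + Real.log 2) ≤ ν.real E * Real.log (ρ.real E) := by
  have hpos := h.measureReal_pos hE hEpos
  have hle := h.mul_measureReal_le hE (-Real.log (ρ.real E))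
  have htwo : 1 + ((ρ.real E)⁻¹ - 1) * ρ.real E = 2 - ρ.real E := by
    field_simp
    ring
  rw [Real.exp_neg, Real.exp_log hpos, htwo] at hle
  have hlog : Real.log (2 - ρ.real E) ≤ Real.log 2 :=
    Real.log_le_log (by linarith [measureReal_le_one (μ := ρ) (s := E)]) (by linarith)
  linarith

theorem neg_div_le_log (h : EntropyBound ν ρ c) {E : Set α} (hE : MeasurableSet E) {p : ℝ}
    (hp : 0 < p) (hpE : p ≤ ν.real E) : -((c + Real.log 2) / p) ≤ Real.log (ρ.real E) := by
  have hle := h.neg_add_log_two_le hE (hp.trans_le hpE)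
  have hlog : Real.log (ρ.real E) ≤ 0 := Real.log_nonpos measureReal_nonneg measureReal_le_one
  rw [neg_le, le_div_iff₀ hp]
  linarith [mul_le_mul_of_nonpos_right hpE hlog]

variable [IsProbabilityMeasure ν]

/- Gibbs' inequality `0 ≤ ∫ llr ν (ρ.tilted h) ∂ν` for the tilted measure `e ^ h ρ / ∫ e ^ h ∂ρ`. -/
theorem of_integrable_llr (hac : ν ≪ ρ) (hint : Integrable (llr ν ρ) ν) :
    EntropyBound ν ρ (∫ x, llr ν ρ x ∂ν) := by
  rintro h hm ⟨C, hC⟩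
  have hh : Integrable h ν := integrable_of_abs_le hm hC
  have hexp : Integrable (fun x => Real.exp (h x)) ρ := integrable_exp_of_abs_le hm hC
  have : IsProbabilityMeasure (ρ.tilted h) := isProbabilityMeasure_tilted hexp
  have hgibbs := InformationTheory.integral_llr_add_sub_measure_univ_nonneg
    (hac.trans (absolutelyContinuous_tilted hexp)) (integrable_llr_tilted_right hac hh hint hexp)
  rw [integral_llr_tilted_right hac hh hexp hint, probReal_univ, probReal_univ] at hgibbs
  linarith

theorem of_klDiv_ne_top (hk : InformationTheory.klDiv ν ρ ≠ ⊤) :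
    EntropyBound ν ρ (InformationTheory.klDiv ν ρ).toReal := by
  obtain ⟨hac, hint⟩ := InformationTheory.klDiv_ne_top_iff.mp hk
  rw [InformationTheory.toReal_klDiv_of_measure_eq hac (by simp)]
  exact of_integrable_llr hac hint

/- As `ν A = ρ A`, conditioning on `A` does not change the density of `ν` on `A`. -/
theorem cond (hac : ν ≪ ρ) (hint : Integrable (llr ν ρ) ν) {A : Set α} (hA : MeasurableSet A)
    (hνρ : ν A = ρ A) (hA0 : ν A ≠ 0) :
    EntropyBound (ProbabilityTheory.cond ν A) (ProbabilityTheory.cond ρ A)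
      ((ν.real A)⁻¹ * ∫ x in A, llr ν ρ x ∂ν) := by
  have := ProbabilityTheory.cond_isProbabilityMeasure hA0
  have := ProbabilityTheory.cond_isProbabilityMeasure (hνρ ▸ hA0)
  have hdensity : ProbabilityTheory.cond ν A =
      (ProbabilityTheory.cond ρ A).withDensity (ν.rnDeriv ρ) := by
    rw [ProbabilityTheory.cond, ProbabilityTheory.cond, hνρ, withDensity_smul_measure,
      ← restrict_withDensity hA, Measure.withDensity_rnDeriv_eq ν ρ hac]
  have hacA : ProbabilityTheory.cond ν A ≪ ProbabilityTheory.cond ρ A :=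
    hdensity ▸ withDensity_absolutelyContinuous _ _
  have hllr : llr (ProbabilityTheory.cond ν A) (ProbabilityTheory.cond ρ A)
      =ᵐ[ProbabilityTheory.cond ν A] llr ν ρ := by
    have hderiv := Measure.rnDeriv_withDensity (ProbabilityTheory.cond ρ A)
      (Measure.measurable_rnDeriv ν ρ)
    rw [← hdensity] at hderiv
    filter_upwards [hacA.ae_le hderiv] with x hx
    rw [llr, llr, hx]
  have hintA : Integrable (llr ν ρ) (ProbabilityTheory.cond ν A) :=
    hint.restrict.smul_measure (ENNReal.inv_ne_top.mpr hA0)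
  have hbound := of_integrable_llr hacA (hintA.congr hllr.symm)
  rwa [integral_congr_ae hllr, ProbabilityTheory.cond, integral_smul_measure, ENNReal.toReal_inv,
    smul_eq_mul] at hbound

theorem prod [IsProbabilityMeasure ν'] [IsProbabilityMeasure ρ'] (h : EntropyBound ν ρ c)
    (h' : EntropyBound ν' ρ' c') : EntropyBound (ν.prod ν') (ρ.prod ρ') (c + c') := by
  rintro f hf ⟨C, hC⟩
  have hsection : ∀ x, Measurable fun y => f (x, y) := fun x => hf.comp measurable_prodMk_left
  set g : α → ℝ := fun x => Real.log (∫ y, Real.exp (f (x, y)) ∂ρ')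
  have hgm : Measurable g :=
    (hf.exp.stronglyMeasurable.integral_prod_right' (ν := ρ')).measurable.log
  have hgC : ∀ x, |g x| ≤ C := fun x => abs_log_integral_exp_le (hsection x) fun y => hC (x, y)
  have hexpg : ∀ x, Real.exp (g x) = ∫ y, Real.exp (f (x, y)) ∂ρ' := fun x =>
    Real.exp_log (integral_exp_pos_of_abs_le (hsection x) fun y => hC (x, y))
  rw [integral_prod _ (integrable_of_abs_le hf hC),
    integral_prod _ (integrable_exp_of_abs_le hf hC)]
  calc ∫ x, ∫ y, f (x, y) ∂ν' ∂ν ≤ ∫ x, (g x + c') ∂ν :=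
        integral_mono (integrable_of_abs_le hf hC).integral_prod_left
          ((integrable_of_abs_le hgm hgC).add (integrable_const _)) fun x =>
            h' (fun y => f (x, y)) (hsection x) ⟨C, fun y => hC _⟩
    _ = ∫ x, g x ∂ν + c' := by
        rw [integral_add (integrable_of_abs_le hgm hgC) (integrable_const _)]
        simp
    _ ≤ Real.log (∫ x, Real.exp (g x) ∂ρ) + c + c' := by
        gcongr
        exact h g hgm ⟨C, hgC⟩
    _ = _ := by simp only [hexpg, add_assoc]

theorem pi : ∀ {n : ℕ} (ν ρ : Fin n → Measure α) [∀ i, IsProbabilityMeasure (ν i)]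
    [∀ i, IsProbabilityMeasure (ρ i)] (c : Fin n → ℝ), (∀ i, EntropyBound (ν i) (ρ i) (c i)) →
    EntropyBound (Measure.pi ν) (Measure.pi ρ) (∑ i, c i)
  | 0, _, _, _, _, _, _ => by
    rintro f - -
    simp [Subsingleton.elim _ (default : Fin 0 → α)]
  | n + 1, ν, ρ, _, _, c, h => by
    have htail := pi (fun i => ν (Fin.succAbove 0 i)) (fun i => ρ (Fin.succAbove 0 i))
      (fun i => c (Fin.succAbove 0 i)) fun i => h _
    have hcons := ((h 0).prod htail).map
      (MeasurableEquiv.piFinSuccAbove (fun _ => α) 0).symm.measurable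
    rw [(measurePreserving_piFinSuccAbove ν 0).symm.map_eq,
      (measurePreserving_piFinSuccAbove ρ 0).symm.map_eq] at hcons
    simpa [Fin.sum_univ_succ] using hcons

theorem absolutelyContinuous (h : EntropyBound ν ρ c) : ν ≪ ρ := by
  refine Measure.AbsolutelyContinuous.mk fun B hB hB0 => ?_
  by_contra hne
  have hpos := h.measureReal_pos hB (ENNReal.toReal_pos hne (measure_ne_top _ _))
  simp [measureReal_def, hB0] at hpos

end EntropyBound

end EntropyBound

section Truncation

/-- Truncation of `y` to the interval `[1 / (k + 1), k + 1]`. -/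
noncomputable def truncInv (k : ℕ) (y : ℝ) : ℝ :=
  max ((k : ℝ) + 1)⁻¹ (min (k + 1) y)

theorem measurable_truncInv (k : ℕ) : Measurable (truncInv k) :=
  measurable_const.max (measurable_const.min measurable_id)

theorem truncInv_pos (k : ℕ) (y : ℝ) : 0 < truncInv k y :=
  lt_max_of_lt_left (by positivity)

theorem truncInv_le (k : ℕ) (y : ℝ) : truncInv k y ≤ k + 1 :=
  max_le (inv_le_one_of_one_le₀ (by simp) |>.trans (by simp)) (min_le_left _ _)

theorem abs_log_truncInv_le (k : ℕ) (y : ℝ) :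
    |Real.log (truncInv k y)| ≤ Real.log (k + 1) := by
  rw [abs_le, ← Real.log_inv]
  exact ⟨Real.log_le_log (by positivity) (le_max_left _ _),
    Real.log_le_log (truncInv_pos k y) (truncInv_le k y)⟩

theorem tendsto_truncInv {y : ℝ} (hy : 0 ≤ y) :
    Tendsto (fun k => truncInv k y) atTop (nhds y) := by
  have hinv : Tendsto (fun k : ℕ => ((k : ℝ) + 1)⁻¹) atTop (nhds 0) := by
    simpa using tendsto_one_div_add_atTop_nhds_zero_nat (𝕜 := ℝ)
  have hmin : ∀ᶠ k : ℕ in atTop, min ((k : ℝ) + 1) y = y := by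
    filter_upwards [eventually_ge_atTop ⌈y⌉₊] with k hk
    exact min_eq_right ((Nat.ceil_le.mp hk).trans (by simp))
  simpa [hy, truncInv] using hinv.max (tendsto_const_nhds.congr' (hmin.mono fun _ => Eq.symm))

theorem sub_truncInv_mul_log_nonneg (k : ℕ) (y : ℝ) :
    0 ≤ (y - truncInv k y) * Real.log (truncInv k y) := by
  rcases lt_trichotomy (truncInv k y) 1 with h | h | h
  · have hmin : min ((k : ℝ) + 1) y < 1 := (le_max_right _ _).trans_lt h
    have hy : y ≤ truncInv k y := by
      rw [min_lt_iff, or_iff_right (by simp)] at hmin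
      exact (min_eq_right (hmin.le.trans (by simp))).ge.trans (le_max_right _ _)
    exact mul_nonneg_of_nonpos_of_nonpos (sub_nonpos.mpr hy)
      (Real.log_nonpos (truncInv_pos k y).le h.le)
  · simp [h]
  · have hle : truncInv k y ≤ y := by
      have hinv : ((k : ℝ) + 1)⁻¹ ≤ 1 := inv_le_one_of_one_le₀ (by simp)
      have hmin := (lt_max_iff.mp h).resolve_left hinv.not_gt
      exact max_le (hinv.trans (hmin.le.trans (min_le_right _ _))) (min_le_right _ _)
    exact mul_nonneg (sub_nonneg.mpr hle) (Real.log_nonneg h.le)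

/-- `y ↦ y log y - y + 1` with the logarithm and the linear term truncated. -/
noncomputable def truncKlFun (k : ℕ) (y : ℝ) : ℝ :=
  y * Real.log (truncInv k y) - truncInv k y + 1

theorem truncKlFun_nonneg (k : ℕ) (y : ℝ) : 0 ≤ truncKlFun k y := by
  have hkl := InformationTheory.klFun_nonneg (truncInv_pos k y).le
  have hmul := sub_truncInv_mul_log_nonneg k y
  rw [InformationTheory.klFun_apply] at hkl
  rw [truncKlFun]
  linarith

theorem tendsto_truncKlFun {y : ℝ} (hy : 0 ≤ y) :
    Tendsto (fun k => truncKlFun k y) atTop (nhds (InformationTheory.klFun y)) := by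
  have hmul : Tendsto (fun k => y * Real.log (truncInv k y)) atTop (nhds (y * Real.log y)) := by
    rcases hy.eq_or_lt with rfl | hy0
    · simp
    · exact ((tendsto_truncInv hy).log hy0.ne').const_mul y
  convert! (hmul.sub (tendsto_truncInv hy)).add_const 1 using 2
  rw [InformationTheory.klFun_apply]
  ring

theorem measurable_truncKlFun (k : ℕ) : Measurable (truncKlFun k) :=
  ((measurable_id.mul (measurable_truncInv k).log).sub (measurable_truncInv k)).add_const 1

end Truncation

namespace EntropyBound

variable {α : Type*} [MeasurableSpace α] {ν ρ : Measure α} [IsProbabilityMeasure ν]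
  [IsProbabilityMeasure ρ] {c : ℝ}

theorem lintegral_truncKlFun_rnDeriv_le (h : EntropyBound ν ρ c) (k : ℕ) :
    ∫⁻ x, ENNReal.ofReal (truncKlFun k (ν.rnDeriv ρ x).toReal) ∂ρ ≤ ENNReal.ofReal c := by
  set g : α → ℝ := fun x => (ν.rnDeriv ρ x).toReal
  have hg : Measurable g := (Measure.measurable_rnDeriv _ _).ennreal_toReal
  set t : α → ℝ := fun x => truncInv k (g x)
  have ht : Measurable t := (measurable_truncInv k).comp hg
  have hlogb : ∀ x, |Real.log (t x)| ≤ Real.log (k + 1) := fun x => abs_log_truncInv_le k _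
  have hexplog : (fun x => Real.exp (Real.log (t x))) = t :=
    funext fun x => Real.exp_log (truncInv_pos k _)
  have hti : Integrable t ρ := hexplog ▸ integrable_exp_of_abs_le ht.log hlogb
  have hgi : Integrable (fun x => g x * Real.log (t x)) ρ :=
    Measure.integrable_toReal_rnDeriv.mul_bdd (c := Real.log (k + 1)) ht.log.aestronglyMeasurable
      (.of_forall hlogb)
  have hdv := h (fun x => Real.log (t x)) ht.log ⟨_, hlogb⟩
  rw [← integral_rnDeriv_smul h.absolutelyContinuous, hexplog] at hdv
  have hlog : Real.log (∫ x, t x ∂ρ) ≤ ∫ x, t x ∂ρ - 1 :=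
    Real.log_le_sub_one_of_pos (hexplog ▸ integral_exp_pos_of_abs_le ht.log hlogb)
  have hdiff : Integrable (fun x => g x * Real.log (t x) - t x) ρ := hgi.sub hti
  have hint : Integrable (fun x => truncKlFun k (g x)) ρ := hdiff.add (integrable_const 1)
  rw [← ofReal_integral_eq_lintegral_ofReal hint (.of_forall fun x => truncKlFun_nonneg k _)]
  refine ENNReal.ofReal_le_ofReal ?_
  calc _ = ∫ x, g x * Real.log (t x) ∂ρ - ∫ x, t x ∂ρ + 1 := by
        rw [← integral_sub hgi hti]
        simpa [truncKlFun] using integral_add hdiff (integrable_const (1 : ℝ))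
    _ ≤ c := by
        simp only [smul_eq_mul] at hdv
        linarith

theorem klDiv_le (h : EntropyBound ν ρ c) :
    InformationTheory.klDiv ν ρ ≤ ENNReal.ofReal c := by
  rw [InformationTheory.klDiv_eq_lintegral_klFun_of_ac h.absolutelyContinuous]
  have hmeas : ∀ k, Measurable fun x => ENNReal.ofReal (truncKlFun k (ν.rnDeriv ρ x).toReal) :=
    fun k => ((measurable_truncKlFun k).comp
      (Measure.measurable_rnDeriv _ _).ennreal_toReal).ennreal_ofReal
  calc _ = ∫⁻ x, liminf (fun k => ENNReal.ofReal (truncKlFun k (ν.rnDeriv ρ x).toReal)) atTop ∂ρ :=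
        lintegral_congr fun x => (((ENNReal.continuous_ofReal.tendsto _).comp
          (tendsto_truncKlFun ENNReal.toReal_nonneg)).liminf_eq).symm
    _ ≤ liminf (fun k => ∫⁻ x, ENNReal.ofReal (truncKlFun k (ν.rnDeriv ρ x).toReal) ∂ρ) atTop :=
        lintegral_liminf_le hmeas
    _ ≤ liminf (fun _ : ℕ => ENNReal.ofReal c) atTop :=
        liminf_le_liminf (.of_forall h.lintegral_truncKlFun_rnDeriv_le)
    _ = _ := liminf_const _

end EntropyBound

section ContinuousTest

theorem exists_continuous_abs_le_integral_abs_sub_le {α : Type*} [TopologicalSpace α]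
    [NormalSpace α] [MeasurableSpace α] [BorelSpace α] {ν : Measure α} [IsFiniteMeasure ν]
    [ν.WeaklyRegular] {f : α → ℝ} (hf : Measurable f) {C : ℝ} (hC : ∀ x, |f x| ≤ C) {ε : ℝ}
    (hε : 0 < ε) :
    ∃ g : α → ℝ, Continuous g ∧ (∀ x, |g x| ≤ C) ∧ ∫ x, |f x - g x| ∂ν ≤ ε := by
  rcases isEmpty_or_nonempty α with hα | ⟨⟨x₀⟩⟩
  · exact ⟨f, continuous_of_discreteTopology, hC, by simpa using hε.le⟩
  have hfi : Integrable f ν := integrable_of_abs_le hf hC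
  obtain ⟨g₀, hg₀, -⟩ := hfi.exists_boundedContinuous_integral_sub_le hε
  have hC0 : -C ≤ C := neg_le_self ((abs_nonneg _).trans (hC x₀))
  have hclamp : ∀ x, |f x - projIcc (-C) C hC0 (g₀ x)| ≤ ‖f x - g₀ x‖ := fun x => by
    have hfx : f x = projIcc (-C) C hC0 (f x) := by rw [projIcc_of_mem hC0 (abs_le.mp (hC x))]
    conv_lhs => rw [hfx]
    exact abs_projIcc_sub_projIcc hC0
  have hg : Continuous fun x => (projIcc (-C) C hC0 (g₀ x) : ℝ) :=
    continuous_subtype_val.comp (continuous_projIcc.comp g₀.continuous)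
  have hgC : ∀ x, |(projIcc (-C) C hC0 (g₀ x) : ℝ)| ≤ C := fun x =>
    abs_le.mpr (projIcc (-C) C hC0 (g₀ x)).2
  refine ⟨_, hg, hgC, (integral_mono ?_ ?_ hclamp).trans hg₀⟩
  · exact (hfi.sub (integrable_of_abs_le hg.measurable hgC)).abs
  · exact (hfi.sub (integrable_of_abs_le g₀.continuous.measurable g₀.norm_coe_le_norm)).norm

theorem integrable_abs_sub_of_abs_le {α : Type*} [MeasurableSpace α] {ν : Measure α}
    [IsFiniteMeasure ν] {f g : α → ℝ} {C : ℝ} (hf : Measurable f) (hg : Measurable g)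
    (hfC : ∀ x, |f x| ≤ C) (hgC : ∀ x, |g x| ≤ C) : Integrable (fun x => |f x - g x|) ν :=
  ((integrable_of_abs_le hf hfC).sub (integrable_of_abs_le hg hgC)).abs

theorem integral_exp_le_add {α : Type*} [MeasurableSpace α] {ρ : Measure α} [IsFiniteMeasure ρ]
    {f g : α → ℝ} {C : ℝ} (hf : Measurable f) (hg : Measurable g) (hfC : ∀ x, |f x| ≤ C)
    (hgC : ∀ x, |g x| ≤ C) :
    ∫ x, Real.exp (g x) ∂ρ ≤
      ∫ x, Real.exp (f x) ∂ρ + Real.exp C * ∫ x, |f x - g x| ∂ρ := by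
  have hsub : Integrable (fun x => |f x - g x|) ρ := integrable_abs_sub_of_abs_le hf hg hfC hgC
  rw [← integral_const_mul, ← integral_add (integrable_exp_of_abs_le hf hfC) (hsub.const_mul _)]
  refine integral_mono (integrable_exp_of_abs_le hg hgC)
    ((integrable_exp_of_abs_le hf hfC).add (hsub.const_mul _)) fun x => ?_
  have htangent : Real.exp (g x) * (f x - g x + 1) ≤ Real.exp (f x) :=
    calc _ ≤ Real.exp (g x) * Real.exp (f x - g x) := by
          gcongr
          exact Real.add_one_le_exp _
      _ = Real.exp (f x) := by rw [← Real.exp_add, add_sub_cancel]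
  have habs : Real.exp (g x) * -(f x - g x) ≤ Real.exp C * |f x - g x| :=
    calc _ ≤ Real.exp (g x) * |f x - g x| := by
          gcongr
          exact neg_le_abs _
      _ ≤ _ := by
          gcongr
          exact le_of_abs_le (hgC x)
  linarith

theorem EntropyBound.of_continuous {α : Type*} [TopologicalSpace α] [NormalSpace α]
    [MeasurableSpace α] [BorelSpace α] {ν ρ : Measure α} [IsProbabilityMeasure ν]
    [IsProbabilityMeasure ρ] [(ν + ρ).WeaklyRegular] {c : ℝ}
    (h : ∀ h : α → ℝ, Continuous h → (∃ C, ∀ x, |h x| ≤ C) →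
      ∫ x, h x ∂ν ≤ Real.log (∫ x, Real.exp (h x) ∂ρ) + c) : EntropyBound ν ρ c := by
  rintro f hf ⟨C, hC⟩
  set Z := ∫ x, Real.exp (f x) ∂ρ
  have hZ : 0 < Z := integral_exp_pos_of_abs_le hf hC
  have happrox : ∀ ε > 0, ∫ x, f x ∂ν ≤ Real.log (Z + Real.exp C * ε) + c + ε := by
    intro ε hε
    obtain ⟨g, hgc, hgC, hfg⟩ := exists_continuous_abs_le_integral_abs_sub_le (ν := ν + ρ) hf hC hε
    have hsplit : ∫ x, |f x - g x| ∂ν + ∫ x, |f x - g x| ∂ρ ≤ ε := by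
      rwa [← integral_add_measure (integrable_abs_sub_of_abs_le hf hgc.measurable hC hgC)
        (integrable_abs_sub_of_abs_le hf hgc.measurable hC hgC)]
    have hν0 : 0 ≤ ∫ x, |f x - g x| ∂ν := integral_nonneg fun _ => abs_nonneg _
    have hρ0 : 0 ≤ ∫ x, |f x - g x| ∂ρ := integral_nonneg fun _ => abs_nonneg _
    have hν : ∫ x, f x ∂ν - ∫ x, g x ∂ν ≤ ∫ x, |f x - g x| ∂ν := by
      rw [← integral_sub (integrable_of_abs_le hf hC) (integrable_of_abs_le hgc.measurable hgC)]
      exact (le_abs_self _).trans abs_integral_le_integral_abs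
    have hρ : Real.log (∫ x, Real.exp (g x) ∂ρ) ≤ Real.log (Z + Real.exp C * ε) := by
      refine Real.log_le_log (integral_exp_pos_of_abs_le hgc.measurable hgC)
        ((integral_exp_le_add hf hgc.measurable hC hgC).trans ?_)
      gcongr
      linarith
    linarith [h g hgc ⟨C, hgC⟩]
  have hlim : Tendsto (fun ε : ℝ => Real.log (Z + Real.exp C * ε) + c + ε) (nhdsWithin 0 (Ioi 0))
      (nhds (Real.log (Z + Real.exp C * 0) + c + 0)) := by
    have hcont : ContinuousAt (fun ε : ℝ => Real.log (Z + Real.exp C * ε) + c + ε) 0 := by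
      fun_prop (disch := simpa using hZ.ne')
    exact hcont.tendsto.mono_left nhdsWithin_le_nhds
  simpa using ge_of_tendsto hlim (eventually_nhdsWithin_of_forall happrox)

end ContinuousTest

/-! ### Empirical measures along an equipartition -/

section Fibers

variable {A : Type*} [MeasurableSpace A] {η : Measure A} {n : ℕ} {τ : A → Fin n}

theorem integral_comp_eq_sum_setIntegral (hτ : Measurable τ) {F : Fin n → A → ℝ}
    (hF : ∀ i, Integrable (F i) η) :
    ∫ a, F (τ a) a ∂η = ∑ i, ∫ a in τ ⁻¹' {i}, F i a ∂η := by
  have hfib : ∀ a, F (τ a) a = ∑ i, (τ ⁻¹' {i}).indicator (F i) a := fun a => by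
    simp [Set.indicator]
  have hm : ∀ i, MeasurableSet (τ ⁻¹' {i}) := fun i => hτ (measurableSet_singleton i)
  simp_rw [hfib]
  rw [integral_finsetSum _ fun i _ => (hF i).indicator (hm i)]
  exact Finset.sum_congr rfl fun i _ => integral_indicator (hm i)

/-- The map `τ` partitions the probability space `(A, η)` into `n` cells `τ ⁻¹' {i}` of equal
mass. -/
structure IsEquipartition (η : Measure A) (τ : A → Fin n) : Prop where
  measurable : Measurable τ
  measure_cell : ∀ i, η (τ ⁻¹' {i}) = (n : ℝ≥0∞)⁻¹

/-- The law of `(a, x (τ a))` for `a` of law `η`. When `τ` is an equipartition of `[0,1]` it is the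
empirical measure of the points `x i`, each smeared over its own cell. -/
noncomputable def empiricalMeasure {X : Type*} [MeasurableSpace X] (η : Measure A) (τ : A → Fin n)
    (x : Fin n → X) : Measure (A × X) :=
  η.map fun a => (a, x (τ a))

/-- The average of `h (·, y)` over the `i`-th cell of `τ`. -/
noncomputable def cellAverage {X : Type*} (η : Measure A) (τ : A → Fin n) (h : A × X → ℝ)
    (i : Fin n) (y : X) : ℝ :=
  ∫ a, h (a, y) ∂(ProbabilityTheory.cond η (τ ⁻¹' {i}))

section Empirical

variable {X : Type*} [MeasurableSpace X]

theorem measurable_mk_comp (hτ : Measurable τ) (x : Fin n → X) :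
    Measurable fun a => (a, x (τ a)) :=
  measurable_id.prodMk ((measurable_of_finite x).comp hτ)

theorem map_fst_empiricalMeasure (hτ : Measurable τ) (x : Fin n → X) :
    (empiricalMeasure η τ x).map Prod.fst = η := by
  rw [empiricalMeasure, Measure.map_map measurable_fst (measurable_mk_comp hτ x)]
  exact Measure.map_id

theorem inTM_empiricalMeasure {τ : ℝ → Fin n} (hτ : Measurable τ) (x : Fin n → X) :
    inTM (empiricalMeasure unif01 τ x) :=
  ⟨Measure.isProbabilityMeasure_map (measurable_mk_comp hτ x).aemeasurable,
    map_fst_empiricalMeasure hτ x⟩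

end Empirical

namespace IsEquipartition

theorem measurableSet_cell (hτ : IsEquipartition η τ) (i : Fin n) :
    MeasurableSet (τ ⁻¹' {i}) :=
  hτ.measurable (measurableSet_singleton i)

theorem measure_cell_ne_zero (hτ : IsEquipartition η τ) (i : Fin n) : η (τ ⁻¹' {i}) ≠ 0 := by
  simp [hτ.measure_cell]

theorem measureReal_cell (hτ : IsEquipartition η τ) (i : Fin n) :
    η.real (τ ⁻¹' {i}) = (n : ℝ)⁻¹ := by
  rw [measureReal_def, hτ.measure_cell, ENNReal.toReal_inv, ENNReal.toReal_natCast]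

theorem setIntegral_cell (hτ : IsEquipartition η τ) (i : Fin n) (f : A → ℝ) :
    ∫ a in τ ⁻¹' {i}, f a ∂η = (n : ℝ)⁻¹ * ∫ a, f a ∂(ProbabilityTheory.cond η (τ ⁻¹' {i})) := by
  have hn : (n : ℝ) ≠ 0 := by exact_mod_cast i.pos.ne'
  rw [ProbabilityTheory.cond, integral_smul_measure, ENNReal.toReal_inv, ← measureReal_def,
    hτ.measureReal_cell, inv_inv, smul_eq_mul, inv_mul_cancel_left₀ hn]

theorem integral_comp (hτ : IsEquipartition η τ) {F : Fin n → A → ℝ}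
    (hF : ∀ i, Integrable (F i) η) :
    ∫ a, F (τ a) a ∂η =
      (n : ℝ)⁻¹ * ∑ i, ∫ a, F i a ∂(ProbabilityTheory.cond η (τ ⁻¹' {i})) := by
  rw [integral_comp_eq_sum_setIntegral hτ.measurable hF, Finset.mul_sum]
  exact Finset.sum_congr rfl fun i _ => hτ.setIntegral_cell i _

variable [IsProbabilityMeasure η]

theorem natCast_pos (_ : IsEquipartition η τ) : 0 < (n : ℝ) := by
  obtain ⟨a⟩ := nonempty_of_isProbabilityMeasure η
  exact_mod_cast (τ a).pos

theorem isProbabilityMeasure_cond (hτ : IsEquipartition η τ) (i : Fin n) :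
    IsProbabilityMeasure (ProbabilityTheory.cond η (τ ⁻¹' {i})) :=
  ProbabilityTheory.cond_isProbabilityMeasure (hτ.measure_cell_ne_zero i)

variable {X : Type*} {h : A × X → ℝ} {C : ℝ}

theorem abs_cellAverage_le (hτ : IsEquipartition η τ) (hC : ∀ z, |h z| ≤ C) (i : Fin n) (y : X) :
    |cellAverage η τ h i y| ≤ C := by
  have := hτ.isProbabilityMeasure_cond i
  simpa [cellAverage] using norm_integral_le_of_norm_le_const
    (μ := ProbabilityTheory.cond η (τ ⁻¹' {i})) (f := fun a => h (a, y)) (.of_forall fun a => hC _)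

variable [MeasurableSpace X]

theorem measurable_cellAverage (hτ : IsEquipartition η τ) (hh : Measurable h) (i : Fin n) :
    Measurable (cellAverage η τ h i) := by
  have := hτ.isProbabilityMeasure_cond i
  exact hh.stronglyMeasurable.integral_prod_left'.measurable

theorem exp_cellAverage_le (hτ : IsEquipartition η τ) (hh : Measurable h) (hC : ∀ z, |h z| ≤ C)
    (i : Fin n) (y : X) :
    Real.exp (cellAverage η τ h i y) ≤ cellAverage η τ (fun z => Real.exp (h z)) i y := by
  have := hτ.isProbabilityMeasure_cond i
  have hy : Measurable fun a => h (a, y) := hh.comp measurable_prodMk_right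
  exact convexOn_exp.map_integral_le Real.continuous_exp.continuousOn isClosed_univ
    (.of_forall fun _ => mem_univ _) (integrable_of_abs_le hy fun a => hC _)
    (integrable_exp_of_abs_le hy fun a => hC _)

theorem integral_empiricalMeasure (hτ : IsEquipartition η τ) (hh : Measurable h)
    (hC : ∀ z, |h z| ≤ C) (x : Fin n → X) :
    ∫ z, h z ∂(empiricalMeasure η τ x) = (n : ℝ)⁻¹ * ∑ i, cellAverage η τ h i (x i) := by
  rw [empiricalMeasure, integral_map (measurable_mk_comp hτ.measurable x).aemeasurable
    hh.aestronglyMeasurable]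
  exact hτ.integral_comp fun i =>
    integrable_of_abs_le (hh.comp measurable_prodMk_right) fun a => hC _

theorem measurable_integral_empiricalMeasure (hτ : IsEquipartition η τ) (hh : Measurable h)
    (hC : ∀ z, |h z| ≤ C) : Measurable fun x => ∫ z, h z ∂(empiricalMeasure η τ x) := by
  simp_rw [hτ.integral_empiricalMeasure hh hC]
  exact (Finset.measurable_sum _ fun i _ =>
    (hτ.measurable_cellAverage hh i).comp (measurable_pi_apply i)).const_mul _

theorem abs_integral_empiricalMeasure_le (hτ : IsEquipartition η τ) (hC : ∀ z, |h z| ≤ C)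
    (x : Fin n → X) : |∫ z, h z ∂(empiricalMeasure η τ x)| ≤ C := by
  have : IsProbabilityMeasure (empiricalMeasure η τ x) :=
    Measure.isProbabilityMeasure_map (measurable_mk_comp hτ.measurable x).aemeasurable
  simpa using norm_integral_le_of_norm_le_const (μ := empiricalMeasure η τ x) (f := h)
    (.of_forall hC)

theorem mean_integral_exp_cellAverage_le (hτ : IsEquipartition η τ) (μ : Measure X)
    [IsProbabilityMeasure μ] (hh : Measurable h) (hC : ∀ z, |h z| ≤ C) :
    (n : ℝ)⁻¹ * ∑ i, ∫ y, Real.exp (cellAverage η τ h i y) ∂μ ≤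
      ∫ z, Real.exp (h z) ∂(η.prod μ) := by
  have hexp : ∀ z, |Real.exp (h z)| ≤ Real.exp C := fun z => by
    rw [Real.abs_exp, Real.exp_le_exp]
    exact (le_abs_self _).trans (hC z)
  have hcell : ∀ i, ∫ y, Real.exp (cellAverage η τ h i y) ∂μ ≤
      ∫ a, ∫ y, Real.exp (h (a, y)) ∂μ ∂(ProbabilityTheory.cond η (τ ⁻¹' {i})) := fun i => by
    have := hτ.isProbabilityMeasure_cond i
    calc ∫ y, Real.exp (cellAverage η τ h i y) ∂μ
        ≤ ∫ y, cellAverage η τ (fun z => Real.exp (h z)) i y ∂μ :=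
          integral_mono
            (integrable_exp_of_abs_le (hτ.measurable_cellAverage hh i) (hτ.abs_cellAverage_le hC i))
            (integrable_of_abs_le (hτ.measurable_cellAverage hh.exp i)
              (hτ.abs_cellAverage_le hexp i)) (hτ.exp_cellAverage_le hh hC i)
      _ = _ := integral_integral_swap
          (integrable_of_abs_le (hh.exp.comp measurable_swap) fun z => hexp _)
  have hint := integrable_exp_of_abs_le (ρ := η.prod μ) hh hC
  rw [integral_prod _ hint,
    hτ.integral_comp (F := fun _ a => ∫ y, Real.exp (h (a, y)) ∂μ) fun _ => hint.integral_prod_left]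
  gcongr with i
  exact hcell i

end IsEquipartition

end Fibers

theorem prod_le_inv_card_mul_sum_pow {ι : Type*} [Fintype ι] [Nonempty ι] {z : ι → ℝ}
    (hz : ∀ i, 0 ≤ z i) :
    ∏ i, z i ≤ ((Fintype.card ι : ℝ)⁻¹ * ∑ i, z i) ^ Fintype.card ι := by
  have hcard : (Fintype.card ι : ℝ) ≠ 0 := by exact_mod_cast Fintype.card_ne_zero
  have hgm := Real.geom_mean_le_arith_mean_weighted Finset.univ
    (fun _ : ι => (Fintype.card ι : ℝ)⁻¹) z (fun _ _ => by positivity) (by simp [hcard])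
    fun i _ => hz i
  rw [Real.finsetProd_rpow _ _ fun i _ => hz i, ← Finset.mul_sum] at hgm
  rw [← Real.rpow_inv_natCast_pow (Finset.prod_nonneg fun i _ => hz i)
    (Fintype.card_ne_zero (α := ι))]
  have := Finset.prod_nonneg fun i (_ : i ∈ Finset.univ) => hz i
  gcongr

namespace IsEquipartition

variable {A X : Type*} [MeasurableSpace A] [MeasurableSpace X] {η : Measure A}
  [IsProbabilityMeasure η] {n : ℕ} {τ : A → Fin n} {h : A × X → ℝ} {C : ℝ}

theorem integral_exp_integral_empiricalMeasure_le (hτ : IsEquipartition η τ) (μ : Measure X)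
    [IsProbabilityMeasure μ] (hh : Measurable h) (hC : ∀ z, |h z| ≤ C) :
    ∫ x, Real.exp (n * ∫ z, h z ∂(empiricalMeasure η τ x)) ∂(Measure.pi fun _ : Fin n => μ) ≤
      (∫ z, Real.exp (h z) ∂(η.prod μ)) ^ n := by
  have : Nonempty (Fin n) := (nonempty_of_isProbabilityMeasure η).map τ
  have hpos : ∀ i, 0 ≤ ∫ y, Real.exp (cellAverage η τ h i y) ∂μ := fun i =>
    integral_nonneg fun _ => (Real.exp_pos _).le
  calc ∫ x, Real.exp (n * ∫ z, h z ∂(empiricalMeasure η τ x)) ∂(Measure.pi fun _ : Fin n => μ)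
      = ∫ x, ∏ i, Real.exp (cellAverage η τ h i (x i)) ∂(Measure.pi fun _ : Fin n => μ) := by
        simp_rw [hτ.integral_empiricalMeasure hh hC, mul_inv_cancel_left₀ hτ.natCast_pos.ne',
          Real.exp_sum]
    _ = ∏ i, ∫ y, Real.exp (cellAverage η τ h i y) ∂μ :=
        integral_fintype_prod_eq_prod (𝕜 := ℝ) (f := fun i y => Real.exp (cellAverage η τ h i y))
    _ ≤ ((n : ℝ)⁻¹ * ∑ i, ∫ y, Real.exp (cellAverage η τ h i y) ∂μ) ^ n := by
        simpa only [Fintype.card_fin] using prod_le_inv_card_mul_sum_pow hpos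
    _ ≤ (∫ z, Real.exp (h z) ∂(η.prod μ)) ^ n := by
        have := Finset.sum_nonneg fun i (_ : i ∈ Finset.univ) => hpos i
        gcongr
        exact hτ.mean_integral_exp_cellAverage_le μ hh hC

theorem measure_log_add_le_integral_empiricalMeasure_le (hτ : IsEquipartition η τ) (μ : Measure X)
    [IsProbabilityMeasure μ] (hh : Measurable h) (hC : ∀ z, |h z| ≤ C) (c : ℝ) :
    (Measure.pi fun _ : Fin n => μ)
        {x | Real.log (∫ z, Real.exp (h z) ∂(η.prod μ)) + c ≤ ∫ z, h z ∂(empiricalMeasure η τ x)} ≤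
      ENNReal.ofReal (Real.exp (-(n * c))) := by
  have hZ : 0 < ∫ z, Real.exp (h z) ∂(η.prod μ) := integral_exp_pos_of_abs_le hh hC
  have hint : Integrable (fun x => Real.exp (n * ∫ z, h z ∂(empiricalMeasure η τ x)))
      (Measure.pi fun _ : Fin n => μ) :=
    integrable_exp_of_abs_le (C := n * C)
      ((hτ.measurable_integral_empiricalMeasure hh hC).const_mul _) fun x => by
        rw [abs_mul, Nat.abs_cast]
        gcongr
        exact hτ.abs_integral_empiricalMeasure_le hC x
  rw [← ENNReal.ofReal_toReal (measure_ne_top _ _)]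
  refine ENNReal.ofReal_le_ofReal ?_
  calc (Measure.pi fun _ : Fin n => μ).real _
      ≤ Real.exp (-n * (Real.log (∫ z, Real.exp (h z) ∂(η.prod μ)) + c)) *
          (∫ z, Real.exp (h z) ∂(η.prod μ)) ^ n :=
        (ProbabilityTheory.measure_ge_le_exp_mul_mgf _ n.cast_nonneg hint).trans <| by
          gcongr
          exact hτ.integral_exp_integral_empiricalMeasure_le μ hh hC
    _ = Real.exp (-(n * c)) := by
        nth_rewrite 2 [← Real.exp_log hZ]
        rw [← Real.exp_nat_mul, ← Real.exp_add]
        ring_nf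

end IsEquipartition

/-! ### Compactness of `𝒯ℳ` and of the sublevel sets of the rate function -/

/-- `𝒯ℳ` as a set of probability measures, so that it carries the weak topology. -/
def setTM (X : Type*) [MeasurableSpace X] : Set (ProbabilityMeasure (ℝ × X)) :=
  {ν | inTM (ν : Measure (ℝ × X))}

theorem inTM.ae_mem_Icc {X : Type*} [MeasurableSpace X] {ν : Measure (ℝ × X)} (h : inTM ν) :
    ∀ᵐ z ∂ν, z.1 ∈ Icc (0 : ℝ) 1 := by
  have hunif : ∀ᵐ a ∂unif01, a ∈ Icc (0 : ℝ) 1 := ae_restrict_mem measurableSet_Icc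
  rw [← h.2] at hunif
  exact ae_of_ae_map measurable_fst.aemeasurable hunif

section Rate

variable {X : Type*} [MeasurableSpace X] (μ : Measure X)

/-- The measures of `𝒯ℳ` whose divergence from `ρ = Unif[0,1] ⊗ μ` is at most `c`. -/
def sublevelTM (c : ℝ≥0∞) : Set (ProbabilityMeasure (ℝ × X)) :=
  {ν | inTM (ν : Measure (ℝ × X)) ∧ KLdiv (ν : Measure (ℝ × X)) (unif01.prod μ) ≤ c}

/-- The contraction of relative entropy on `𝒯ℳ` along `T`; for `T = TWphi G W φ` it is
`rate0 G W φ μ`. -/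
noncomputable def rateTM (T : Measure (ℝ × X) → ℝ) (t : ℝ) : ℝ≥0∞ :=
  ⨅ ν : {ν : Measure (ℝ × X) // inTM ν ∧ KLdiv ν (unif01.prod μ) ≠ ⊤ ∧ T ν = t},
    KLdiv ν.1 (unif01.prod μ)

theorem rateTM_le {T : Measure (ℝ × X) → ℝ} {ν : Measure (ℝ × X)} (hν : inTM ν) :
    rateTM μ T (T ν) ≤ KLdiv ν (unif01.prod μ) := by
  by_cases hk : KLdiv ν (unif01.prod μ) = ⊤
  · exact hk ▸ le_top
  · exact iInf_le _ (⟨ν, hν, hk, rfl⟩ : {ν' : Measure (ℝ × X) //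
      inTM ν' ∧ KLdiv ν' (unif01.prod μ) ≠ ⊤ ∧ T ν' = T ν})

variable {μ}

theorem rateTM_le_iff {T : Measure (ℝ × X) → ℝ} {t : ℝ} {c : ℝ≥0∞} :
    rateTM μ T t ≤ c ↔
      ∀ d ∈ Ioo c ⊤, ∃ ν ∈ sublevelTM μ d, T (ν : Measure (ℝ × X)) = t := by
  constructor
  · intro h d hd
    obtain ⟨ν, hν⟩ := iInf_lt_iff.mp (h.trans_lt hd.1)
    exact ⟨⟨ν.1, ν.2.1.1⟩, ⟨ν.2.1, hν.le⟩, ν.2.2.2⟩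
  · intro h
    refine le_of_forall_gt_imp_ge_of_dense fun d hd => ?_
    rcases eq_or_ne d ⊤ with rfl | hd'
    · exact le_top
    obtain ⟨ν, hν, rfl⟩ := h d ⟨hd, hd'.lt_top⟩
    exact (rateTM_le μ hν.1).trans hν.2

end Rate

section Weak

variable {X : Type*} [TopologicalSpace X] [MeasurableSpace X] [OpensMeasurableSpace X]

theorem continuous_integral_of_abs_le {h : X → ℝ} (hh : Continuous h) {C : ℝ}
    (hC : ∀ z, |h z| ≤ C) : Continuous fun ν : ProbabilityMeasure X => ∫ z, h z ∂(ν : Measure X) :=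
  continuous_iff_continuousAt.mpr fun ν =>
    ProbabilityMeasure.tendsto_iff_forall_integral_tendsto.mp (tendsto_id (x := nhds ν))
      (BoundedContinuousFunction.ofNormedAddCommGroup h hh C hC)

variable [SecondCountableTopology X]

theorem isClosed_setTM : IsClosed (setTM X) := by
  have hpre : setTM X = (fun ν : ProbabilityMeasure (ℝ × X) => ν.map
      (continuous_fst.aemeasurable (μ := (ν : Measure (ℝ × X))))) ⁻¹'
      {(⟨unif01, inferInstance⟩ : ProbabilityMeasure ℝ)} := by
    ext ν
    exact ⟨fun h => ProbabilityMeasure.toMeasure_injective h.2,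
      fun h => ⟨ν.2, congrArg (fun p : ProbabilityMeasure ℝ => (p : Measure ℝ)) h⟩⟩
  rw [hpre]
  exact isClosed_singleton.preimage (ProbabilityMeasure.continuous_map continuous_fst)

end Weak

/-- Uniform approximability on `𝒯ℳ` by polynomials in integrals of bounded continuous functions. -/
def IsPolyApproximable {X : Type*} [TopologicalSpace X] [MeasurableSpace X]
    (T : Measure (ℝ × X) → ℝ) : Prop :=
  ∀ ε > 0, ∃ (N k : ℕ) (g : Fin N → Fin k → ℝ × X → ℝ) (C : ℝ),
    (∀ l a, Continuous (g l a)) ∧ (∀ l a z, |g l a z| ≤ C) ∧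
    ∀ ν, inTM ν → |T ν - ∑ l, ∏ a, ∫ z, g l a z ∂ν| ≤ ε

section Compact

variable {X : Type*} [MetricSpace X] [CompactSpace X] [MeasurableSpace X] [BorelSpace X]

-- `𝒯ℳ` is closed and contained in the image of the compact space of laws on `[0,1] × X`.
theorem isCompact_setTM : IsCompact (setTM X) := by
  let e : Icc (0 : ℝ) 1 × X → ℝ × X := fun z => (z.1, z.2)
  have he : Continuous e := by fun_prop
  let p : ℝ × X → Icc (0 : ℝ) 1 × X := fun z => (projIcc 0 1 zero_le_one z.1, z.2)
  have hp : Continuous p := (continuous_projIcc.comp continuous_fst).prodMk continuous_snd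
  refine (isCompact_range (ProbabilityMeasure.continuous_map he)).of_isClosed_subset
    isClosed_setTM fun ν hν => ⟨ν.map hp.aemeasurable, ?_⟩
  apply ProbabilityMeasure.toMeasure_injective
  change Measure.map e (Measure.map p (ν : Measure (ℝ × X))) = ν
  rw [Measure.map_map he.measurable hp.measurable]
  refine (Measure.map_congr ?_).trans Measure.map_id
  filter_upwards [hν.ae_mem_Icc] with z hz
  simp only [Function.comp, e, p, id, projIcc_of_mem _ hz]

theorem exists_continuous_log_integral_exp_add_lt (ρ : Measure (ℝ × X)) [IsProbabilityMeasure ρ]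
    {ν : Measure (ℝ × X)} [IsProbabilityMeasure ν] {c : ℝ} (h : ENNReal.ofReal c < KLdiv ν ρ) :
    ∃ h : ℝ × X → ℝ, Continuous h ∧ (∃ C, ∀ x, |h x| ≤ C) ∧
      Real.log (∫ x, Real.exp (h x) ∂ρ) + c < ∫ x, h x ∂ν := by
  by_contra! hcon
  rw [KLdiv_eq_klDiv] at h
  exact absurd (EntropyBound.of_continuous hcon).klDiv_le (not_le.mpr h)

variable (μ : Measure X) [IsProbabilityMeasure μ]

theorem isCompact_sublevelTM {c : ℝ≥0∞} (hc : c ≠ ⊤) : IsCompact (sublevelTM μ c) := by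
  refine isCompact_setTM.of_isClosed_subset ?_ fun ν h => h.1
  have hinter : sublevelTM μ c = setTM X ∩
      ⋂ (h : ℝ × X → ℝ) (_ : Continuous h) (_ : ∃ C, ∀ x, |h x| ≤ C),
        {ν : ProbabilityMeasure (ℝ × X) | ∫ x, h x ∂(ν : Measure (ℝ × X)) ≤
          Real.log (∫ x, Real.exp (h x) ∂(unif01.prod μ)) + c.toReal} := by
    ext ν
    simp only [sublevelTM, Set.mem_ofPred_eq, mem_inter_iff, mem_iInter, KLdiv_eq_klDiv]
    constructor
    · refine fun ⟨hTM, hle⟩ => ⟨hTM, fun h hh hb => ?_⟩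
      exact (EntropyBound.of_klDiv_ne_top (hle.trans_lt hc.lt_top).ne).mono
        (ENNReal.toReal_mono hc hle) h hh.measurable hb
    · refine fun ⟨hTM, hle⟩ => ⟨hTM, ?_⟩
      simpa only [ENNReal.ofReal_toReal hc] using (EntropyBound.of_continuous hle).klDiv_le
  rw [hinter]
  exact isClosed_setTM.inter <| isClosed_iInter fun h => isClosed_iInter fun hh =>
    isClosed_iInter fun ⟨_, hC⟩ => isClosed_le (continuous_integral_of_abs_le hh hC)
      continuous_const

theorem IsPolyApproximable.continuousOn {T : Measure (ℝ × X) → ℝ} (hT : IsPolyApproximable T) :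
    ContinuousOn (fun ν : ProbabilityMeasure (ℝ × X) => T ν) (setTM X) := by
  refine continuousOn_of_uniform_approx_of_continuousOn fun u hu => ?_
  obtain ⟨ε, hε, hu⟩ := Metric.mem_uniformity_dist.mp hu
  obtain ⟨N, k, g, C, hg, hC, hT⟩ := hT (ε / 2) (by positivity)
  refine ⟨fun ν => ∑ l, ∏ a, ∫ z, g l a z ∂(ν : Measure (ℝ × X)), ?_, fun ν hν => hu ?_⟩
  · exact (continuous_finsetSum _ fun l _ => continuous_finsetProd _ fun a _ =>
      continuous_integral_of_abs_le (hg l a) (hC l a)).continuousOn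
  · rw [Real.dist_eq]
    exact (hT _ hν).trans_lt (half_lt_self hε)

theorem isCompact_rateTM_le {T : Measure (ℝ × X) → ℝ} (hT : IsPolyApproximable T) {c : ℝ≥0∞}
    (hc : c ≠ ⊤) : IsCompact {t | rateTM μ T t ≤ c} := by
  have himage : ∀ d ∈ Ioo c ⊤, IsCompact
      ((fun ν : ProbabilityMeasure (ℝ × X) => T ν) '' sublevelTM μ d) := fun d hd =>
    (isCompact_sublevelTM μ hd.2.ne).image_of_continuousOn (hT.continuousOn.mono fun ν h => h.1)
  have hinter : {t | rateTM μ T t ≤ c} =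
      ⋂ d ∈ Ioo c ⊤, (fun ν : ProbabilityMeasure (ℝ × X) => T ν) '' sublevelTM μ d := by
    ext t
    simp only [Set.mem_ofPred_eq, mem_iInter, rateTM_le_iff, mem_image]
  have hmem : c + 1 ∈ Ioo c ⊤ := ⟨ENNReal.lt_add_right hc one_ne_zero, by finiteness⟩
  rw [hinter]
  exact (himage _ hmem).of_isClosed_subset (isClosed_biInter fun d hd => (himage d hd).isClosed)
    (biInter_subset_of_mem hmem)

end Compact

/-! ### The exponential upper bound -/

/-- The events that the empirical measure lies in `S` while a statistic uniformly close to `T` of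
the empirical measure lies in `F` have probability of exponential order at most `-c`. -/
def HasExponentialBound {X : Type*} [MeasurableSpace X] (μ : Measure X)
    (T : Measure (ℝ × X) → ℝ) (F : Set ℝ) (c : ℝ) (S : Set (ProbabilityMeasure (ℝ × X))) : Prop :=
  ∃ N : ℕ, ∃ ε > 0, ∀ (n : ℕ) (τ : ℝ → Fin n), IsEquipartition unif01 τ → ∀ s : (Fin n → X) → ℝ,
    (∀ x, |s x - T (empiricalMeasure unif01 τ x)| ≤ ε) →
    (Measure.pi fun _ : Fin n => μ)
        {x | (∃ p ∈ S, (p : Measure (ℝ × X)) = empiricalMeasure unif01 τ x) ∧ s x ∈ F} ≤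
      N * ENNReal.ofReal (Real.exp (-(n * c)))

namespace HasExponentialBound

section Basic

variable {X : Type*} [MeasurableSpace X] {μ : Measure X} {T : Measure (ℝ × X) → ℝ}
  {F : Set ℝ} {c : ℝ} {S S' : Set (ProbabilityMeasure (ℝ × X))}

theorem empty : HasExponentialBound μ T F c ∅ :=
  ⟨0, 1, one_pos, fun n τ _ s _ => by simp⟩

theorem mono (hS : S ⊆ S') (h : HasExponentialBound μ T F c S') :
    HasExponentialBound μ T F c S := by
  obtain ⟨N, ε, hε, h⟩ := h
  refine ⟨N, ε, hε, fun n τ hτ s hs => (measure_mono ?_).trans (h n τ hτ s hs)⟩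
  exact fun x ⟨⟨p, hp, hpx⟩, hx⟩ => ⟨⟨p, hS hp, hpx⟩, hx⟩

theorem union (h : HasExponentialBound μ T F c S) (h' : HasExponentialBound μ T F c S') :
    HasExponentialBound μ T F c (S ∪ S') := by
  obtain ⟨N, ε, hε, h⟩ := h
  obtain ⟨N', ε', hε', h'⟩ := h'
  refine ⟨N + N', min ε ε', lt_min hε hε', fun n τ hτ s hs => ?_⟩
  push_cast
  rw [add_mul]
  refine (measure_mono ?_).trans ((measure_union_le _ _).trans (add_le_add
    (h n τ hτ s fun x => (hs x).trans (min_le_left _ _))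
    (h' n τ hτ s fun x => (hs x).trans (min_le_right _ _))))
  rintro x ⟨⟨p, hp | hp, hpx⟩, hx⟩
  · exact Or.inl ⟨⟨p, hp, hpx⟩, hx⟩
  · exact Or.inr ⟨⟨p, hp, hpx⟩, hx⟩

theorem of_ball {t r : ℝ} (hr : 0 < r) (hF : Metric.ball t r ⊆ Fᶜ) :
    HasExponentialBound μ T F c
      ((fun p : ProbabilityMeasure (ℝ × X) => T p) ⁻¹' Metric.ball t (r / 2)) := by
  refine ⟨0, r / 2, half_pos hr, fun n τ _ s hs => le_of_eq_of_le ?_ zero_le⟩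
  refine measure_mono_null (t := ∅) ?_ measure_empty
  rintro x ⟨⟨p, hp, hpx⟩, hx⟩
  refine hF ?_ hx
  have hsx := hs x
  rw [← hpx] at hsx
  rw [mem_preimage, Metric.mem_ball, Real.dist_eq] at hp
  rw [Metric.mem_ball, Real.dist_eq]
  linarith [abs_sub_le (s x) (T p) t]

theorem of_log_integral_exp_add_le [IsProbabilityMeasure μ] {h : ℝ × X → ℝ} (hh : Measurable h)
    {C : ℝ} (hC : ∀ z, |h z| ≤ C) :
    HasExponentialBound μ T F c {p | Real.log (∫ z, Real.exp (h z) ∂(unif01.prod μ)) + c ≤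
      ∫ z, h z ∂(p : Measure (ℝ × X))} := by
  refine ⟨1, 1, one_pos, fun n τ hτ s _ => ?_⟩
  rw [Nat.cast_one, one_mul]
  refine (measure_mono ?_).trans
    (hτ.measure_log_add_le_integral_empiricalMeasure_le μ hh hC c)
  rintro x ⟨⟨p, hp, hpx⟩, -⟩
  rw [Set.mem_ofPred_eq, ← hpx]
  exact hp

end Basic

variable {X : Type*} [MetricSpace X] [CompactSpace X] [MeasurableSpace X] [BorelSpace X]
  {μ : Measure X} [IsProbabilityMeasure μ] {T : Measure (ℝ × X) → ℝ} {F : Set ℝ} {c : ℝ}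

theorem exists_nhdsWithin (hT : IsPolyApproximable T) (hF : IsClosed F)
    {ν : ProbabilityMeasure (ℝ × X)} (hν : ν ∈ setTM X)
    (hc : T ν ∈ F → ENNReal.ofReal c < KLdiv (ν : Measure (ℝ × X)) (unif01.prod μ)) :
    ∃ S ∈ nhdsWithin ν (setTM X), HasExponentialBound μ T F c S := by
  by_cases hνF : T ν ∈ F
  · obtain ⟨h, hh, ⟨C, hC⟩, hlt⟩ := exists_continuous_log_integral_exp_add_lt _ (hc hνF)
    refine ⟨{p | Real.log (∫ z, Real.exp (h z) ∂(unif01.prod μ)) + c < ∫ z, h z ∂p},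
      mem_nhdsWithin_of_mem_nhds
        ((isOpen_lt continuous_const (continuous_integral_of_abs_le hh hC)).mem_nhds hlt),
      mono ?_ (of_log_integral_exp_add_le hh.measurable hC)⟩
    exact Set.ofPred_subset_ofPred.mpr fun p hp => hp.le
  · obtain ⟨r, hr, hrF⟩ := Metric.isOpen_iff.mp hF.isOpen_compl _ hνF
    exact ⟨_, hT.continuousOn ν hν (Metric.ball_mem_nhds _ (half_pos hr)), of_ball hr hrF⟩

theorem setTM (hT : IsPolyApproximable T) (hF : IsClosed F)
    (hc : ∀ ν, inTM ν → T ν ∈ F → ENNReal.ofReal c < KLdiv ν (unif01.prod μ)) :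
    HasExponentialBound μ T F c (setTM X) :=
  isCompact_setTM.induction_on empty (fun _ _ => mono) (fun _ _ => union)
    fun ν hν => exists_nhdsWithin hT hF hν (hc ν hν)

end HasExponentialBound

/-! ### Change of measure and the lower bound -/

theorem measure_pi_le_abs_mean_sub_le {ι X : Type*} [Fintype ι] [Nonempty ι] [MeasurableSpace X]
    (ν : ι → Measure X) [∀ i, IsProbabilityMeasure (ν i)] {f : ι → X → ℝ}
    (hf : ∀ i, Measurable (f i)) {C : ℝ} (hC : ∀ i y, |f i y| ≤ C) {δ : ℝ} (hδ : 0 < δ) :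
    (Measure.pi ν) {x | δ ≤ |(Fintype.card ι : ℝ)⁻¹ * ∑ i, f i (x i) -
        (Fintype.card ι : ℝ)⁻¹ * ∑ i, ∫ y, f i y ∂(ν i)|} ≤
      ENNReal.ofReal (C ^ 2 / δ ^ 2 / Fintype.card ι) := by
  set m : ℝ := (Fintype.card ι : ℝ)
  have hm : 0 < m := Nat.cast_pos.mpr Fintype.card_pos
  have hmem : ∀ i, MemLp (f i) 2 (ν i) := fun i =>
    MemLp.of_bound (hf i).aestronglyMeasurable C (.of_forall fun y => hC i y)
  have hmem_pi : ∀ i, MemLp (fun x : ι → X => f i (x i)) 2 (Measure.pi ν) := fun i =>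
    MemLp.of_bound ((hf i).comp (measurable_pi_apply i)).aestronglyMeasurable C
      (.of_forall fun x => hC i _)
  have hmean : ∫ x, (∑ i, fun x : ι → X => f i (x i)) x ∂(Measure.pi ν) =
      ∑ i, ∫ y, f i y ∂(ν i) := by
    simp only [Finset.sum_apply]
    rw [integral_finsetSum _ fun i _ => (hmem_pi i).integrable one_le_two]
    exact Finset.sum_congr rfl fun i _ => integral_comp_eval (hf i).aestronglyMeasurable
  have hvar : ∑ i, ProbabilityTheory.variance (f i) (ν i) ≤ m * C ^ 2 := by
    refine (Finset.sum_le_card_nsmul _ _ (C ^ 2) fun i _ => ?_).trans (by simp [m])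
    have := ProbabilityTheory.variance_le_sq_of_bounded (μ := ν i)
      (.of_forall fun y => abs_le.mp (hC i y)) (hf i).aemeasurable
    rwa [sub_neg_eq_add, add_self_div_two] at this
  have hchebyshev := ProbabilityTheory.meas_ge_le_variance_div_sq
    (memLp_finsetSum' Finset.univ fun i _ => hmem_pi i) (c := m * δ) (by positivity)
  rw [hmean, ProbabilityTheory.variance_sum_pi hmem] at hchebyshev
  refine (measure_mono fun x hx => ?_).trans (hchebyshev.trans (ENNReal.ofReal_le_ofReal ?_))
  · rw [Set.mem_ofPred_eq, ← mul_sub, abs_mul, abs_of_pos (inv_pos.mpr hm), inv_mul_eq_div,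
      le_div_iff₀' hm] at hx
    simpa only [Set.mem_ofPred_eq, Finset.sum_apply] using hx
  · calc _ ≤ m * C ^ 2 / (m * δ) ^ 2 := by gcongr
      _ = C ^ 2 / δ ^ 2 / m := by field_simp

section CellLaw

variable {A X : Type*} [MeasurableSpace A] [MeasurableSpace X] {η : Measure A} {n : ℕ}
  {τ : A → Fin n} {ν : Measure (A × X)}

theorem IsEquipartition.comp {B : Type*} [MeasurableSpace B] {θ : Measure B} {f : B → A}
    (hτ : IsEquipartition η τ) (hf : MeasurePreserving f θ η) : IsEquipartition θ (τ ∘ f) where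
  measurable := hτ.measurable.comp hf.measurable
  measure_cell i := by
    rw [preimage_comp, hf.measure_preimage (hτ.measurableSet_cell i).nullMeasurableSet,
      hτ.measure_cell]

/-- The law of `b` given that `a` lies in the `i`-th cell of `τ`, for `(a, b)` of law `ν`. -/
noncomputable def cellLaw (τ : A → Fin n) (ν : Measure (A × X)) (i : Fin n) : Measure X :=
  (ProbabilityTheory.cond ν ((τ ∘ Prod.fst) ⁻¹' {i})).map Prod.snd

/-- The measure `ν` averaged over the cells of `τ`: over each cell the two coordinates are made
independent, with `η` conditioned on the cell as first marginal. -/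
noncomputable def cellAveraged (η : Measure A) (τ : A → Fin n) (ν : Measure (A × X)) :
    Measure (A × X) :=
  ∑ i, (n : ℝ≥0∞)⁻¹ • (ProbabilityTheory.cond η (τ ⁻¹' {i})).prod (cellLaw τ ν i)

namespace IsEquipartition

theorem sum_smul_cond [IsFiniteMeasure η] (hτ : IsEquipartition η τ) :
    ∑ i, (n : ℝ≥0∞)⁻¹ • ProbabilityTheory.cond η (τ ⁻¹' {i}) = η := by
  simpa only [hτ.measure_cell] using ProbabilityTheory.sum_meas_smul_cond_fiber hτ.measurable η

variable [IsProbabilityMeasure ν]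

theorem isProbabilityMeasure_cellLaw (hτ : IsEquipartition η τ)
    (hν : MeasurePreserving Prod.fst ν η) (i : Fin n) :
    IsProbabilityMeasure (cellLaw τ ν i) :=
  have := (hτ.comp hν).isProbabilityMeasure_cond i
  Measure.isProbabilityMeasure_map measurable_snd.aemeasurable

variable [IsProbabilityMeasure η]

theorem cellLaw_prod (hτ : IsEquipartition η τ) (μ : Measure X) [IsProbabilityMeasure μ]
    (i : Fin n) : cellLaw τ (η.prod μ) i = μ := by
  have := hτ.isProbabilityMeasure_cond i
  have hcond : ProbabilityTheory.cond (η.prod μ) ((τ ∘ Prod.fst) ⁻¹' {i}) =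
      (ProbabilityTheory.cond η (τ ⁻¹' {i})).prod μ := by
    rw [preimage_comp, ← prod_univ, ProbabilityTheory.cond, ProbabilityTheory.cond,
      Measure.prod_prod, measure_univ, mul_one, ← Measure.prod_restrict, Measure.restrict_univ,
      Measure.prod_smul_left]
  rw [cellLaw, hcond, Measure.map_snd_prod, measure_univ, one_smul]

theorem map_fst_cellAveraged (hτ : IsEquipartition η τ) (hν : MeasurePreserving Prod.fst ν η) :
    (cellAveraged η τ ν).map Prod.fst = η := by
  have := hτ.isProbabilityMeasure_cellLaw hν
  rw [cellAveraged, Measure.map_finset_sum measurable_fst.aemeasurable]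
  simp_rw [Measure.map_smul, Measure.map_fst_prod, measure_univ, one_smul, hτ.sum_smul_cond]

theorem integral_cellAveraged (hτ : IsEquipartition η τ) (hν : MeasurePreserving Prod.fst ν η)
    {h : A × X → ℝ} (hh : Measurable h) {C : ℝ} (hC : ∀ z, |h z| ≤ C) :
    ∫ z, h z ∂(cellAveraged η τ ν) =
      (n : ℝ)⁻¹ * ∑ i, ∫ y, cellAverage η τ h i y ∂(cellLaw τ ν i) := by
  have := hτ.isProbabilityMeasure_cellLaw hν
  have := hτ.isProbabilityMeasure_cond
  have hn : (n : ℝ≥0∞)⁻¹ ≠ ⊤ := by simpa using hτ.natCast_pos.ne'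
  rw [cellAveraged, integral_finsetSum_measure fun i _ =>
    (integrable_of_abs_le hh hC).smul_measure hn, Finset.mul_sum]
  refine Finset.sum_congr rfl fun i _ => ?_
  rw [integral_smul_measure, integral_prod_symm _ (integrable_of_abs_le hh hC), ENNReal.toReal_inv,
    ENNReal.toReal_natCast, smul_eq_mul]
  rfl

theorem map_cellAveraged (hτ : IsEquipartition η τ) (hν : MeasurePreserving Prod.fst ν η) :
    (cellAveraged η τ ν).map (Prod.map τ id) = ν.map (Prod.map τ id) := by
  have := hτ.isProbabilityMeasure_cellLaw hν
  have := hτ.isProbabilityMeasure_cond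
  have hτν := hτ.comp hν
  have hm : Measurable (Prod.map τ (id : X → X)) := hτ.measurable.prodMap measurable_id
  conv_rhs => rw [← hτν.sum_smul_cond]
  rw [cellAveraged, Measure.map_finset_sum hm.aemeasurable,
    Measure.map_finset_sum hm.aemeasurable]
  refine Finset.sum_congr rfl fun i _ => ?_
  rw [Measure.map_smul, Measure.map_smul]
  congr 1
  have hη : ∀ᵐ a ∂(ProbabilityTheory.cond η (τ ⁻¹' {i})), τ a = i :=
    ProbabilityTheory.ae_cond_mem (hτ.measurableSet_cell i)
  have hν : ∀ᵐ z ∂(ProbabilityTheory.cond ν ((τ ∘ Prod.fst) ⁻¹' {i})), τ z.1 = i :=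
    ProbabilityTheory.ae_cond_mem (hτν.measurableSet_cell i)
  calc ((ProbabilityTheory.cond η (τ ⁻¹' {i})).prod (cellLaw τ ν i)).map (Prod.map τ id)
      = (Measure.dirac i).prod (cellLaw τ ν i) := by
        rw [← Measure.map_prod_map _ _ hτ.measurable measurable_id, Measure.map_congr hη,
          Measure.map_const, measure_univ, one_smul, Measure.map_id]
    _ = (ProbabilityTheory.cond ν ((τ ∘ Prod.fst) ⁻¹' {i})).map fun z => (i, z.2) := by
        rw [Measure.dirac_prod, cellLaw, Measure.map_map measurable_prodMk_left measurable_snd]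
        rfl
    _ = _ := Measure.map_congr (hν.mono fun z hz => congrArg (·, z.2) hz.symm)

theorem measurableSet_forall_abs_sub_lt (hτ : IsEquipartition η τ) {ι : Type*} [Countable ι]
    {g : ι → A × X → ℝ} (hg : ∀ j, Measurable (g j)) {C : ℝ} (hC : ∀ j z, |g j z| ≤ C)
    (b : ι → ℝ) (δ : ℝ) :
    MeasurableSet {x | ∀ j, |∫ z, g j z ∂(empiricalMeasure η τ x) - b j| < δ} := by
  rw [ofPred_forall]
  exact .iInter fun j => measurableSet_lt
    ((hτ.measurable_integral_empiricalMeasure (hg j) (hC j)).sub_const _).abs measurable_const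

theorem one_sub_le_measureReal_pi_cellLaw (hτ : IsEquipartition η τ)
    (hν : MeasurePreserving Prod.fst ν η) {ι : Type*} [Fintype ι] {g : ι → A × X → ℝ}
    (hg : ∀ j, Measurable (g j)) {C : ℝ} (hC : ∀ j z, |g j z| ≤ C) {δ : ℝ} (hδ : 0 < δ) :
    1 - Fintype.card ι * (C ^ 2 / δ ^ 2 / n) ≤ (Measure.pi (cellLaw τ ν)).real
      {x | ∀ j, |∫ z, g j z ∂(empiricalMeasure η τ x) - ∫ z, g j z ∂(cellAveraged η τ ν)| < δ} := by
  have : Nonempty (Fin n) := (nonempty_of_isProbabilityMeasure η).map τ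
  have := hτ.isProbabilityMeasure_cellLaw hν
  have hdev : ∀ j, (Measure.pi (cellLaw τ ν)).real {x | δ ≤
      |∫ z, g j z ∂(empiricalMeasure η τ x) - ∫ z, g j z ∂(cellAveraged η τ ν)|} ≤
        C ^ 2 / δ ^ 2 / n := fun j => by
    have := measure_pi_le_abs_mean_sub_le (cellLaw τ ν) (hτ.measurable_cellAverage (hg j))
      (hτ.abs_cellAverage_le (hC j)) hδ
    simp_rw [Fintype.card_fin, ← hτ.integral_cellAveraged hν (hg j) (hC j),
      ← hτ.integral_empiricalMeasure (hg j) (hC j)] at this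
    exact ENNReal.toReal_le_of_le_ofReal (by positivity) this
  have hunion := (measureReal_iUnion_fintype_le (μ := Measure.pi (cellLaw τ ν)) _).trans
    (Finset.sum_le_card_nsmul Finset.univ _ _ fun j _ => hdev j)
  have hcover : univ ⊆ {x | ∀ j, |∫ z, g j z ∂(empiricalMeasure η τ x) -
      ∫ z, g j z ∂(cellAveraged η τ ν)| < δ} ∪ ⋃ j, {x | δ ≤
        |∫ z, g j z ∂(empiricalMeasure η τ x) - ∫ z, g j z ∂(cellAveraged η τ ν)|} := fun x _ => by
    simpa only [mem_union, mem_iUnion, Set.mem_ofPred_eq, ← not_lt] using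
      (em _).imp_right not_forall.mp
  have hone := (measureReal_mono (μ := Measure.pi (cellLaw τ ν)) hcover).trans
    (measureReal_union_le _ _)
  rw [Finset.card_univ, nsmul_eq_mul] at hunion
  rw [probReal_univ] at hone
  linarith

theorem entropyBound_pi_cellLaw (hτ : IsEquipartition η τ) (hν : MeasurePreserving Prod.fst ν η)
    (μ : Measure X) [IsProbabilityMeasure μ] (hk : InformationTheory.klDiv ν (η.prod μ) ≠ ⊤) :
    EntropyBound (Measure.pi (cellLaw τ ν)) (Measure.pi fun _ : Fin n => μ)
      (n * (InformationTheory.klDiv ν (η.prod μ)).toReal) := by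
  have := hτ.isProbabilityMeasure_cellLaw hν
  have hτν := hτ.comp hν
  have hτρ := hτ.comp (measurePreserving_fst (μ := η) (ν := μ))
  obtain ⟨hac, hint⟩ := InformationTheory.klDiv_ne_top_iff.mp hk
  have hcell : ∀ i, EntropyBound (cellLaw τ ν i) μ
      (n * ∫ z in (τ ∘ Prod.fst) ⁻¹' {i}, llr ν (η.prod μ) z ∂ν) := fun i => by
    have := (EntropyBound.cond hac hint (hτν.measurableSet_cell i)
      (by rw [hτν.measure_cell, hτρ.measure_cell]) (hτν.measure_cell_ne_zero i)).map measurable_snd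
    rwa [hτν.measureReal_cell, inv_inv, ← cellLaw, ← cellLaw, hτ.cellLaw_prod] at this
  have := EntropyBound.pi _ _ _ hcell
  rwa [← Finset.mul_sum, ← integral_comp_eq_sum_setIntegral hτν.measurable
    (F := fun _ => llr ν (η.prod μ)) fun _ => hint,
    ← InformationTheory.toReal_klDiv_of_measure_eq hac (by simp)] at this

end IsEquipartition

end CellLaw

theorem IsPolyApproximable.exists_abs_sub_le {X : Type*} [TopologicalSpace X] [MeasurableSpace X]
    {T : Measure (ℝ × X) → ℝ} (hT : IsPolyApproximable T) {ε : ℝ} (hε : 0 < ε) :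
    ∃ (ι : Type) (_ : Fintype ι) (g : ι → ℝ × X → ℝ) (C δ : ℝ), 0 < δ ∧ (∀ j, Continuous (g j)) ∧
      (∀ j z, |g j z| ≤ C) ∧ ∀ ν ν', inTM ν → inTM ν' →
        (∀ j, |∫ z, g j z ∂ν - ∫ z, g j z ∂ν'| < δ) → |T ν - T ν'| ≤ ε := by
  obtain ⟨N, k, g, C, hg, hC, happrox⟩ := hT (ε / 3) (by positivity)
  have hP : Continuous fun w : Fin N × Fin k → ℝ => ∑ l, ∏ a, w (l, a) := by fun_prop
  obtain ⟨δ, hδ, hunif⟩ := Metric.uniformContinuousOn_iff.mp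
    ((isCompact_closedBall (0 : Fin N × Fin k → ℝ) |C|).uniformContinuousOn_of_continuous
      hP.continuousOn) (ε / 3) (by positivity)
  have hball : ∀ ν : Measure (ℝ × X), inTM ν →
      (fun j : Fin N × Fin k => ∫ z, g j.1 j.2 z ∂ν) ∈ Metric.closedBall 0 |C| := fun ν hν => by
    have := hν.1
    rw [mem_closedBall_zero_iff, pi_norm_le_iff_of_nonneg (abs_nonneg C)]
    intro j
    have := norm_integral_le_of_norm_le_const (μ := ν) (f := g j.1 j.2)
      (.of_forall fun z => hC j.1 j.2 z)
    rw [probReal_univ, mul_one] at this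
    exact this.trans (le_abs_self C)
  refine ⟨Fin N × Fin k, inferInstance, fun j => g j.1 j.2, C, δ, hδ, fun j => hg _ _,
    fun j => hC _ _, fun ν ν' hν hν' hclose => ?_⟩
  have hmid := (hunif _ (hball ν hν) _ (hball ν' hν') ((dist_pi_lt_iff hδ).mpr hclose)).le
  rw [Real.dist_eq] at hmid
  rw [abs_le] at hmid ⊢
  have h := abs_le.mp (happrox ν hν)
  have h' := abs_le.mp (happrox ν' hν')
  constructor <;> linarith

/- Under the product of the cell laws of `ν` the empirical measure concentrates around the cell
average of `ν`, and the entropy of this product relative to the law of the sample is at most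
`n * KLdiv ν (unif01.prod μ)`. -/
theorem exists_neg_div_le_log_measureReal {X : Type*} [TopologicalSpace X] [MeasurableSpace X]
    [BorelSpace X] [SecondCountableTopology X] (μ : Measure X) [IsProbabilityMeasure μ]
    {T : Measure (ℝ × X) → ℝ} (hT : IsPolyApproximable T) {ν : Measure (ℝ × X)} (hν : inTM ν)
    (hk : KLdiv ν (unif01.prod μ) ≠ ⊤) {ε : ℝ} (hε : 0 < ε) :
    ∃ D : ℝ, ∀ (n : ℕ) (τ : ℝ → Fin n), IsEquipartition unif01 τ → D < n →
      (∀ ν', inTM ν' → ν'.map (Prod.map τ id) = ν.map (Prod.map τ id) → |T ν' - T ν| ≤ ε) →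
      ∃ E : Set (Fin n → X), (∀ x ∈ E, |T (empiricalMeasure unif01 τ x) - T ν| ≤ 2 * ε) ∧
        0 < (Measure.pi fun _ : Fin n => μ).real E ∧
        -((n * (KLdiv ν (unif01.prod μ)).toReal + Real.log 2) / (1 - D / n)) ≤
          Real.log ((Measure.pi fun _ : Fin n => μ).real E) := by
  obtain ⟨ι, _, g, C, δ, hδ, hg, hC, hTg⟩ := hT.exists_abs_sub_le hε
  refine ⟨Fintype.card ι * (C ^ 2 / δ ^ 2), fun n τ hτ hn hτν => ?_⟩
  have := hν.1
  have hfst : MeasurePreserving Prod.fst ν unif01 := ⟨measurable_fst, hν.2⟩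
  have := hτ.isProbabilityMeasure_cellLaw hfst
  have hp : 0 < 1 - Fintype.card ι * (C ^ 2 / δ ^ 2) / n := by
    rwa [sub_pos, div_lt_one hτ.natCast_pos]
  have hpE := hτ.one_sub_le_measureReal_pi_cellLaw hfst (fun j => (hg j).measurable) hC hδ
  rw [← mul_div_assoc] at hpE
  rw [KLdiv_eq_klDiv] at hk ⊢
  have hentropy := hτ.entropyBound_pi_cellLaw hfst μ hk
  have hE := hτ.measurableSet_forall_abs_sub_lt (fun j => (hg j).measurable) hC
    (fun j => ∫ z, g j z ∂(cellAveraged unif01 τ ν)) δ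
  refine ⟨_, fun x hx => ?_, hentropy.measureReal_pos hE (hp.trans_le hpE),
    hentropy.neg_div_le_log hE hp hpE⟩
  have havg : inTM (cellAveraged unif01 τ ν) := by
    have hmap := hτ.map_fst_cellAveraged hfst
    refine ⟨?_, hmap⟩
    have : IsProbabilityMeasure ((cellAveraged unif01 τ ν).map Prod.fst) := by
      rw [hmap]
      infer_instance
    exact Measure.isProbabilityMeasure_of_map Prod.fst
  calc |T (empiricalMeasure unif01 τ x) - T ν|
      ≤ |T (empiricalMeasure unif01 τ x) - T (cellAveraged unif01 τ ν)| +
          |T (cellAveraged unif01 τ ν) - T ν| := abs_sub_le _ _ _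
    _ ≤ ε + ε := add_le_add (hTg _ _ (inTM_empiricalMeasure hτ.measurable x) havg hx)
        (hτν _ havg (hτ.map_cellAveraged hfst))
    _ = 2 * ε := (two_mul ε).symm

/-! ### The large deviation principle for functionals of the empirical measure -/

/-- The statistics `S n` are, up to errors tending uniformly to zero, the values of `T` at empirical
measures along equipartitions of `[0,1]` into `n` cells, and these partitions are so fine that
`T ν` asymptotically depends on the first coordinate only through its cell. -/
def IsAsymptoticallyEmpirical {X : Type*} [MeasurableSpace X] (T : Measure (ℝ × X) → ℝ)
    (S : ∀ n, (Fin n → X) → ℝ) : Prop :=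
  ∀ ε > 0, ∀ᶠ n : ℕ in atTop, ∃ τ : ℝ → Fin n, IsEquipartition unif01 τ ∧
    (∀ x, |S n x - T (empiricalMeasure unif01 τ x)| ≤ ε) ∧
    ∀ ν ν', inTM ν → inTM ν' → ν'.map (Prod.map τ id) = ν.map (Prod.map τ id) → |T ν' - T ν| ≤ ε

theorem coe_inv_natCast_nonneg (n : ℕ) : 0 ≤ (((n : ℝ)⁻¹ : ℝ) : EReal) :=
  EReal.coe_nonneg.mpr (by positivity)

theorem le_inv_mul_log_measure {Ω : Type*} [MeasurableSpace Ω] {P : Measure Ω}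
    [IsFiniteMeasure P] {E : Set Ω} (hE : 0 < P.real E) {a : ℝ} (ha : a ≤ Real.log (P.real E))
    (n : ℕ) : (((n : ℝ)⁻¹ * a : ℝ) : EReal) ≤ (((n : ℝ)⁻¹ : ℝ) : EReal) * ENNReal.log (P E) := by
  rw [← ofReal_measureReal, ENNReal.log_ofReal_of_pos hE, ← EReal.coe_mul, EReal.coe_le_coe_iff]
  gcongr

theorem inv_mul_log_le_of_le_ofReal {p : ℝ≥0∞} {b : ℝ} (hb : 0 < b) (hp : p ≤ ENNReal.ofReal b)
    (n : ℕ) :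
    (((n : ℝ)⁻¹ : ℝ) : EReal) * ENNReal.log p ≤ (((n : ℝ)⁻¹ * Real.log b : ℝ) : EReal) := by
  rw [EReal.coe_mul, ← ENNReal.log_ofReal_of_pos hb]
  exact mul_le_mul_of_nonneg_left (ENNReal.log_monotone hp) (coe_inv_natCast_nonneg n)

namespace IsAsymptoticallyEmpirical

section Congr

variable {X : Type*} [MeasurableSpace X] {T : Measure (ℝ × X) → ℝ} {S S' : ∀ n, (Fin n → X) → ℝ}

theorem congr (hS : IsAsymptoticallyEmpirical T S)
    (hSS' : ∀ ε > 0, ∀ᶠ n : ℕ in atTop, ∀ x, |S' n x - S n x| ≤ ε) :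
    IsAsymptoticallyEmpirical T S' := by
  intro ε hε
  filter_upwards [hS _ (half_pos hε), hSS' _ (half_pos hε)] with n ⟨τ, hτ, hSτ, hTτ⟩ hn
  refine ⟨τ, hτ, fun x => ?_, fun ν ν' hν hν' h => (hTτ ν ν' hν hν' h).trans (half_le_self hε.le)⟩
  linarith [abs_sub_le (S' n x) (S n x) (T (empiricalMeasure unif01 τ x)), hSτ x, hn x]

end Congr

variable {X : Type*} [MeasurableSpace X] {μ : Measure X} {T : Measure (ℝ × X) → ℝ}
  {S : ∀ n, (Fin n → X) → ℝ} {F : Set ℝ}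

section LowerBound

variable [IsProbabilityMeasure μ] [TopologicalSpace X] [BorelSpace X] [SecondCountableTopology X]

theorem neg_KLdiv_le_liminf (hT : IsPolyApproximable T) (hS : IsAsymptoticallyEmpirical T S)
    {ν : Measure (ℝ × X)} (hν : inTM ν) (hk : KLdiv ν (unif01.prod μ) ≠ ⊤)
    (hνF : T ν ∈ interior F) :
    ((-(KLdiv ν (unif01.prod μ)).toReal : ℝ) : EReal) ≤
      atTop.liminf fun n : ℕ => (((n : ℝ)⁻¹ : ℝ) : EReal) *
        ENNReal.log ((Measure.pi fun _ : Fin n => μ) {x | S n x ∈ F}) := by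
  obtain ⟨r, hr, hrF⟩ := Metric.isOpen_iff.mp isOpen_interior _ hνF
  have hε : 0 < r / 4 := by positivity
  obtain ⟨D, hlower⟩ := exists_neg_div_le_log_measureReal μ hT hν hk hε
  set k := (KLdiv ν (unif01.prod μ)).toReal
  have hlim : Tendsto (fun n : ℕ => (((n : ℝ)⁻¹ * -((n * k + Real.log 2) / (1 - D / n)) : ℝ) :
      EReal)) atTop (nhds ((-k : ℝ) : EReal)) := by
    refine (continuous_coe_real_ereal.tendsto _).comp ?_
    have hreal := (((tendsto_const_div_atTop_nhds_zero_nat (Real.log 2)).const_add k).div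
      ((tendsto_const_div_atTop_nhds_zero_nat D).const_sub 1) (by norm_num)).neg
    rw [add_zero, sub_zero, div_one] at hreal
    refine hreal.congr' ?_
    filter_upwards [eventually_gt_atTop 0] with n hn
    have : (n : ℝ) ≠ 0 := by exact_mod_cast hn.ne'
    simp only [Pi.div_apply]
    field_simp
  rw [← hlim.liminf_eq]
  refine liminf_le_liminf ?_
  filter_upwards [hS _ hε, eventually_gt_atTop ⌈D⌉₊] with n ⟨τ, hτ, hSτ, hTτ⟩ hnD
  obtain ⟨E, hET, hEpos, hElog⟩ := hlower n τ hτ ((Nat.le_ceil D).trans_lt (Nat.cast_lt.mpr hnD))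
    fun ν' hν' => hTτ ν ν' hν hν'
  refine (le_inv_mul_log_measure hEpos hElog n).trans (mul_le_mul_of_nonneg_left
    (ENNReal.log_monotone (measure_mono fun x hx => ?_)) (coe_inv_natCast_nonneg n))
  suffices S n x ∈ Metric.ball (T ν) r from
    (interior_subset (hrF this) : S n x ∈ F)
  rw [Metric.mem_ball, Real.dist_eq]
  linarith [abs_sub_le (S n x) (T (empiricalMeasure unif01 τ x)) (T ν), hSτ x, hET x hx]

theorem neg_iInf_rateTM_le_liminf (hT : IsPolyApproximable T)
    (hS : IsAsymptoticallyEmpirical T S) :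
    -(⨅ t ∈ interior F, (rateTM μ T t : EReal)) ≤
      atTop.liminf fun n : ℕ => (((n : ℝ)⁻¹ : ℝ) : EReal) *
        ENNReal.log ((Measure.pi fun _ : Fin n => μ) {x | S n x ∈ F}) := by
  rw [EReal.neg_le]
  refine le_iInf₂ fun t ht => EReal.le_of_forall_lt_iff_le.mp fun r hr => ?_
  have hr0 : 0 ≤ r := EReal.coe_nonneg.mp ((EReal.coe_ennreal_nonneg _).trans hr.le)
  have hrT : rateTM μ T t < ENNReal.ofReal r := by
    rwa [← EReal.coe_ennreal_lt_coe_ennreal_iff, EReal.coe_ennreal_ofReal, max_eq_left hr0]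
  obtain ⟨⟨ν, hν, hk, rfl⟩, hνr⟩ := iInf_lt_iff.mp hrT
  rw [EReal.neg_le]
  refine le_trans ?_ (neg_KLdiv_le_liminf hT hS hν hk ht)
  exact_mod_cast neg_le_neg (ENNReal.toReal_le_of_le_ofReal hr0 hνr.le)

end LowerBound

theorem limsup_le_neg (hS : IsAsymptoticallyEmpirical T S) {c : ℝ}
    (hc : HasExponentialBound μ T (closure F) c (setTM X)) :
    atTop.limsup (fun n : ℕ => (((n : ℝ)⁻¹ : ℝ) : EReal) *
      ENNReal.log ((Measure.pi fun _ : Fin n => μ) {x | S n x ∈ F})) ≤ ((-c : ℝ) : EReal) := by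
  obtain ⟨N, ε, hε, hbound⟩ := hc
  have hlim : Tendsto (fun n : ℕ => (((n : ℝ)⁻¹ * Real.log ((N + 1) * Real.exp (-(n * c))) : ℝ) :
      EReal)) atTop (nhds ((-c : ℝ) : EReal)) := by
    refine (continuous_coe_real_ereal.tendsto _).comp ?_
    have hreal := (tendsto_const_div_atTop_nhds_zero_nat (Real.log (N + 1))).add_const (-c)
    rw [zero_add] at hreal
    refine hreal.congr' ?_
    filter_upwards [eventually_gt_atTop 0] with n hn
    have : (n : ℝ) ≠ 0 := by exact_mod_cast hn.ne'
    rw [Real.log_mul (by positivity) (Real.exp_pos _).ne', Real.log_exp]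
    field_simp
  rw [← hlim.limsup_eq]
  refine limsup_le_limsup ?_
  filter_upwards [hS _ hε] with n ⟨τ, hτ, hSτ, _⟩
  refine inv_mul_log_le_of_le_ofReal (by positivity) ?_ n
  calc (Measure.pi fun _ : Fin n => μ) {x | S n x ∈ F}
      ≤ N * ENNReal.ofReal (Real.exp (-(n * c))) := by
        refine (measure_mono fun x hx => ?_).trans (hbound n τ hτ (S n) hSτ)
        exact ⟨⟨⟨_, (inTM_empiricalMeasure hτ.measurable x).1⟩,
          inTM_empiricalMeasure hτ.measurable x, rfl⟩, subset_closure hx⟩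
    _ ≤ ENNReal.ofReal ((N + 1) * Real.exp (-(n * c))) := by
        rw [← ENNReal.ofReal_natCast, ← ENNReal.ofReal_mul N.cast_nonneg]
        gcongr
        exact (lt_add_one _).le

end IsAsymptoticallyEmpirical

theorem inv_mul_log_le_zero {p : ℝ≥0∞} (hp : p ≤ 1) (n : ℕ) :
    (((n : ℝ)⁻¹ : ℝ) : EReal) * ENNReal.log p ≤ 0 := by
  simpa using inv_mul_log_le_of_le_ofReal one_pos (by simpa using hp) n

section LDP

variable {X : Type*} [MetricSpace X] [CompactSpace X] [MeasurableSpace X] [BorelSpace X]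
  (μ : Measure X) [IsProbabilityMeasure μ] {T : Measure (ℝ × X) → ℝ} {S : ∀ n, (Fin n → X) → ℝ}

theorem IsAsymptoticallyEmpirical.limsup_le_neg_iInf_rateTM (hT : IsPolyApproximable T)
    (hS : IsAsymptoticallyEmpirical T S) (F : Set ℝ) :
    atTop.limsup (fun n : ℕ => (((n : ℝ)⁻¹ : ℝ) : EReal) *
      ENNReal.log ((Measure.pi fun _ : Fin n => μ) {x | S n x ∈ F})) ≤
        -(⨅ t ∈ closure F, (rateTM μ T t : EReal)) := by
  rw [EReal.le_neg, ← EReal.ge_of_forall_gt_iff_ge]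
  intro c hc
  rw [EReal.le_neg, ← EReal.coe_neg]
  rcases lt_or_ge c 0 with hc0 | hc0
  · refine (limsup_le_of_le (h := .of_forall fun n => inv_mul_log_le_zero prob_le_one n)).trans ?_
    exact_mod_cast (neg_pos.mpr hc0).le
  · refine hS.limsup_le_neg (HasExponentialBound.setTM hT isClosed_closure fun ν hν hνF => ?_)
    refine lt_of_lt_of_le ?_ (rateTM_le (T := T) μ hν)
    rw [← EReal.coe_ennreal_lt_coe_ennreal_iff, EReal.coe_ennreal_ofReal, max_eq_left hc0]
    exact hc.trans_le (iInf₂_le _ hνF)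

theorem IsPolyApproximable.satisfiesLDP (hT : IsPolyApproximable T)
    (hS : IsAsymptoticallyEmpirical T S) :
    SatisfiesLDP (fun n => Measure.pi fun _ : Fin n => μ) S (rateTM μ T) :=
  ⟨fun _ hc => isCompact_rateTM_le μ hT hc, fun F _ =>
    ⟨hS.neg_iInf_rateTM_le_liminf hT, hS.limsup_le_neg_iInf_rateTM μ hT F⟩⟩

end LDP

/-! ### Approximation by sums of product functions -/

section ProductFunctions

variable {ι Y : Type*} [TopologicalSpace Y]

/-- The functions `y ↦ ∏ a, g a (y a)` on a power of `Y` with continuous factors. -/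
def productFunctions (ι Y : Type*) [Fintype ι] [TopologicalSpace Y] :
    Submonoid C(ι → Y, ℝ) where
  carrier := {F | ∃ g : ι → C(Y, ℝ), ∀ y, F y = ∏ a, g a (y a)}
  one_mem' := ⟨1, fun y => by simp⟩
  mul_mem' := by
    rintro F F' ⟨g, hg⟩ ⟨g', hg'⟩
    exact ⟨g * g', fun y => by simp [hg, hg', Finset.prod_mul_distrib]⟩

theorem smul_mem_productFunctions [Fintype ι] [Nonempty ι] (c : ℝ) {F : C(ι → Y, ℝ)}
    (hF : F ∈ productFunctions ι Y) : c • F ∈ productFunctions ι Y := by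
  classical
  obtain ⟨g, hg⟩ := hF
  obtain ⟨a₀⟩ := ‹Nonempty ι›
  refine ⟨Function.update g a₀ (c • g a₀), fun y => ?_⟩
  rw [ContinuousMap.smul_apply, hg, smul_eq_mul,
    ← Finset.mul_prod_erase _ _ (Finset.mem_univ a₀),
    ← Finset.mul_prod_erase _ (fun a => Function.update g a₀ (c • g a₀) a (y a))
      (Finset.mem_univ a₀), Function.update_self, ContinuousMap.smul_apply, smul_eq_mul, mul_assoc]
  congr 2
  exact Finset.prod_congr rfl fun a ha => by
    rw [Function.update_of_ne (Finset.ne_of_mem_erase ha)]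

theorem separatesPoints_adjoin_productFunctions [Fintype ι] [T35Space Y] :
    (Algebra.adjoin ℝ (productFunctions ι Y : Set C(ι → Y, ℝ))).SeparatesPoints := by
  classical
  intro x y hxy
  obtain ⟨b, hb⟩ := Function.ne_iff.mp hxy
  obtain ⟨f, hf, hfb⟩ := separatesPoints_continuous_of_t35Space hb
  let F : C(ι → Y, ℝ) := ⟨fun z => f (z b), Continuous.comp hf (continuous_apply b)⟩
  refine ⟨F, ⟨F, Algebra.subset_adjoin ⟨Function.update 1 b ⟨f, hf⟩, fun z => ?_⟩, rfl⟩, hfb⟩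
  rw [Finset.prod_eq_single b (fun a _ hab => by simp [Function.update_of_ne hab]) (by simp),
    Function.update_self]
  rfl

theorem exists_sum_prod_eq_of_mem_adjoin_productFunctions [Fintype ι] [Nonempty ι]
    {F : C(ι → Y, ℝ)} (hF : F ∈ Algebra.adjoin ℝ (productFunctions ι Y : Set C(ι → Y, ℝ))) :
    ∃ (N : ℕ) (g : Fin N → ι → C(Y, ℝ)), ∀ y, F y = ∑ l, ∏ a, g l a (y a) := by
  rw [← Subalgebra.mem_toSubmodule, Algebra.adjoin_eq_span, Submonoid.closure_eq,
    Submodule.mem_span_set'] at hF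
  obtain ⟨N, c, G, rfl⟩ := hF
  choose g hg using fun l => smul_mem_productFunctions (c l) (G l).2
  exact ⟨N, g, fun y => by simp only [ContinuousMap.sum_apply, hg]⟩

theorem exists_abs_sub_sum_prod_le [Fintype ι] [Nonempty ι] [CompactSpace Y] [T2Space Y]
    {F : (ι → Y) → ℝ} (hF : Continuous F) {ε : ℝ} (hε : 0 < ε) :
    ∃ (N : ℕ) (g : Fin N → ι → C(Y, ℝ)) (C : ℝ), 1 ≤ C ∧ (∀ l a y, |g l a y| ≤ C) ∧
      ∀ y, |F y - ∑ l, ∏ a, g l a (y a)| ≤ ε := by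
  obtain ⟨⟨G, hG⟩, hGF⟩ :=
    ContinuousMap.exists_mem_subalgebra_near_continuous_of_separatesPoints _
      separatesPoints_adjoin_productFunctions F hF ε hε
  obtain ⟨N, g, hg⟩ := exists_sum_prod_eq_of_mem_adjoin_productFunctions hG
  obtain ⟨C, hC⟩ := (Set.finite_range fun p : Fin N × ι => ‖g p.1 p.2‖).bddAbove
  refine ⟨N, g, max 1 C, le_max_left _ _, fun l a y => ?_, fun y => ?_⟩
  · exact ((g l a).norm_coe_le_norm y).trans ((hC ⟨(l, a), rfl⟩).trans (le_max_right _ _))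
  · rw [← hg, abs_sub_comm]
    exact (hGF y).le

end ProductFunctions

/-! ### The tree functional and its continuity in the kernel -/

open Function in
theorem HasDegreeLE.onFun {α β : Type*} [MeasurableSpace α] [MeasurableSpace β] {ν : Measure α}
    {θ : Measure β} {K : α → α → ℝ} {M : ℝ≥0} {f : β → α} (hK : HasDegreeLE ν K M)
    (hf : MeasurePreserving f θ ν) : HasDegreeLE θ (K.onFun f) M where
  measurable := hK.measurable.comp (hf.measurable.prodMap hf.measurable)
  lintegral_left_le x := (hf.lintegral_comp
    (hK.measurable.comp measurable_prodMk_right).enorm).trans_le (hK.lintegral_left_le (f x))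
  lintegral_right_le x := (hf.lintegral_comp
    (hK.measurable.comp measurable_prodMk_left).enorm).trans_le (hK.lintegral_right_le (f x))

section Lift

variable {α X : Type*} [MeasurableSpace α] [MeasurableSpace X] [StandardBorelSpace X] [Nonempty X]
  {η : Measure α} {ν : Measure (α × X)} {K K' : α → α → ℝ} {M : ℝ≥0} {g : α × X → ℝ}

theorem kernelOp_onFun_fst [IsFiniteMeasure ν] (hν : MeasurePreserving Prod.fst ν η)
    (hK : HasDegreeLE η K M) (hg : Measurable g) (hg1 : ∀ z, |g z| ≤ 1) (z : α × X) :
    kernelOp ν (K.onFun Prod.fst) g z =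
      kernelOp η K (fun a => ∫ y, g (a, y) ∂(ν.condKernel a)) z.1 := by
  have : IsFiniteMeasure η := hν.map_eq ▸ inferInstance
  have hdis : η.compProd ν.condKernel = ν := by
    rw [← hν.map_eq]
    exact ν.disintegrate _
  have hint : Integrable (fun y => K y.1 z.1 * g y) (η.compProd ν.condKernel) := by
    rw [hdis]
    exact (hK.onFun hν).integrable_left_mul z hg hg1
  calc kernelOp ν (K.onFun Prod.fst) g z
      = ∫ y, K y.1 z.1 * g y ∂(η.compProd ν.condKernel) := by rw [hdis]; rfl
    _ = ∫ a, ∫ y, K a z.1 * g (a, y) ∂(ν.condKernel a) ∂η := Measure.integral_compProd hint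
    _ = _ := by simp_rw [kernelOp, integral_const_mul]

theorem OpDistLE.onFun_fst {δ : ℝ} [IsFiniteMeasure ν] (h : OpDistLE η K K' δ)
    (hν : MeasurePreserving Prod.fst ν η) (hK : HasDegreeLE η K M) (hK' : HasDegreeLE η K' M) :
    OpDistLE ν (K.onFun Prod.fst) (K'.onFun Prod.fst) δ := by
  intro g hg hg1
  set G : α → ℝ := fun a => ∫ y, g (a, y) ∂(ν.condKernel a)
  have hG : Measurable G :=
    (hg.stronglyMeasurable.integral_kernel_prod_right' (κ := ν.condKernel)).measurable
  have hG1 : ∀ a, |G a| ≤ 1 := fun a => by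
    simpa using norm_integral_le_of_norm_le_const (μ := ν.condKernel a) (f := fun y => g (a, y))
      (.of_forall fun y => hg1 (a, y))
  have : IsFiniteMeasure η := hν.map_eq ▸ inferInstance
  have hmeas : Measurable fun a => |kernelOp η K G a - kernelOp η K' G a| :=
    ((hK.measurable_kernelOp hG).sub (hK'.measurable_kernelOp hG)).abs
  simp_rw [kernelOp_onFun_fst hν hK hg hg1, kernelOp_onFun_fst hν hK' hg hg1]
  rw [← integral_map hν.measurable.aemeasurable (hmeas.aestronglyMeasurable), hν.map_eq]
  exact h G hG hG1

end Lift

section L1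

variable {α : Type*} [MeasurableSpace α] {ν : Measure α} {K K' : α → α → ℝ} {M : ℝ≥0}

theorem HasDegreeLE.integrable [IsFiniteMeasure ν] (hK : HasDegreeLE ν K M) :
    Integrable (Function.uncurry K) (ν.prod ν) := by
  refine ⟨hK.measurable.aestronglyMeasurable, ?_⟩
  rw [HasFiniteIntegral, lintegral_prod _ hK.measurable.enorm.aemeasurable]
  exact (lintegral_mono fun x => hK.lintegral_right_le x).trans_lt (by simp; finiteness)

theorem OpDistLE.of_integral_abs_sub_le [IsFiniteMeasure ν] {δ : ℝ} (hK : HasDegreeLE ν K M)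
    (hK' : HasDegreeLE ν K' M)
    (hδ : ∫ z : α × α, |K z.1 z.2 - K' z.1 z.2| ∂(ν.prod ν) ≤ δ) : OpDistLE ν K K' δ := by
  intro g hg hg1
  have hint : Integrable (fun z : α × α => |K z.1 z.2 - K' z.1 z.2|) (ν.prod ν) :=
    (hK.integrable.sub hK'.integrable).abs
  refine le_trans ?_ hδ
  rw [integral_prod_symm _ hint]
  refine integral_mono_of_nonneg (.of_forall fun x => abs_nonneg _) hint.integral_prod_right
    (.of_forall fun x => ?_)
  have hKg := hK.integrable_left_mul x hg hg1
  have hKg' := hK'.integrable_left_mul x hg hg1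
  calc |kernelOp ν K g x - kernelOp ν K' g x|
      = |∫ y, (K y x * g y - K' y x * g y) ∂ν| := by rw [integral_sub hKg hKg']; rfl
    _ ≤ ∫ y, |K y x * g y - K' y x * g y| ∂ν := abs_integral_le_integral_abs
    _ ≤ ∫ y, |K y x - K' y x| ∂ν := by
        refine integral_mono (hKg.sub hKg').abs
          ((hK.integrable_left x).sub (hK'.integrable_left x)).abs fun y => ?_
        dsimp only
        rw [← sub_mul, abs_mul]
        exact mul_le_of_le_one_right (abs_nonneg _) (hg1 y)

end L1

/-- The functional `ν ↦ E[φ(B₀,…,B_m) ∏ W(A_a,A_b)]` for `(A_a,B_a)` i.i.d. of law `ν`, the product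
running over the edges of a recursive tree. -/
noncomputable def RecTree.functional {X : Type*} [MeasurableSpace X] {m : ℕ} (t : RecTree m)
    (W : ℝ → ℝ → ℝ) (φ : (Fin (m + 1) → X) → ℝ) (ν : Measure (ℝ × X)) : ℝ :=
  ∫ z, φ (fun a => (z a).2) * t.weight (W.onFun Prod.fst) z ∂(Measure.pi fun _ => ν)

theorem inTM.measurePreserving_fst {X : Type*} [MeasurableSpace X] {ν : Measure (ℝ × X)}
    (hν : inTM ν) : MeasurePreserving Prod.fst ν unif01 :=
  ⟨measurable_fst, hν.2⟩

namespace RecTree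

variable {X : Type*} [MetricSpace X] [CompactSpace X] [MeasurableSpace X] [BorelSpace X]
  {m : ℕ} {φ : (Fin (m + 1) → X) → ℝ} {M : ℝ≥0} {ν : Measure (ℝ × X)} {W : ℝ → ℝ → ℝ}

theorem abs_functional_sub_sum_leafIntegral_le (t : RecTree m) (hW : HasDegreeLE unif01 W M)
    (hφ : Continuous φ) {N : ℕ} {g : Fin N → Fin (m + 1) → C(X, ℝ)} {C : ℝ}
    (hC : ∀ l a y, |g l a y| ≤ C) {ε : ℝ} (hφg : ∀ y, |φ y - ∑ l, ∏ a, g l a (y a)| ≤ ε)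
    (hν : inTM ν) :
    |t.functional W φ ν - ∑ l, t.leafIntegral ν (W.onFun Prod.fst) fun a z => g l a z.2| ≤
      ε * M ^ m := by
  have : IsProbabilityMeasure ν := hν.1
  have hK := hW.onFun hν.measurePreserving_fst
  obtain ⟨B, hB⟩ := isCompact_univ.exists_bound_of_continuousOn hφ.continuousOn
  have hproj : Measurable fun (z : Fin (m + 1) → ℝ × X) a => (z a).2 := by fun_prop
  have hφm : Measurable fun z : Fin (m + 1) → ℝ × X => φ fun a => (z a).2 :=
    hφ.measurable.comp hproj
  have hprod : ∀ l, Measurable fun z : Fin (m + 1) → ℝ × X => ∏ a, g l a (z a).2 := fun l =>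
    (continuous_finsetProd _ fun a _ => (g l a).continuous.comp
      (continuous_apply a)).measurable.comp hproj
  have hprodC : ∀ l (z : Fin (m + 1) → ℝ × X), |∏ a, g l a (z a).2| ≤ C ^ (m + 1) := fun l z => by
    rw [Finset.abs_prod]
    simpa using Finset.prod_le_prod (s := Finset.univ) (fun a _ => abs_nonneg (g l a (z a).2))
      fun a _ => hC l a _
  have hint := fun l => integrable_mul_weight hK t (hprod l) (hprodC l)
  have hsum : ∑ l, t.leafIntegral ν (W.onFun Prod.fst) (fun a z => g l a z.2) =
      ∫ z, (∑ l, ∏ a, g l a (z a).2) * t.weight (W.onFun Prod.fst) z ∂(Measure.pi fun _ => ν) := by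
    simp_rw [Finset.sum_mul]
    rw [integral_finsetSum _ fun l _ => hint l]
    exact Finset.sum_congr rfl fun l _ => (integral_prod_mul_weight_eq_leafIntegral hK t
      (fun a => (g l a).continuous.measurable.comp measurable_snd) fun a z => hC l a _).symm
  rw [hsum, functional, ← integral_sub (integrable_mul_weight hK t hφm fun z => hB _ trivial)
    (by simpa only [Finset.sum_mul] using integrable_finsetSum _ fun l _ => hint l)]
  simp_rw [← sub_mul]
  exact abs_integral_mul_weight_le hK t
    (hφm.sub (Finset.measurable_fun_sum _ fun l _ => hprod l)) fun z => hφg _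

theorem exists_abs_functional_sub_le (t : RecTree m) (M : ℝ≥0) (hφ : Continuous φ) {ε : ℝ}
    (hε : 0 < ε) :
    ∃ δ > 0, ∀ W W' : ℝ → ℝ → ℝ, HasDegreeLE unif01 W M → HasDegreeLE unif01 W' M →
      OpDistLE unif01 W W' δ → ∀ ν : Measure (ℝ × X), inTM ν →
        |t.functional W φ ν - t.functional W' φ ν| ≤ ε := by
  obtain ⟨N, g, C, hC1, hC, hφg⟩ := exists_abs_sub_sum_prod_le hφ
    (ε := ε / 3 / (M ^ m + 1)) (by positivity)
  obtain ⟨L, hL, hleaf⟩ := t.exists_abs_leafIntegral_sub_le (α := ℝ × X) M hC1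
  have hMε : ε / 3 / (M ^ m + 1) * M ^ m ≤ ε / 3 := by
    rw [div_mul_eq_mul_div, div_le_iff₀ (by positivity)]
    gcongr
    exact (lt_add_one _).le
  have hNε : N * (L * (ε / 3 / (N * L + 1))) ≤ ε / 3 := by
    rw [← mul_assoc, mul_div_assoc', div_le_iff₀ (by positivity), mul_comm]
    gcongr
    exact (lt_add_one _).le
  refine ⟨ε / 3 / (N * L + 1), by positivity, fun W W' hW hW' hδ ν hν => ?_⟩
  have : IsProbabilityMeasure ν := hν.1
  have : Nonempty X := (nonempty_of_isProbabilityMeasure ν).map Prod.snd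
  have hfst := hν.measurePreserving_fst
  have hsum : |∑ l, t.leafIntegral ν (W.onFun Prod.fst) (fun a z => g l a z.2) -
      ∑ l, t.leafIntegral ν (W'.onFun Prod.fst) (fun a z => g l a z.2)| ≤ ε / 3 := by
    rw [← Finset.sum_sub_distrib]
    refine (Finset.abs_sum_le_sum_abs _ _).trans ((Finset.sum_le_card_nsmul _ _
      (L * (ε / 3 / (N * L + 1))) fun l _ => ?_).trans (by simpa using hNε))
    have hgm : ∀ a, Measurable fun z : ℝ × X => g l a z.2 := fun a =>
      (g l a).continuous.measurable.comp measurable_snd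
    simpa using hleaf ν _ _ (ε / 3 / (N * L + 1)) 0 _ _ (hW.onFun hfst) (hW'.onFun hfst)
      (hδ.onFun_fst hfst hW hW') hgm hgm (fun a z => hC l a _) (fun a z => hC l a _) (by simp)
  have hWg := abs_le.mp (t.abs_functional_sub_sum_leafIntegral_le hW hφ hC hφg hν)
  have hWg' := abs_le.mp (t.abs_functional_sub_sum_leafIntegral_le hW' hφ hC hφg hν)
  rw [abs_le] at hsum ⊢
  constructor <;> linarith

end RecTree

/-! ### Polynomial approximability of the tree functional -/

/-- The truncation of a real number to `[-R, R]`. -/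
noncomputable def clamp (R : ℝ≥0) (a : ℝ) : ℝ :=
  projIcc (-(R : ℝ)) R (neg_le_self R.2) a

theorem continuous_clamp (R : ℝ≥0) : Continuous (clamp R) :=
  continuous_subtype_val.comp continuous_projIcc

theorem abs_clamp_le (R : ℝ≥0) (a : ℝ) : |clamp R a| ≤ R :=
  abs_le.mpr (projIcc (-(R : ℝ)) R (neg_le_self R.2) a).2

theorem clamp_of_abs_le {R : ℝ≥0} {a : ℝ} (h : |a| ≤ R) : clamp R a = a := by
  rw [clamp, projIcc_of_mem _ (abs_le.mp h)]

theorem abs_clamp_sub_clamp_le (R : ℝ≥0) (a b : ℝ) : |clamp R a - clamp R b| ≤ |a - b| :=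
  abs_projIcc_sub_projIcc _

theorem abs_clamp_le_abs (R : ℝ≥0) (a : ℝ) : |clamp R a| ≤ |a| := by
  simpa [clamp_of_abs_le (R := R) (a := 0) (by simp)] using abs_clamp_sub_clamp_le R a 0

section Truncation

variable {α : Type*} [MeasurableSpace α] {ν : Measure α} {K : α → α → ℝ} {M : ℝ≥0}

theorem HasDegreeLE.clamp (hK : HasDegreeLE ν K M) (R : ℝ≥0) :
    HasDegreeLE ν (fun x y => clamp R (K x y)) M := by
  have henorm : ∀ x y, ‖_root_.clamp R (K x y)‖ₑ ≤ ‖K x y‖ₑ := fun x y =>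
    enorm_le_iff_norm_le.mpr (abs_clamp_le_abs R _)
  exact ⟨(continuous_clamp R).measurable.comp hK.measurable,
    fun x => (lintegral_mono fun y => henorm y x).trans (hK.lintegral_left_le x),
    fun x => (lintegral_mono fun y => henorm x y).trans (hK.lintegral_right_le x)⟩

theorem HasDegreeLE.of_abs_le [IsProbabilityMeasure ν] (hK : Measurable (Function.uncurry K))
    (hM : ∀ x y, |K x y| ≤ M) : HasDegreeLE ν K M := by
  have henorm : ∀ x y, ‖K x y‖ₑ ≤ M := fun x y => enorm_le_coe.mpr (hM x y)
  exact ⟨hK, fun x => (lintegral_mono fun y => henorm y x).trans (by simp),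
    fun x => (lintegral_mono fun y => henorm x y).trans (by simp)⟩

theorem HasDegreeLE.tendsto_integral_abs_sub_clamp [IsFiniteMeasure ν] (hK : HasDegreeLE ν K M) :
    Tendsto (fun n : ℕ => ∫ z : α × α, |K z.1 z.2 - _root_.clamp n (K z.1 z.2)| ∂(ν.prod ν))
      atTop (nhds 0) := by
  rw [← integral_zero (α × α) ℝ (μ := ν.prod ν)]
  refine tendsto_integral_of_dominated_convergence (fun z : α × α => |K z.1 z.2| + |K z.1 z.2|)
    (fun n => (hK.integrable.sub (hK.clamp n).integrable).abs.aestronglyMeasurable)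
    (hK.integrable.abs.add hK.integrable.abs) (fun n => .of_forall fun z => ?_)
    (.of_forall fun z => tendsto_const_nhds.congr' ?_)
  · rw [Real.norm_eq_abs, abs_abs]
    exact (abs_sub _ _).trans (add_le_add_right (abs_clamp_le_abs _ _) _)
  · filter_upwards [eventually_ge_atTop ⌈|K z.1 z.2|⌉₊] with n hn
    have : |K z.1 z.2| ≤ (n : ℝ≥0) := by
      simpa using (Nat.le_ceil _).trans (Nat.cast_le.mpr hn)
    rw [clamp_of_abs_le this, sub_self, abs_zero]

theorem exists_continuous_integral_abs_sub_le [TopologicalSpace α] [NormalSpace (α × α)]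
    [BorelSpace (α × α)] [(ν.prod ν).WeaklyRegular] {R : ℝ≥0}
    (hK : Integrable (Function.uncurry K) (ν.prod ν)) (hR : ∀ x y, |K x y| ≤ R) {δ : ℝ}
    (hδ : 0 < δ) :
    ∃ K' : α → α → ℝ, Continuous (Function.uncurry K') ∧ (∀ x y, |K' x y| ≤ R) ∧
      ∫ z : α × α, |K z.1 z.2 - K' z.1 z.2| ∂(ν.prod ν) ≤ δ := by
  obtain ⟨g, hg, hgi⟩ := hK.exists_boundedContinuous_integral_sub_le hδ
  refine ⟨fun x y => _root_.clamp R (g (x, y)), (continuous_clamp R).comp g.continuous,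
    fun x y => abs_clamp_le R _, le_trans ?_ hg⟩
  refine integral_mono_of_nonneg (.of_forall fun z => abs_nonneg _) (hK.sub hgi).norm
    (.of_forall fun z => ?_)
  have hz := abs_clamp_sub_clamp_le R (K z.1 z.2) (g z)
  rwa [clamp_of_abs_le (hR z.1 z.2)] at hz

end Truncation

namespace IsPolyApproximable

variable {X : Type*} [TopologicalSpace X] [MeasurableSpace X] {T : Measure (ℝ × X) → ℝ}

theorem of_forall_abs_sub_le
    (h : ∀ ε > 0, ∃ T', IsPolyApproximable T' ∧ ∀ ν, inTM ν → |T ν - T' ν| ≤ ε) :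
    IsPolyApproximable T := by
  intro ε hε
  obtain ⟨T', hT', hTT'⟩ := h (ε / 2) (half_pos hε)
  obtain ⟨N, k, g, C, hg, hC, hgT'⟩ := hT' (ε / 2) (half_pos hε)
  refine ⟨N, k, g, C, hg, hC, fun ν hν => ?_⟩
  linarith [abs_sub_le (T ν) (T' ν) (∑ l, ∏ a, ∫ z, g l a z ∂ν), hTT' ν hν, hgT' ν hν]

end IsPolyApproximable

section Continuous

variable {X : Type*} [MetricSpace X] [CompactSpace X] [MeasurableSpace X] [BorelSpace X] {m : ℕ}

theorem isPolyApproximable_integral_pi {F : (Fin (m + 1) → ℝ × X) → ℝ} (hF : Continuous F) :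
    IsPolyApproximable fun ν : Measure (ℝ × X) => ∫ z, F z ∂(Measure.pi fun _ => ν) := by
  intro ε hε
  let r : ℝ × X → Icc (0 : ℝ) 1 × X := Prod.map (projIcc 0 1 zero_le_one) id
  have hr : Continuous r := continuous_projIcc.prodMap continuous_id
  let F' : (Fin (m + 1) → Icc (0 : ℝ) 1 × X) → ℝ := fun z => F fun a => ((z a).1, (z a).2)
  have hF' : Continuous F' := by fun_prop
  obtain ⟨N, g, C, -, hC, hFg⟩ := exists_abs_sub_sum_prod_le hF' hε
  obtain ⟨B, hB⟩ := isCompact_univ.exists_bound_of_continuousOn hF'.continuousOn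
  have hgr : ∀ l a, Continuous fun z => g l a (r z) := fun l a => (g l a).continuous.comp hr
  refine ⟨N, m + 1, fun l a z => g l a (r z), C, hgr, fun l a z => hC l a _, fun ν hν => ?_⟩
  have : IsProbabilityMeasure ν := hν.1
  have hFr : ∀ᵐ z ∂(Measure.pi fun _ : Fin (m + 1) => ν), F z = F' fun a => r (z a) := by
    have hmem : ∀ᵐ z ∂(Measure.pi fun _ : Fin (m + 1) => ν), ∀ a, (z a).1 ∈ Icc (0 : ℝ) 1 :=
      ae_all_iff.mpr fun a =>
        (Measure.quasiMeasurePreserving_eval (fun _ : Fin (m + 1) => ν) a).ae hν.ae_mem_Icc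
    filter_upwards [hmem] with z hz
    exact congrArg F (funext fun a => Prod.ext (by simp [r, projIcc_of_mem _ (hz a)]) rfl)
  have hF'int : Integrable (fun z => F' fun a => r (z a)) (Measure.pi fun _ => ν) :=
    integrable_of_abs_le (by fun_prop : Continuous fun z : Fin (m + 1) → ℝ × X =>
      F' fun a => r (z a)).measurable fun z => hB _ trivial
  have hgint : ∀ l, Integrable (fun z : Fin (m + 1) → ℝ × X => ∏ a, g l a (r (z a)))
      (Measure.pi fun _ => ν) := fun l =>
    Integrable.fintype_prod fun a => integrable_of_abs_le (hgr l a).measurable fun z => hC l a _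
  simp_rw [← integral_fintype_prod_eq_prod]
  rw [integral_congr_ae hFr, ← integral_finsetSum _ fun l _ => hgint l,
    ← integral_sub hF'int (integrable_finsetSum _ fun l _ => hgint l)]
  simpa using norm_integral_le_of_norm_le_const (μ := Measure.pi fun _ : Fin (m + 1) => ν)
    (f := fun z => F' (fun a => r (z a)) - ∑ l, ∏ a, g l a (r (z a)))
    (.of_forall fun z => hFg fun a => r (z a))

namespace RecTree

theorem continuous_weight {α : Type*} [TopologicalSpace α] {K : α → α → ℝ}
    (hK : Continuous (Function.uncurry K)) {m : ℕ} (t : RecTree m) : Continuous (t.weight K) := by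
  induction t with
  | single => exact continuous_const
  | attach t p ih =>
    have hedge : Continuous fun z : Fin (_ + 2) → α => (z (Fin.last _), z p.castSucc) := by fun_prop
    exact (ih.comp (continuous_pi fun a => continuous_apply _)).mul (hK.comp hedge)

theorem isPolyApproximable_functional (t : RecTree m) {W : ℝ → ℝ → ℝ} {M : ℝ≥0}
    (hW : HasDegreeLE unif01 W M) {φ : (Fin (m + 1) → X) → ℝ} (hφ : Continuous φ) :
    IsPolyApproximable (t.functional W φ) := by
  refine .of_forall_abs_sub_le fun ε hε => ?_
  obtain ⟨δ, hδ, hclose⟩ := t.exists_abs_functional_sub_le M hφ hε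
  obtain ⟨n, hn⟩ := (hW.tendsto_integral_abs_sub_clamp.eventually (ge_mem_nhds hδ)).exists
  refine ⟨_, ?_, hclose W _ hW (hW.clamp n) (.of_integral_abs_sub_le hW (hW.clamp n) hn)⟩
  refine .of_forall_abs_sub_le fun ε hε => ?_
  obtain ⟨δ, hδ, hclose⟩ := t.exists_abs_functional_sub_le n hφ hε
  obtain ⟨W', hW', hW'n, hWW'⟩ := exists_continuous_integral_abs_sub_le (hW.clamp n).integrable
    (fun x y => abs_clamp_le n _) hδ
  have hdeg : HasDegreeLE unif01 (fun x y => clamp n (W x y)) n :=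
    .of_abs_le (hW.clamp n).measurable fun x y => abs_clamp_le n _
  have hdeg' : HasDegreeLE unif01 W' n := .of_abs_le hW'.measurable hW'n
  refine ⟨_, ?_, hclose _ W' hdeg hdeg' (.of_integral_abs_sub_le hdeg hdeg' hWW')⟩
  have hlift : Continuous (Function.uncurry (W'.onFun Prod.fst : ℝ × X → ℝ × X → ℝ)) :=
    hW'.comp (by fun_prop : Continuous fun p : (ℝ × X) × (ℝ × X) => (p.1.1, p.2.1))
  exact isPolyApproximable_integral_pi ((hφ.comp (by fun_prop)).mul (t.continuous_weight hlift))

end RecTree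

end Continuous

/-! ### Weighted counts of vertex tuples with a repeated vertex -/

theorem sum_eq_sum_sum_snoc {ι R : Type*} [Fintype ι] [AddCommMonoid R] {m : ℕ}
    (F : (Fin (m + 2) → ι) → R) :
    ∑ z, F z = ∑ y : Fin (m + 1) → ι, ∑ x, F (Fin.snoc (α := fun _ => ι) y x) := by
  rw [← Fintype.sum_prod_type_right', ← (Fin.snocEquiv fun _ : Fin (m + 2) => ι).sum_comp]
  rfl

theorem RecTree.weight_nonneg {α : Type*} {K : α → α → ℝ} (hK : ∀ x y, 0 ≤ K x y) {m : ℕ}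
    (t : RecTree m) (z : Fin (m + 1) → α) : 0 ≤ t.weight K z := by
  induction t with
  | single => exact zero_le_one
  | attach t p ih => exact mul_nonneg (ih _) (hK _ _)

theorem RecTree.weight_abs_div {ι : Type*} (Q : ι → ι → ℝ) (c : ℝ) {m : ℕ} (t : RecTree m)
    (z : Fin (m + 1) → ι) : t.weight (fun a b => |Q a b| / c) z = |t.weight Q z| / c ^ m := by
  induction t with
  | single => simp [weight]
  | attach t p ih => rw [weight, ih, weight, abs_mul, pow_succ, div_mul_div_comm]

/-- A nonnegative matrix whose row and column sums are all at most `M`; the discrete counterpart of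
`HasDegreeLE`. -/
structure HasRowColSumLE {ι : Type*} [Fintype ι] (B : ι → ι → ℝ) (M : ℝ) : Prop where
  nonneg : ∀ i j, 0 ≤ B i j
  sum_row_le : ∀ i, ∑ j, B i j ≤ M
  sum_col_le : ∀ j, ∑ i, B i j ≤ M

namespace HasRowColSumLE

variable {ι : Type*} [Fintype ι] {B C : ι → ι → ℝ} {M : ℝ} {m : ℕ}

theorem sum_sq_sum_mul_le (hB : HasRowColSumLE B M) (hM : 0 ≤ M) (C : ι → ι → ℝ) :
    ∑ a, ∑ b, (∑ x, B x a * C x b) ^ 2 ≤ M ^ 2 * ∑ a, ∑ b, C a b ^ 2 := by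
  calc
    _ ≤ ∑ a, ∑ b, M * ∑ x, B x a * C x b ^ 2 := by
      gcongr with a _ b
      refine (Finset.sum_sq_le_sum_mul_sum_of_sq_le_mul Finset.univ (f := fun x => B x a)
        (g := fun x => B x a * C x b ^ 2) (fun x _ => hB.nonneg x a)
        (fun x _ => mul_nonneg (hB.nonneg x a) (sq_nonneg _))
        fun x _ => le_of_eq (by ring)).trans ?_
      exact mul_le_mul_of_nonneg_right (hB.sum_col_le a)
        (Finset.sum_nonneg fun x _ => mul_nonneg (hB.nonneg x a) (sq_nonneg _))
    _ = M * ∑ x, (∑ a, B x a) * ∑ b, C x b ^ 2 := by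
      simp_rw [← Finset.mul_sum, Finset.sum_mul_sum]
      rw [Finset.sum_comm_cycle]
    _ ≤ M * ∑ x, M * ∑ b, C x b ^ 2 := by
      gcongr with x
      exact hB.sum_row_le x
    _ = M ^ 2 * ∑ a, ∑ b, C a b ^ 2 := by rw [← Finset.mul_sum]; ring

theorem sum_weight_mul_le (hB : HasRowColSumLE B M) (hM : 0 ≤ M) (t : RecTree m)
    (l : Fin (m + 1)) {g : ι → ℝ} (hg : ∀ i, 0 ≤ g i) :
    ∑ z, t.weight B z * g (z l) ≤ M ^ m * ∑ i, g i := by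
  induction t generalizing g with
  | single =>
    rw [← (Equiv.funUnique (Fin 1) ι).sum_comp g, pow_zero, one_mul]
    exact Finset.sum_le_sum fun z _ => by
      simp [RecTree.weight, Subsingleton.elim (α := Fin 1) l 0]
  | @attach m t p ih =>
    rw [sum_eq_sum_sum_snoc]
    simp only [RecTree.weight_snoc]
    refine Fin.lastCases ?_ (fun l => ?_) l
    · have hgB : ∀ i, 0 ≤ ∑ x, B x i * g x := fun i =>
        Finset.sum_nonneg fun x _ => mul_nonneg (hB.nonneg x i) (hg x)
      calc
        _ = ∑ y, t.weight B y * ∑ x, B x (y p) * g x := by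
          simp only [Fin.snoc_last, Finset.mul_sum, mul_assoc]
        _ ≤ M ^ m * ∑ i, ∑ x, B x i * g x := ih p hgB
        _ = M ^ m * ∑ x, (∑ i, B x i) * g x := by rw [Finset.sum_comm]; simp_rw [Finset.sum_mul]
        _ ≤ M ^ m * ∑ x, M * g x := by
          gcongr with x
          exacts [hg x, hB.sum_row_le x]
        _ = M ^ (m + 1) * ∑ i, g i := by rw [← Finset.mul_sum]; ring
    · calc
        _ = ∑ y, t.weight B y * g (y l) * ∑ x, B x (y p) := by
          simp only [Fin.snoc_castSucc, Finset.mul_sum, mul_right_comm]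
        _ ≤ ∑ y, t.weight B y * g (y l) * M := by
          gcongr with y
          exacts [mul_nonneg (t.weight_nonneg hB.nonneg y) (hg _), hB.sum_col_le _]
        _ ≤ M ^ m * (∑ i, g i) * M := by
          rw [← Finset.sum_mul]
          gcongr
          exact ih l hg
        _ = M ^ (m + 1) * ∑ i, g i := by ring

theorem two_mul_sum_weight_mul_sum_mul_self_le (hB : HasRowColSumLE B M) (hM : 0 ≤ M)
    (t : RecTree m) (p : Fin (m + 1)) (hC : ∀ i j, 0 ≤ C i j) :
    2 * ∑ y, t.weight B y * ∑ x, B x (y p) * C x (y p) ≤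
      M ^ m * (∑ i, ∑ j, B i j ^ 2 + ∑ i, ∑ j, C i j ^ 2) := by
  have hBC : ∀ i, 0 ≤ ∑ x, B x i * C x i := fun i =>
    Finset.sum_nonneg fun x _ => mul_nonneg (hB.nonneg x i) (hC x i)
  calc
    _ ≤ 2 * (M ^ m * ∑ i, ∑ x, B x i * C x i) := by
      gcongr
      exact hB.sum_weight_mul_le hM t p hBC
    _ = M ^ m * ∑ x, ∑ i, 2 * B x i * C x i := by
      rw [Finset.sum_comm]
      simp_rw [mul_assoc, ← Finset.mul_sum]
      ring
    _ ≤ M ^ m * (∑ i, ∑ j, B i j ^ 2 + ∑ i, ∑ j, C i j ^ 2) := by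
      simp_rw [← Finset.sum_add_distrib]
      gcongr
      exact two_mul_le_add_sq _ _

theorem two_mul_sum_weight_mul_sum_mul_le (hB : HasRowColSumLE B M) (hM : 0 < M)
    {t : RecTree m} {p q : Fin (m + 1)} (hC : ∀ i j, 0 ≤ C i j)
    (h : ∀ D : ι → ι → ℝ, (∀ i j, 0 ≤ D i j) → 2 * ∑ y, t.weight B y * D (y q) (y p) ≤
      M ^ m * (∑ i, ∑ j, B i j ^ 2 + ∑ i, ∑ j, D i j ^ 2)) :
    2 * ∑ y, t.weight B y * ∑ x, B x (y q) * C x (y p) ≤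
      M ^ (m + 1) * (∑ i, ∑ j, B i j ^ 2 + ∑ i, ∑ j, C i j ^ 2) := by
  let D : ι → ι → ℝ := fun a b => M⁻¹ * ∑ x, B x a * C x b
  have hD : ∀ a b, 0 ≤ D a b := fun a b => mul_nonneg (inv_nonneg.mpr hM.le)
    (Finset.sum_nonneg fun x _ => mul_nonneg (hB.nonneg x a) (hC x b))
  have hDC : ∑ a, ∑ b, D a b ^ 2 ≤ ∑ a, ∑ b, C a b ^ 2 := by
    simp_rw [D, mul_pow, ← Finset.mul_sum]
    rw [inv_pow, inv_mul_le_iff₀ (pow_pos hM 2)]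
    exact hB.sum_sq_sum_mul_le hM.le C
  calc
    _ = M * (2 * ∑ y, t.weight B y * D (y q) (y p)) := by
      simp_rw [D, mul_left_comm _ M⁻¹, ← Finset.mul_sum]
      field_simp
    _ ≤ M * (M ^ m * (∑ i, ∑ j, B i j ^ 2 + ∑ i, ∑ j, C i j ^ 2)) := by
      exact mul_le_mul_of_nonneg_left ((h D hD).trans (by gcongr)) hM.le
    _ = _ := by ring

theorem two_mul_sum_weight_mul_le (hB : HasRowColSumLE B M) (hM : 1 ≤ M) (t : RecTree m)
    {l p : Fin (m + 1)} (hlp : l ≠ p) (hC : ∀ i j, 0 ≤ C i j) :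
    2 * ∑ z, t.weight B z * C (z l) (z p) ≤
      M ^ m * (∑ i, ∑ j, B i j ^ 2 + ∑ i, ∑ j, C i j ^ 2) := by
  induction t generalizing C with
  | single => exact (hlp (Subsingleton.elim (α := Fin 1) l p)).elim
  | @attach m t q ih =>
    have hM0 : 0 < M := zero_lt_one.trans_le hM
    have last_left : ∀ (p : Fin (m + 1)) (C : ι → ι → ℝ), (∀ i j, 0 ≤ C i j) →
        2 * ∑ y, ∑ x, t.weight B y * B x (y q) * C x (y p) ≤
          M ^ (m + 1) * (∑ i, ∑ j, B i j ^ 2 + ∑ i, ∑ j, C i j ^ 2) := by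
      intro p C hC
      simp_rw [mul_assoc, ← Finset.mul_sum]
      obtain rfl | hqp := eq_or_ne q p
      · refine (hB.two_mul_sum_weight_mul_sum_mul_self_le hM0.le t q hC).trans ?_
        gcongr
        exact m.le_succ
      · exact hB.two_mul_sum_weight_mul_sum_mul_le hM0 hC fun D hD => ih hqp hD
    rw [sum_eq_sum_sum_snoc]
    simp only [RecTree.weight_snoc]
    cases l using Fin.lastCases with
    | last =>
      cases p using Fin.lastCases with
      | last => exact (hlp rfl).elim
      | cast p => simpa only [Fin.snoc_last, Fin.snoc_castSucc] using last_left p C hC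
    | cast l =>
      cases p using Fin.lastCases with
      | last =>
        rw [Finset.sum_comm (f := fun i j => C i j ^ 2)]
        simpa only [Fin.snoc_last, Fin.snoc_castSucc] using
          last_left l (fun i j => C j i) fun i j => hC j i
      | cast p =>
        simp only [Fin.snoc_castSucc]
        calc
          _ = 2 * ∑ y, t.weight B y * C (y l) (y p) * ∑ x, B x (y q) := by
            simp only [Finset.mul_sum, mul_right_comm]
          _ ≤ 2 * ∑ y, t.weight B y * C (y l) (y p) * M := by
            gcongr with y
            exacts [mul_nonneg (t.weight_nonneg hB.nonneg y) (hC _ _), hB.sum_col_le _]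
          _ ≤ M ^ m * (∑ i, ∑ j, B i j ^ 2 + ∑ i, ∑ j, C i j ^ 2) * M := by
            rw [← Finset.sum_mul, ← mul_assoc]
            exact mul_le_mul_of_nonneg_right (ih (ne_of_apply_ne _ hlp) hC) hM0.le
          _ = _ := by ring

theorem sum_weight_mul_self_le (hB : HasRowColSumLE B M) (hM : 1 ≤ M) (hdiag : ∀ i, B i i = 0)
    (t : RecTree m) (l p : Fin (m + 1)) :
    ∑ z, t.weight B z * B (z l) (z p) ≤ M ^ m * ∑ i, ∑ j, B i j ^ 2 := by
  obtain rfl | hlp := eq_or_ne l p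
  · simp only [hdiag, mul_zero, Finset.sum_const_zero]
    positivity
  · linarith [hB.two_mul_sum_weight_mul_le hM t hlp hB.nonneg]

variable [DecidableEq ι]

theorem sum_not_injective_snoc_le (hB : HasRowColSumLE B M) {t : RecTree m} (p : Fin (m + 1))
    (y : Fin (m + 1) → ι) :
    ∑ x with ¬Function.Injective (Fin.snoc (α := fun _ => ι) y x : Fin (m + 2) → ι),
        t.weight B y * B x (y p) ≤
      (if ¬Function.Injective y then t.weight B y else 0) * M +
        ∑ l, t.weight B y * B (y l) (y p) := by
  have hweight := t.weight_nonneg hB.nonneg y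
  by_cases hy : Function.Injective y
  · have himage : Finset.univ.filter
        (fun x => ¬Function.Injective (Fin.snoc (α := fun _ => ι) y x : Fin (m + 2) → ι)) =
        Finset.univ.image y := by
      ext x
      simp [Fin.snoc_injective_iff, hy]
    rw [himage, Finset.sum_image hy.injOn, if_neg (not_not.mpr hy), zero_mul, zero_add]
  · rw [if_pos hy, ← Finset.mul_sum]
    refine le_add_of_le_of_nonneg (mul_le_mul_of_nonneg_left ?_ hweight)
      (Finset.sum_nonneg fun l _ => mul_nonneg hweight (hB.nonneg _ _))
    exact (Finset.sum_le_univ_sum_of_nonneg fun x => hB.nonneg x _).trans (hB.sum_col_le _)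

theorem sum_weight_not_injective_le (hB : HasRowColSumLE B M) (hM : 1 ≤ M)
    (hdiag : ∀ i, B i i = 0) (t : RecTree m) :
    ∑ z with ¬Function.Injective z, t.weight B z ≤ m ^ 2 * M ^ m * ∑ i, ∑ j, B i j ^ 2 := by
  induction t with
  | single => simp [Function.injective_of_subsingleton]
  | @attach m t p ih =>
    calc
      _ = ∑ y, ∑ x with ¬Function.Injective (Fin.snoc (α := fun _ => ι) y x : Fin (m + 2) → ι),
          t.weight B y * B x (y p) := by
        simp_rw [Finset.sum_filter]
        rw [sum_eq_sum_sum_snoc]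
        simp only [RecTree.weight_snoc]
      _ ≤ ∑ y, ((if ¬Function.Injective y then t.weight B y else 0) * M +
          ∑ l, t.weight B y * B (y l) (y p)) :=
        Finset.sum_le_sum fun y _ => hB.sum_not_injective_snoc_le p y
      _ = (∑ y with ¬Function.Injective y, t.weight B y) * M +
          ∑ l, ∑ y, t.weight B y * B (y l) (y p) := by
        rw [Finset.sum_add_distrib, ← Finset.sum_mul, ← Finset.sum_filter, Finset.sum_comm]
      _ ≤ m ^ 2 * M ^ m * (∑ i, ∑ j, B i j ^ 2) * M +
          ∑ _l : Fin (m + 1), M ^ m * ∑ i, ∑ j, B i j ^ 2 := by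
        gcongr with l
        exact hB.sum_weight_mul_self_le hM hdiag t l p
      _ = (m ^ 2 * M + (m + 1)) * (M ^ m * ∑ i, ∑ j, B i j ^ 2) := by
        simp only [Finset.sum_const, Finset.card_univ, Fintype.card_fin, nsmul_eq_mul]
        push_cast
        ring
      _ ≤ ((m + 1) ^ 2 * M) * (M ^ m * ∑ i, ∑ j, B i j ^ 2) := by
        gcongr
        nlinarith [(m.cast_nonneg : (0 : ℝ) ≤ m)]
      _ = _ := by push_cast; ring

end HasRowColSumLE

/-! ### Vanishing of the normalized square sums -/

section RandomSigns

variable {ι : Type*} [Fintype ι]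

theorem abs_sum_mul_signs_le (u : ι → ℝ) (ξ : ι → ℤˣ) :
    |∑ j, u j * ((ξ j : ℤ) : ℝ)| ≤ ∑ j, |u j| := by
  refine (Finset.abs_sum_le_sum_abs _ _).trans_eq (Finset.sum_congr rfl fun j _ => ?_)
  rw [abs_mul, ← Int.cast_abs, Int.isUnit_iff_abs_eq.mp (ξ j).isUnit, Int.cast_one, mul_one]

theorem sum_signs_mul_signs [DecidableEq ι] (j k : ι) :
    ∑ ξ : ι → ℤˣ, ((ξ j : ℤ) : ℝ) * ((ξ k : ℤ) : ℝ) =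
      if j = k then (2 : ℝ) ^ Fintype.card ι else 0 := by
  split_ifs with h
  · have hsq : ∀ s : ℤˣ, ((s : ℤ) : ℝ) * ((s : ℤ) : ℝ) = 1 := fun s => by
      rw [← Int.cast_mul, ← Units.val_mul, Int.units_mul_self, Units.val_one, Int.cast_one]
    simp [h, hsq]
  · have hflip := Equiv.sum_comp (Equiv.mulLeft (Pi.mulSingle j (-1 : ℤˣ)))
      fun ξ : ι → ℤˣ => ((ξ j : ℤ) : ℝ) * ((ξ k : ℤ) : ℝ)
    simp only [Equiv.coe_mulLeft, Pi.mul_apply, Pi.mulSingle_eq_same, neg_mul, one_mul,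
      Units.val_neg, Int.cast_neg, Pi.mulSingle_eq_of_ne' h, Finset.sum_neg_distrib] at hflip
    linarith

theorem sum_signs_linear_mul_linear [DecidableEq ι] (u w : ι → ℝ) :
    ∑ ξ : ι → ℤˣ, (∑ j, u j * ((ξ j : ℤ) : ℝ)) * (∑ k, w k * ((ξ k : ℤ) : ℝ)) =
      (2 : ℝ) ^ Fintype.card ι * ∑ j, u j * w j := by
  calc _ = ∑ j, ∑ k, u j * w k * ∑ ξ : ι → ℤˣ, ((ξ j : ℤ) : ℝ) * ((ξ k : ℤ) : ℝ) := by
        simp_rw [Finset.sum_mul_sum, Finset.mul_sum]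
        rw [Finset.sum_comm]
        refine Finset.sum_congr rfl fun j _ => Finset.sum_comm.trans ?_
        exact Finset.sum_congr rfl fun k _ => Finset.sum_congr rfl fun ξ _ => by ring
    _ = _ := by
        simp only [sum_signs_mul_signs, mul_ite, mul_zero, Finset.sum_ite_eq, Finset.mem_univ,
          if_true]
        rw [← Finset.sum_mul, mul_comm]

theorem integral_sum_mul_le_of_signs {α : Type*} [MeasurableSpace α] {ν : Measure α}
    {u w : ι → α → ℝ} {M δ : ℝ} (hu : ∀ j, Measurable (u j)) (hw : ∀ j, Integrable (w j) ν)
    (hM : ∀ x, ∑ j, |u j x| ≤ M) (hM0 : 0 ≤ M)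
    (hδ : ∀ ξ : ι → ℤˣ, ∫ x, |∑ j, w j x * ((ξ j : ℤ) : ℝ)| ∂ν ≤ δ) :
    ∫ x, ∑ j, u j x * w j x ∂ν ≤ M * δ := by
  classical
  have huM : ∀ (ξ : ι → ℤˣ) x, |∑ j, u j x * ((ξ j : ℤ) : ℝ)| ≤ M := fun ξ x =>
    (abs_sum_mul_signs_le _ ξ).trans (hM x)
  have hwξ : ∀ ξ : ι → ℤˣ, Integrable (fun x => ∑ j, w j x * ((ξ j : ℤ) : ℝ)) ν := fun ξ =>
    integrable_finsetSum _ fun j _ => (hw j).mul_const _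
  have hint : ∀ ξ : ι → ℤˣ, Integrable
      (fun x => (∑ j, u j x * ((ξ j : ℤ) : ℝ)) * ∑ j, w j x * ((ξ j : ℤ) : ℝ)) ν := fun ξ =>
    (hwξ ξ).bdd_mul
      (Finset.measurable_fun_sum _ fun j _ => (hu j).mul_const _).aestronglyMeasurable
      (.of_forall (huM ξ))
  have hle : ∀ ξ : ι → ℤˣ,
      ∫ x, (∑ j, u j x * ((ξ j : ℤ) : ℝ)) * ∑ j, w j x * ((ξ j : ℤ) : ℝ) ∂ν ≤ M * δ :=
    fun ξ => calc
      _ ≤ ∫ x, M * |∑ j, w j x * ((ξ j : ℤ) : ℝ)| ∂ν := by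
        refine integral_mono (hint ξ) ((hwξ ξ).abs.const_mul M) fun x => (le_abs_self _).trans ?_
        rw [abs_mul]
        exact mul_le_mul_of_nonneg_right (huM ξ x) (abs_nonneg _)
      _ ≤ M * δ := by
        rw [integral_const_mul]
        exact mul_le_mul_of_nonneg_left (hδ ξ) hM0
  refine le_of_mul_le_mul_left ?_ (by positivity : (0 : ℝ) < 2 ^ Fintype.card ι)
  calc _ = ∑ ξ : ι → ℤˣ,
        ∫ x, (∑ j, u j x * ((ξ j : ℤ) : ℝ)) * ∑ j, w j x * ((ξ j : ℤ) : ℝ) ∂ν := by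
        rw [← integral_finsetSum _ fun ξ _ => hint ξ, ← integral_const_mul]
        simp_rw [sum_signs_linear_mul_linear]
    _ ≤ ∑ _ξ : ι → ℤˣ, M * δ := Finset.sum_le_sum fun ξ _ => hle ξ
    _ = _ := by simp

end RandomSigns

theorem integrable_abs_sub_clamp {A : Type*} [MeasurableSpace A] {η : Measure A} {f : A → ℝ}
    (hf : Integrable f η) (R : ℝ≥0) : Integrable (fun a => |f a - clamp R (f a)|) η :=
  (hf.sub (hf.mono ((continuous_clamp R).comp_aestronglyMeasurable hf.1)
    (.of_forall fun _ => abs_clamp_le_abs R _))).abs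

section Cells

variable {A : Type*} [MeasurableSpace A] {η : Measure A} {n : ℕ} {τ : A → Fin n}
  {W : A → A → ℝ} {M : ℝ≥0} {Q : Fin n → Fin n → ℝ} {δ : ℝ}

theorem kernelOp_comp (hτ : Measurable τ) (hW : HasDegreeLE η W M) (f : Fin n → ℝ)
    (x : A) : kernelOp η W (f ∘ τ) x = ∑ j, (∫ y in τ ⁻¹' {j}, W y x ∂η) * f j := by
  rw [kernelOp]
  refine (integral_comp_eq_sum_setIntegral hτ (F := fun j y => W y x * f j)
    fun j => (hW.integrable_left x).mul_const _).trans ?_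
  simp_rw [integral_mul_const]

theorem integrable_mul_of_sum_abs_le {u : Fin n → A → ℝ} (hu : ∀ j, Measurable (u j)) {C : ℝ}
    (hC : ∀ x, ∑ j, |u j x| ≤ C) (j : Fin n) {f : A → ℝ} (hf : Integrable f η) :
    Integrable (fun x => u j x * f x) η :=
  hf.bdd_mul (hu j).aestronglyMeasurable (.of_forall fun x => (Finset.single_le_sum
    (f := fun j => |u j x|) (fun _ _ => abs_nonneg _) (Finset.mem_univ j)).trans (hC x))

theorem HasDegreeLE.integrable_setIntegral_left [IsFiniteMeasure η] (hW : HasDegreeLE η W M)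
    (s : Set A) : Integrable (fun x => ∫ y in s, W y x ∂η) η := by
  have h := hW.integrable.restrict (s := s ×ˢ univ)
  rw [← Measure.prod_restrict, Measure.restrict_univ] at h
  exact h.integral_prod_right

variable [IsProbabilityMeasure η]

namespace IsEquipartition

theorem integral_fun_comp (hτ : IsEquipartition η τ) (f : Fin n → ℝ) :
    ∫ a, f (τ a) ∂η = (n : ℝ)⁻¹ * ∑ i, f i := by
  rw [integral_comp_eq_sum_setIntegral hτ.measurable (F := fun i _ => f i)
    fun i => integrable_const _, Finset.mul_sum]
  exact Finset.sum_congr rfl fun i _ => by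
    rw [setIntegral_const, hτ.measureReal_cell, smul_eq_mul]

theorem kernelOp_matrix_comp (hτ : IsEquipartition η τ) (Q : Fin n → Fin n → ℝ)
    (f : Fin n → ℝ) (x : A) :
    kernelOp η (fun y x => Q (τ y) (τ x)) (f ∘ τ) x = ∑ j, Q j (τ x) / n * f j := by
  rw [kernelOp]
  refine (hτ.integral_fun_comp fun j => Q j (τ x) * f j).trans ?_
  rw [Finset.mul_sum]
  exact Finset.sum_congr rfl fun j _ => by ring

theorem abs_setIntegral_cell_le (hτ : IsEquipartition η τ) {f : A → ℝ} (hf : Integrable f η)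
    (R : ℝ≥0) (j : Fin n) :
    |∫ a in τ ⁻¹' {j}, f a ∂η| ≤ ∫ a, |f a - clamp R (f a)| ∂η + R * (n : ℝ)⁻¹ := by
  have hdiff := integrable_abs_sub_clamp hf R
  calc _ ≤ ∫ a in τ ⁻¹' {j}, |f a| ∂η := abs_integral_le_integral_abs
    _ ≤ ∫ a in τ ⁻¹' {j}, (|f a - clamp R (f a)| + R) ∂η := by
      refine integral_mono hf.abs.integrableOn (hdiff.add (integrable_const _)).integrableOn
        fun a => ?_
      linarith [abs_sub_abs_le_abs_sub (f a) (clamp R (f a)), abs_clamp_le R (f a)]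
    _ = ∫ a in τ ⁻¹' {j}, |f a - clamp R (f a)| ∂η + R * (n : ℝ)⁻¹ := by
      rw [integral_add hdiff.integrableOn (integrable_const _), setIntegral_const,
        hτ.measureReal_cell, smul_eq_mul, mul_comm]
    _ ≤ _ := add_le_add_left (setIntegral_le_integral hdiff (.of_forall fun _ => abs_nonneg _)) _

theorem sum_mul_setIntegral_cell_le (hτ : IsEquipartition η τ) {f : A → ℝ}
    (hf : Integrable f η) {u : Fin n → ℝ} (hu : ∑ j, |u j| ≤ M) (R : ℝ≥0) :
    ∑ j, u j * ∫ a in τ ⁻¹' {j}, f a ∂η ≤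
      M * ∫ a, |f a - clamp R (f a)| ∂η + R * M / n := by
  calc _ ≤ ∑ j, |u j| * (∫ a, |f a - clamp R (f a)| ∂η + R * (n : ℝ)⁻¹) := by
        refine Finset.sum_le_sum fun j _ => (le_abs_self _).trans ?_
        rw [abs_mul]
        exact mul_le_mul_of_nonneg_left (hτ.abs_setIntegral_cell_le hf R j) (abs_nonneg _)
    _ ≤ M * (∫ a, |f a - clamp R (f a)| ∂η + R * (n : ℝ)⁻¹) := by
        rw [← Finset.sum_mul]
        gcongr
    _ = _ := by ring

theorem integral_sum_mul_setIntegral_cell_le (hτ : IsEquipartition η τ) (hW : HasDegreeLE η W M)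
    {u : Fin n → A → ℝ} (hu : ∀ j, Measurable (u j)) (huM : ∀ x, ∑ j, |u j x| ≤ M) (R : ℝ≥0) :
    ∫ x, ∑ j, u j x * ∫ y in τ ⁻¹' {j}, W y x ∂η ∂η ≤
      M * ∫ z : A × A, |W z.1 z.2 - clamp R (W z.1 z.2)| ∂(η.prod η) + R * M / n := by
  have hclamp : Integrable (fun z : A × A => |W z.1 z.2 - clamp R (W z.1 z.2)|) (η.prod η) :=
    integrable_abs_sub_clamp hW.integrable R
  calc _ ≤ ∫ x, (M * ∫ y, |W y x - clamp R (W y x)| ∂η + R * M / n) ∂η :=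
        integral_mono (integrable_finsetSum _ fun j _ =>
            integrable_mul_of_sum_abs_le hu huM j (hW.integrable_setIntegral_left _))
          ((hclamp.integral_prod_right.const_mul _).add (integrable_const _)) fun x =>
            hτ.sum_mul_setIntegral_cell_le (hW.integrable_left x) (huM x) R
    _ = _ := by
      rw [integral_add (hclamp.integral_prod_right.const_mul _) (integrable_const _),
        integral_const_mul, integral_prod_symm _ hclamp, integral_const, probReal_univ, one_smul]

theorem integral_sum_mul_sub_setIntegral_cell_le (hτ : IsEquipartition η τ)
    (hW : HasDegreeLE η W M) (hQ : ∀ i, ∑ j, |Q j i / n| ≤ M)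
    (hδ : OpDistLE η (fun y x => Q (τ y) (τ x)) W δ) :
    ∫ x, ∑ j, Q j (τ x) / n * (Q j (τ x) / n - ∫ y in τ ⁻¹' {j}, W y x ∂η) ∂η ≤ M * δ := by
  have hq : ∀ j, Measurable fun x => Q j (τ x) / n := fun j =>
    (measurable_of_finite fun i => Q j i / n).comp hτ.measurable
  have hqint : ∀ j, Integrable (fun x => Q j (τ x) / n) η := fun j => by
    simpa using integrable_mul_of_sum_abs_le hq (fun x => hQ (τ x)) j (integrable_const (1 : ℝ))
  refine integral_sum_mul_le_of_signs hq
    (fun j => (hqint j).sub (hW.integrable_setIntegral_left _)) (fun x => hQ (τ x)) M.2 fun ξ => ?_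
  have hξ := hδ ((fun i => ((ξ i : ℤ) : ℝ)) ∘ τ)
    ((measurable_of_finite _).comp hτ.measurable) fun x => by
      rw [Function.comp_apply, ← Int.cast_abs, Int.isUnit_iff_abs_eq.mp (ξ _).isUnit, Int.cast_one]
  simpa only [hτ.kernelOp_matrix_comp, kernelOp_comp hτ.measurable hW,
    ← Finset.sum_sub_distrib, ← sub_mul] using hξ

/- The square sum is split as `∑ q * (q - b) + ∑ q * b`, where `b` collects the integrals of `W`
over the cells; the first part is controlled by the operator norm through random signs, the second
one by truncating `W`. -/
theorem inv_mul_sum_sq_le (hτ : IsEquipartition η τ) (hW : HasDegreeLE η W M)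
    (hQ : ∀ i, ∑ j, |Q j i / n| ≤ M) (hδ : OpDistLE η (fun y x => Q (τ y) (τ x)) W δ)
    (R : ℝ≥0) :
    (n : ℝ)⁻¹ * ∑ i, ∑ j, (Q j i / n) ^ 2 ≤ M * δ +
      (M * ∫ z : A × A, |W z.1 z.2 - clamp R (W z.1 z.2)| ∂(η.prod η) + R * M / n) := by
  have hq : ∀ j, Measurable fun x => Q j (τ x) / n := fun j =>
    (measurable_of_finite fun i => Q j i / n).comp hτ.measurable
  have hqb : Integrable (fun x => ∑ j, Q j (τ x) / n * ∫ y in τ ⁻¹' {j}, W y x ∂η) η :=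
    integrable_finsetSum _ fun j _ => integrable_mul_of_sum_abs_le hq (fun x => hQ (τ x)) j
      (hW.integrable_setIntegral_left _)
  have hqq : Integrable (fun x => ∑ j, (Q j (τ x) / n) ^ 2) η :=
    (Integrable.of_finite (μ := η.map τ) (f := fun i => ∑ j, (Q j i / n) ^ 2)).comp_measurable
      hτ.measurable
  calc _ = ∫ x, ∑ j, (Q j (τ x) / n) ^ 2 ∂η :=
        (hτ.integral_fun_comp fun i => ∑ j, (Q j i / n) ^ 2).symm
    _ = ∫ x, ∑ j, Q j (τ x) / n * (Q j (τ x) / n - ∫ y in τ ⁻¹' {j}, W y x ∂η) ∂η +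
        ∫ x, ∑ j, Q j (τ x) / n * ∫ y in τ ⁻¹' {j}, W y x ∂η ∂η := by
      simp_rw [mul_sub, ← sq, Finset.sum_sub_distrib]
      rw [integral_sub hqq hqb, sub_add_cancel]
    _ ≤ _ := add_le_add (hτ.integral_sum_mul_sub_setIntegral_cell_le hW hQ hδ)
      (hτ.integral_sum_mul_setIntegral_cell_le hW hq (fun x => hQ (τ x)) R)

end IsEquipartition

end Cells

theorem exists_inv_mul_sum_sq_le {A : Type*} [MeasurableSpace A] {η : Measure A}
    [IsProbabilityMeasure η] {W : A → A → ℝ} {M : ℝ≥0} (hW : HasDegreeLE η W M) {ε : ℝ}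
    (hε : 0 < ε) :
    ∃ δ > 0, ∀ᶠ n : ℕ in atTop, ∀ (τ : A → Fin n) (Q : Fin n → Fin n → ℝ),
      IsEquipartition η τ → (∀ i, ∑ j, |Q j i / n| ≤ M) →
      OpDistLE η (fun y x => Q (τ y) (τ x)) W δ →
        (n : ℝ)⁻¹ * ∑ i, ∑ j, (Q j i / n) ^ 2 ≤ ε := by
  have htrunc : Tendsto (fun R : ℕ => M * ∫ z : A × A,
      |W z.1 z.2 - clamp R (W z.1 z.2)| ∂(η.prod η)) atTop (nhds (M * 0)) :=
    hW.tendsto_integral_abs_sub_clamp.const_mul _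
  obtain ⟨R, hR⟩ := (htrunc.eventually_lt_const (by rw [mul_zero]; positivity :
    (M : ℝ) * 0 < ε / 3)).exists
  have hdiv : Tendsto (fun n : ℕ => (R : ℝ) * M / n) atTop (nhds 0) :=
    tendsto_const_div_atTop_nhds_zero_nat _
  refine ⟨ε / (3 * (M + 1)), by positivity, ?_⟩
  filter_upwards [hdiv.eventually_lt_const (by positivity : 0 < ε / 3)] with n hn τ Q hτ hQ hδ
  have hMδ : M * (ε / (3 * (M + 1))) ≤ ε / 3 := by
    rw [← mul_div_assoc, div_le_div_iff₀ (by positivity) (by positivity)]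
    nlinarith
  have hle := hτ.inv_mul_sum_sq_le hW hQ hδ R
  rw [NNReal.coe_natCast] at hle
  linarith

/-! ### U- and V-statistics as functionals of the empirical measure -/

theorem integral_pi_map {ι α β : Type*} [Fintype ι] [MeasurableSpace α] [MeasurableSpace β]
    {ν : Measure α} [IsProbabilityMeasure ν] {f : α → β} (hf : Measurable f)
    {F : (ι → β) → ℝ} (hF : Measurable F) :
    ∫ z, F z ∂(Measure.pi fun _ => ν.map f) = ∫ z, F (f ∘ z) ∂(Measure.pi fun _ => ν) := by
  have : IsProbabilityMeasure (ν.map f) := Measure.isProbabilityMeasure_map hf.aemeasurable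
  have hcomp : Measurable fun (z : ι → α) i => f (z i) := by fun_prop
  rw [← Measure.pi_map_pi fun _ => hf.aemeasurable,
    integral_map hcomp.aemeasurable hF.aestronglyMeasurable]
  rfl

theorem IsEquipartition.integral_pi_comp {A : Type*} [MeasurableSpace A] {η : Measure A}
    [IsProbabilityMeasure η] {n k : ℕ} {τ : A → Fin n} (hτ : IsEquipartition η τ)
    (F : (Fin k → Fin n) → ℝ) :
    ∫ a, F (τ ∘ a) ∂(Measure.pi fun _ => η) = (∑ i, F i) / n ^ k := by
  have : IsProbabilityMeasure (η.map τ) :=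
    Measure.isProbabilityMeasure_map hτ.measurable.aemeasurable
  rw [← integral_pi_map hτ.measurable (measurable_of_finite F), integral_fintype .of_finite,
    Finset.sum_div]
  refine Finset.sum_congr rfl fun i _ => ?_
  simp only [measureReal_def, Measure.pi_singleton, hτ.measure_cell,
    Measure.map_apply hτ.measurable (measurableSet_singleton _), Finset.prod_const,
    Finset.card_univ, Fintype.card_fin, ENNReal.toReal_pow, ENNReal.toReal_inv,
    ENNReal.toReal_natCast, smul_eq_mul]
  rw [inv_pow, inv_mul_eq_div]

namespace RecTree

variable {X : Type*} [MeasurableSpace X] {m n : ℕ} {φ : (Fin (m + 1) → X) → ℝ} {τ : ℝ → Fin n}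

theorem measurable_functional_integrand (t : RecTree m) {A : Type*} [MeasurableSpace A]
    {K : A → A → ℝ} (hφ : Measurable φ) (hK : Measurable (Function.uncurry K)) :
    Measurable fun z : Fin (m + 1) → A × X =>
      φ (fun a => (z a).2) * t.weight (K.onFun Prod.fst) z := by
  have hK' : Measurable (Function.uncurry (K.onFun (Prod.fst : A × X → A))) :=
    hK.comp (measurable_fst.prodMap measurable_fst)
  exact (hφ.comp (by fun_prop)).mul (measurable_weight hK' t)

theorem functional_comp_congr (t : RecTree m) (hφ : Measurable φ) (hτ : Measurable τ)
    (Q : Fin n → Fin n → ℝ) {ν ν' : Measure (ℝ × X)} [IsProbabilityMeasure ν]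
    [IsProbabilityMeasure ν'] (h : ν'.map (Prod.map τ id) = ν.map (Prod.map τ id)) :
    t.functional (fun a b => Q (τ a) (τ b)) φ ν' = t.functional (fun a b => Q (τ a) (τ b)) φ ν := by
  have hmap : ∀ (θ : Measure (ℝ × X)) [IsProbabilityMeasure θ],
      t.functional (fun a b => Q (τ a) (τ b)) φ θ =
        ∫ z, φ (fun a => (z a).2) * t.weight (Q.onFun Prod.fst) z
          ∂(Measure.pi fun _ => θ.map (Prod.map τ id)) := fun θ _ => by
    rw [integral_pi_map (hτ.prodMap measurable_id)
      (t.measurable_functional_integrand hφ (measurable_of_finite _))]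
    simp_rw [weight_comp]
    rfl
  rw [hmap, hmap, h]

theorem functional_empiricalMeasure (t : RecTree m) (hφ : Measurable φ)
    (hτ : IsEquipartition unif01 τ) (Q : Fin n → Fin n → ℝ) (x : Fin n → X) :
    t.functional (fun a b => Q (τ a) (τ b)) φ (empiricalMeasure unif01 τ x) =
      (∑ i : Fin (m + 1) → Fin n, φ (x ∘ i) * t.weight Q i) / n ^ (m + 1) := by
  have hK : Measurable (Function.uncurry fun a b => Q (τ a) (τ b)) :=
    (measurable_of_finite (Function.uncurry Q)).comp (hτ.measurable.prodMap hτ.measurable)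
  rw [← hτ.integral_pi_comp fun i => φ (x ∘ i) * t.weight Q i, functional, empiricalMeasure,
    integral_pi_map (measurable_mk_comp hτ.measurable x)
      (t.measurable_functional_integrand hφ hK)]
  simp_rw [weight_comp]
  rfl

end RecTree

section Statistics

variable {X : Type*} {m n : ℕ} {G : SimpleGraph (Fin (m + 1))} [DecidableRel G.Adj]
  {t : RecTree m} {e : Fin (m + 1) ≃ Fin (m + 1)} {φ : (Fin (m + 1) → X) → ℝ}
  {Q : Fin n → Fin n → ℝ}

theorem Vstat_eq_functional_empiricalMeasure [MeasurableSpace X]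
    (h : ∀ z : Fin (m + 1) → Fin n, edgeProd G (fun a b => Q (z a) (z b)) = t.weight Q (z ∘ e))
    (hφ : Measurable φ) {τ : ℝ → Fin n} (hτ : IsEquipartition unif01 τ) (x : Fin n → X) :
    Vstat G φ n Q x = t.functional (fun a b => Q (τ a) (τ b)) (fun w => φ (w ∘ e.symm))
      (empiricalMeasure unif01 τ x) := by
  have hφe : Measurable fun w : Fin (m + 1) → X => φ (w ∘ e.symm) := hφ.comp (by fun_prop)
  rw [t.functional_empiricalMeasure hφe hτ, Vstat]
  congr 1
  refine Fintype.sum_equiv (e.symm.arrowCongr (Equiv.refl _)) _ _ fun i => ?_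
  have hi : e.symm.arrowCongr (Equiv.refl _) i = i ∘ e := rfl
  rw [h, hi, Function.comp_assoc, Function.comp_assoc, e.self_comp_symm, Function.comp_id]

theorem abs_Ustat_sub_Vstat_le
    (h : ∀ z : Fin (m + 1) → Fin n, edgeProd G (fun a b => Q (z a) (z b)) = t.weight Q (z ∘ e))
    {C : ℝ} (hC : ∀ w, |φ w| ≤ C) (x : Fin n → X) :
    |Ustat G φ n Q x - Vstat G φ n Q x| ≤
      C * ((n : ℝ)⁻¹ * ∑ z with ¬Function.Injective z, t.weight (fun a b => |Q a b| / n) z) := by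
  have hsplit : Ustat G φ n Q x - Vstat G φ n Q x =
      -(∑ i with ¬Function.Injective i,
        φ (x ∘ i) * edgeProd G (fun a b => Q (i a) (i b))) / n ^ (m + 1) := by
    rw [Vstat, ← Finset.sum_filter_add_sum_filter_not _ Function.Injective, Ustat]
    ring
  have hreindex : ∑ i with ¬Function.Injective i, |t.weight Q (i ∘ e)| =
      ∑ i with ¬Function.Injective i, |t.weight Q i| :=
    Finset.sum_equiv (e.symm.arrowCongr (Equiv.refl _))
      (fun i => by simp [Equiv.arrowCongr]) fun i _ => rfl
  calc _ ≤ (∑ i with ¬Function.Injective i, C * |t.weight Q (i ∘ e)|) / (n : ℝ) ^ (m + 1) := by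
        rw [hsplit, abs_div, abs_neg, abs_of_nonneg (by positivity : (0 : ℝ) ≤ n ^ (m + 1))]
        gcongr
        refine (Finset.abs_sum_le_sum_abs _ _).trans (Finset.sum_le_sum fun i _ => ?_)
        rw [abs_mul, h]
        exact mul_le_mul_of_nonneg_right (hC _) (abs_nonneg _)
    _ = _ := by
        simp_rw [RecTree.weight_abs_div]
        rw [← Finset.mul_sum, hreindex, ← Finset.sum_div, mul_div_assoc, pow_succ, inv_mul_eq_div,
          div_div]

end Statistics

/-! ### Step kernels and the cut distance -/

theorem IsEquipartition.hasDegreeLE {A : Type*} [MeasurableSpace A] {η : Measure A}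
    [IsProbabilityMeasure η] {n : ℕ} {τ : A → Fin n} (hτ : IsEquipartition η τ)
    {Q : Fin n → Fin n → ℝ} {M : ℝ≥0} (hQ : HasRowColSumLE (fun i j => |Q i j| / n) M) :
    HasDegreeLE η (fun a b => Q (τ a) (τ b)) M := by
  have hline : ∀ f : Fin n → ℝ, ∑ j, |f j| / n ≤ M → ∫⁻ y, ‖f (τ y)‖ₑ ∂η ≤ M := fun f hf => by
    have hint : Integrable (fun y => f (τ y)) η :=
      integrable_of_abs_le ((measurable_of_finite f).comp hτ.measurable) (C := ∑ j, |f j|)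
        fun y => Finset.single_le_sum (f := fun j => |f j|) (fun _ _ => abs_nonneg _)
          (Finset.mem_univ _)
    rw [← ofReal_integral_norm_eq_lintegral_enorm hint, hτ.integral_fun_comp fun j => ‖f j‖,
      ← ENNReal.ofReal_coe_nnreal, inv_mul_eq_div, Finset.sum_div]
    exact ENNReal.ofReal_le_ofReal hf
  exact ⟨(measurable_of_finite (Function.uncurry Q)).comp (hτ.measurable.prodMap hτ.measurable),
    fun x => hline (fun i => Q i (τ x)) (hQ.sum_col_le _),
    fun x => hline (Q (τ x)) (hQ.sum_row_le _)⟩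

section CellIndex

variable {n : ℕ} [NeZero n]

/-- The cell index `⌈n x⌉` of `x ∈ (0, 1]`, shifted to start at `0` as in `stepKernel` and truncated
to `Fin n` for the other reals. -/
noncomputable def cellIndex (n : ℕ) [NeZero n] (x : ℝ) : Fin n :=
  ⟨min (⌈(n : ℝ) * x⌉₊ - 1) (n - 1), by have := NeZero.pos n; lia⟩

theorem measurable_cellIndex : Measurable (cellIndex n) :=
  (measurable_of_countable fun k : ℕ =>
    (⟨min (k - 1) (n - 1), by have := NeZero.pos n; lia⟩ : Fin n)).comp
      (Nat.measurable_ceil.comp (measurable_const.mul measurable_id))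

theorem mem_Ioc_div_iff_cellIndex_eq {x : ℝ} (hx : x ∈ Ioc (0 : ℝ) 1) (i : Fin n) :
    x ∈ Ioc (((i : ℕ) : ℝ) / n) ((((i : ℕ) : ℝ) + 1) / n) ↔ cellIndex n x = i := by
  have hn : (0 : ℝ) < n := Nat.cast_pos.mpr (NeZero.pos n)
  have hceil_pos : 1 ≤ ⌈(n : ℝ) * x⌉₊ := Nat.one_le_ceil_iff.mpr (mul_pos hn hx.1)
  have hceil_le : ⌈(n : ℝ) * x⌉₊ ≤ n := Nat.ceil_le.mpr (mul_le_of_le_one_right hn.le hx.2)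
  have hceil : cellIndex n x = i ↔ ⌈(n : ℝ) * x⌉₊ = (i : ℕ) + 1 := by
    rw [Fin.ext_iff]
    simp only [cellIndex]
    lia
  rw [hceil, Nat.ceil_eq_iff (by lia), mem_Ioc, div_lt_iff₀ hn, le_div_iff₀ hn]
  push_cast
  rw [mul_comm x]

theorem stepKernel_eq_cellIndex (Q : Fin n → Fin n → ℝ) {x y : ℝ} (hx : x ∈ Ioc (0 : ℝ) 1)
    (hy : y ∈ Ioc (0 : ℝ) 1) : stepKernel n Q x y = Q (cellIndex n x) (cellIndex n y) := by
  simp only [stepKernel, mem_Ioc_div_iff_cellIndex_eq hx, mem_Ioc_div_iff_cellIndex_eq hy,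
    ite_and, Finset.sum_ite_irrel, Finset.sum_const_zero, Finset.sum_ite_eq, Finset.mem_univ,
    if_true]

theorem ae_unif01_mem_Ioc : ∀ᵐ x ∂unif01, x ∈ Ioc (0 : ℝ) 1 := by
  rw [unif01, ← restrict_Ioc_eq_restrict_Icc]
  exact ae_restrict_mem measurableSet_Ioc

theorem isEquipartition_cellIndex : IsEquipartition unif01 (cellIndex n) := by
  refine ⟨measurable_cellIndex, fun i => ?_⟩
  have hn : (0 : ℝ) < n := Nat.cast_pos.mpr (NeZero.pos n)
  have hcell : (cellIndex n ⁻¹' {i} : Set ℝ) =ᵐ[unif01]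
      Ioc (((i : ℕ) : ℝ) / n) ((((i : ℕ) : ℝ) + 1) / n) := by
    filter_upwards [ae_unif01_mem_Ioc] with x hx
    exact propext (mem_Ioc_div_iff_cellIndex_eq hx i).symm
  have hsub : Ioc (((i : ℕ) : ℝ) / n) ((((i : ℕ) : ℝ) + 1) / n) ⊆ Icc 0 1 := fun x hx =>
    ⟨le_trans (by positivity) hx.1.le,
      hx.2.trans ((div_le_one hn).mpr (by exact_mod_cast i.2))⟩
  rw [measure_congr hcell, unif01, Measure.restrict_apply measurableSet_Ioc,
    inter_eq_left.mpr hsub, Real.volume_Ioc, ← sub_div, add_sub_cancel_left, one_div,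
    ENNReal.ofReal_inv_of_pos hn, ENNReal.ofReal_natCast]

theorem degFun_stepKernel (Q : Fin n → Fin n → ℝ) {x : ℝ} (hx : x ∈ Ioc (0 : ℝ) 1) :
    degFun (stepKernel n Q) x = ∑ j, |Q (cellIndex n x) j| / n := by
  rw [← Finset.sum_div, div_eq_inv_mul,
    ← isEquipartition_cellIndex.integral_fun_comp fun j => |Q (cellIndex n x) j|]
  refine integral_congr_ae ?_
  filter_upwards [ae_unif01_mem_Ioc] with y hy
  rw [stepKernel_eq_cellIndex Q hx hy]

theorem hasRowColSumLE_of_eLpNorm_degFun_le {Q : Fin n → Fin n → ℝ} {M : ℝ≥0}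
    (hsymm : ∀ i j, Q i j = Q j i) (h : eLpNorm (degFun (stepKernel n Q)) ⊤ unif01 ≤ M) :
    HasRowColSumLE (fun i j => |Q i j| / n) M := by
  have hrow : ∀ i, ∑ j, |Q i j| / n ≤ M := fun i => by
    have hbound : ∀ᵐ x ∂unif01, ‖degFun (stepKernel n Q) x‖ₑ ≤ M := by
      rw [eLpNorm_exponent_top] at h
      filter_upwards [ae_le_eLpNormEssSup (f := degFun (stepKernel n Q)) (μ := unif01)] with x hx
      exact hx.trans h
    have hcell : ∃ᵐ x ∂unif01, cellIndex n x = i :=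
      frequently_ae_mem_iff.mpr (isEquipartition_cellIndex.measure_cell_ne_zero i)
    obtain ⟨x, rfl, hxM, hx⟩ := (hcell.and_eventually (hbound.and ae_unif01_mem_Ioc)).exists
    rw [← degFun_stepKernel Q hx]
    exact (le_abs_self _).trans (enorm_le_coe.mp hxM)
  exact ⟨fun i j => by positivity, hrow, fun j => by simpa only [hsymm _ j] using hrow j⟩

end CellIndex

section CutNorm

variable {α : Type*} [MeasurableSpace α] {ν : Measure α}

theorem integral_abs_le_of_abs_setIntegral_le {f : α → ℝ} (hf : Measurable f)
    (hint : Integrable f ν) {δ : ℝ} (hδ : ∀ S, MeasurableSet S → |∫ x in S, f x ∂ν| ≤ δ) :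
    ∫ x, |f x| ∂ν ≤ 2 * δ := by
  have hsplit := integral_norm_eq_pos_sub_neg hint
  simp only [Real.norm_eq_abs] at hsplit
  have hpos := abs_le.mp (hδ {x | 0 ≤ f x} (measurableSet_le measurable_const hf))
  have hneg := abs_le.mp (hδ {x | f x ≤ 0} (measurableSet_le hf measurable_const))
  linarith

theorem OpDistLE.of_abs_setIntegral_le [IsFiniteMeasure ν] {K K' : α → α → ℝ} {M : ℝ≥0} {δ : ℝ}
    (hK : HasDegreeLE ν K M) (hK' : HasDegreeLE ν K' M)
    (hδ : ∀ S T, MeasurableSet S → MeasurableSet T →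
      |∫ x in S, ∫ y in T, (K x y - K' x y) ∂ν ∂ν| ≤ δ) :
    OpDistLE ν K K' (4 * δ) := by
  intro g hg hg1
  have hD : Measurable fun z : α × α => K z.1 z.2 - K' z.1 z.2 := hK.measurable.sub hK'.measurable
  have hDint (T : Set α) :
      Integrable (fun z : α × α => K z.1 z.2 - K' z.1 z.2) (ν.prod (ν.restrict T)) :=
    (hK.integrable.sub hK'.integrable).mono_measure
      (Measure.prod_mono le_rfl Measure.restrict_le_self)
  have hrow : ∀ T, MeasurableSet T → ∫ y, |∫ x in T, (K y x - K' y x) ∂ν| ∂ν ≤ 2 * δ :=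
    fun T hT => integral_abs_le_of_abs_setIntegral_le
      (hD.stronglyMeasurable.integral_prod_right (ν := ν.restrict T)).measurable
      (hDint T).integral_prod_left fun S hS => hδ S T hS hT
  have hfubini : ∀ T, ∫ x in T, (kernelOp ν K g x - kernelOp ν K' g x) ∂ν =
      ∫ y, (∫ x in T, (K y x - K' y x) ∂ν) * g y ∂ν := fun T => by
    have hDg : Integrable (fun z : α × α => (K z.1 z.2 - K' z.1 z.2) * g z.1)
        (ν.prod (ν.restrict T)) :=
      (hDint T).mul_bdd (hg.comp measurable_fst).aestronglyMeasurable (.of_forall fun z => hg1 z.1)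
    simp only [kernelOp, ← integral_sub (hK.integrable_left_mul _ hg hg1)
      (hK'.integrable_left_mul _ hg hg1), ← sub_mul]
    rw [← integral_prod_symm _ hDg, integral_prod _ hDg]
    simp only [integral_mul_const]
  rw [show 4 * δ = 2 * (2 * δ) by ring]
  refine integral_abs_le_of_abs_setIntegral_le
    ((hK.measurable_kernelOp hg).sub (hK'.measurable_kernelOp hg))
    ((hK.integrable_kernelOp hg hg1).sub (hK'.integrable_kernelOp hg hg1)) fun T hT => ?_
  simp only [Pi.sub_apply, hfubini]
  refine abs_integral_le_integral_abs.trans (le_trans ?_ (hrow T hT))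
  refine integral_mono_of_nonneg (.of_forall fun y => abs_nonneg _)
    (hDint T).integral_prod_left.abs (.of_forall fun y => ?_)
  dsimp only
  rw [abs_mul]
  exact mul_le_of_le_one_right (abs_nonneg _) (hg1 y)

theorem abs_setIntegral_setIntegral_le [SFinite ν] {D : α → α → ℝ}
    (hD : Integrable (Function.uncurry D) (ν.prod ν)) (S T : Set α) :
    |∫ x in S, ∫ y in T, D x y ∂ν ∂ν| ≤ ∫ z : α × α, |D z.1 z.2| ∂(ν.prod ν) := by
  have hle : (ν.restrict S).prod (ν.restrict T) ≤ ν.prod ν :=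
    Measure.prod_mono Measure.restrict_le_self Measure.restrict_le_self
  rw [← integral_prod (fun z : α × α => D z.1 z.2) (hD.mono_measure hle)]
  exact abs_integral_le_integral_abs.trans
    (integral_mono_measure hle (.of_forall fun _ => abs_nonneg _) hD.abs)

end CutNorm

section CutDist

variable {W₁ W₂ : ℝ → ℝ → ℝ}

theorem cutDist_eq_iSup_unif01 (W₁ W₂ : ℝ → ℝ → ℝ) :
    cutDist W₁ W₂ = ⨆ S : {S : Set ℝ // MeasurableSet S}, ⨆ T : {T : Set ℝ // MeasurableSet T},
      |∫ x in S.1, ∫ y in T.1, (W₁ x y - W₂ x y) ∂unif01 ∂unif01| := by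
  have hrestrict (S : {S : Set ℝ // MeasurableSet S}) :
      (volume : Measure ℝ).restrict (Icc 0 1 ∩ S.1) = unif01.restrict S.1 := by
    rw [unif01, Measure.restrict_restrict S.2, inter_comm]
  simp only [cutDist, hrestrict]

theorem cutDist_congr_of_ae_mem {W₁' W₂' : ℝ → ℝ → ℝ} {A : Set ℝ} (hA : ∀ᵐ x ∂unif01, x ∈ A)
    (h₁ : ∀ x ∈ A, ∀ y ∈ A, W₁ x y = W₁' x y) (h₂ : ∀ x ∈ A, ∀ y ∈ A, W₂ x y = W₂' x y) :
    cutDist W₁ W₂ = cutDist W₁' W₂' := by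
  have hcongr (S T : Set ℝ) : ∫ x in S, ∫ y in T, (W₁ x y - W₂ x y) ∂unif01 ∂unif01 =
      ∫ x in S, ∫ y in T, (W₁' x y - W₂' x y) ∂unif01 ∂unif01 := by
    refine integral_congr_ae ?_
    filter_upwards [ae_restrict_of_ae hA] with x hx
    refine integral_congr_ae ?_
    filter_upwards [ae_restrict_of_ae hA] with y hy
    rw [h₁ x hx y hy, h₂ x hx y hy]
  simp only [cutDist_eq_iSup_unif01, hcongr]

theorem abs_setIntegral_sub_le_cutDist
    (h : Integrable (fun z : ℝ × ℝ => W₁ z.1 z.2 - W₂ z.1 z.2) (unif01.prod unif01))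
    {S T : Set ℝ} (hS : MeasurableSet S) (hT : MeasurableSet T) :
    |∫ x in S, ∫ y in T, (W₁ x y - W₂ x y) ∂unif01 ∂unif01| ≤ cutDist W₁ W₂ := by
  have hbound := abs_setIntegral_setIntegral_le (D := fun x y => W₁ x y - W₂ x y) h
  have : Nonempty {T : Set ℝ // MeasurableSet T} := ⟨⟨T, hT⟩⟩
  rw [cutDist_eq_iSup_unif01]
  exact le_ciSup_of_le ⟨_, forall_mem_range.mpr fun S => ciSup_le fun T => hbound S.1 T.1⟩ ⟨S, hS⟩
    (le_ciSup_of_le ⟨_, forall_mem_range.mpr fun T => hbound S T.1⟩ ⟨T, hT⟩ le_rfl)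

theorem OpDistLE.of_cutDist_le {M : ℝ≥0} (h₁ : HasDegreeLE unif01 W₁ M)
    (h₂ : HasDegreeLE unif01 W₂ M) {δ : ℝ} (hδ : cutDist W₁ W₂ ≤ δ) :
    OpDistLE unif01 W₁ W₂ (4 * δ) :=
  .of_abs_setIntegral_le h₁ h₂ fun _ _ hS hT =>
    (abs_setIntegral_sub_le_cutDist (h₁.integrable.sub h₂.integrable) hS hT).trans hδ

end CutDist

section RestrictKernel

variable {W : ℝ → ℝ → ℝ} {A : Set ℝ} {M : ℝ≥0}

/-- The kernel `W` set to zero off `A × A`. For a suitable set `A` of full measure this turns an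
essential bound on the degrees of `W` into one valid everywhere, as in `HasDegreeLE`. -/
noncomputable def restrictKernel (A : Set ℝ) (W : ℝ → ℝ → ℝ) (x y : ℝ) : ℝ :=
  (A ×ˢ A).indicator (Function.uncurry W) (x, y)

theorem restrictKernel_of_mem {x y : ℝ} (hx : x ∈ A) (hy : y ∈ A) :
    restrictKernel A W x y = W x y :=
  indicator_of_mem (mk_mem_prod hx hy) _

theorem lintegral_enorm_restrictKernel_le (h : ∀ x ∈ A, ∫⁻ y, ‖W x y‖ₑ ∂unif01 ≤ M) (x : ℝ) :
    ∫⁻ y, ‖restrictKernel A W x y‖ₑ ∂unif01 ≤ M := by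
  by_cases hx : x ∈ A
  · exact (lintegral_mono fun y => enorm_indicator_le_enorm_self _ _).trans (h x hx)
  · simp [restrictKernel, hx]

theorem exists_hasDegreeLE_restrictKernel (hW : Measurable (Function.uncurry W))
    (hsymm : ∀ x y, W x y = W y x) (hL1 : kerNorm W 1 ≠ ⊤)
    (hdeg : eLpNorm (degFun W) ⊤ unif01 ≤ M) :
    ∃ A : Set ℝ, (∀ᵐ x ∂unif01, x ∈ A) ∧ HasDegreeLE unif01 (restrictKernel A W) M := by
  have hA : MeasurableSet {x | ∫⁻ y, ‖W x y‖ₑ ∂unif01 ≤ M} :=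
    measurableSet_le (Measurable.lintegral_prod_right (f := fun x y => ‖W x y‖ₑ) hW.enorm)
      measurable_const
  refine ⟨{x | ∫⁻ y, ‖W x y‖ₑ ∂unif01 ≤ M}, ?_, hW.indicator (hA.prod hA), fun x => ?_,
    lintegral_enorm_restrictKernel_le fun _ hx => hx⟩
  · have hint : Integrable (fun z : ℝ × ℝ => W z.1 z.2) (unif01.prod unif01) :=
      memLp_one_iff_integrable.mp ⟨hW.aestronglyMeasurable, hL1.lt_top⟩
    rw [eLpNorm_exponent_top] at hdeg
    filter_upwards [hint.prod_right_ae, ae_le_eLpNormEssSup (f := degFun W) (μ := unif01)]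
      with x hx hxM
    rw [← ofReal_integral_norm_eq_lintegral_enorm hx]
    refine le_trans ?_ (hxM.trans hdeg)
    rw [← ofReal_norm]
    exact ENNReal.ofReal_le_ofReal (le_abs_self _)
  · have hswap (A : Set ℝ) (y : ℝ) : restrictKernel A W y x = restrictKernel A W x y := by
      by_cases hx : x ∈ A <;> by_cases hy : y ∈ A <;> simp [restrictKernel, hx, hy, hsymm x y]
    simp only [hswap]
    exact lintegral_enorm_restrictKernel_le (fun _ hx => hx) x

theorem TWphi_eq_functional_restrictKernel {X : Type*} [MeasurableSpace X] {m : ℕ}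
    {G : SimpleGraph (Fin (m + 1))} [DecidableRel G.Adj] {t : RecTree m}
    {e : Fin (m + 1) ≃ Fin (m + 1)}
    (h : ∀ z : Fin (m + 1) → ℝ, edgeProd G (fun a b => W (z a) (z b)) = t.weight W (z ∘ e))
    (hA : ∀ᵐ x ∂unif01, x ∈ A) (φ : (Fin (m + 1) → X) → ℝ) {ν : Measure (ℝ × X)} (hν : inTM ν) :
    TWphi G W φ ν = t.functional (restrictKernel A W) (fun w => φ (w ∘ e.symm)) ν := by
  have := hν.1
  have hAν : ∀ᵐ z ∂(Measure.pi fun _ : Fin (m + 1) => ν), ∀ a, (z a).1 ∈ A :=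
    ae_all_iff.mpr fun a => (Measure.quasiMeasurePreserving_eval (μ := fun _ => ν) a).ae
      (hν.measurePreserving_fst.quasiMeasurePreserving.ae hA)
  have hreindex := measurePreserving_arrowCongr' (fun _ : Fin (m + 1) => ν) (fun _ => ν) e
    (MeasurableEquiv.refl (ℝ × X)) fun _ => .id ν
  rw [TWphi, piProb, probOr, if_pos hν.1,
    ← hreindex.integral_comp (MeasurableEquiv.measurableEmbedding _), RecTree.functional]
  refine integral_congr_ae ?_
  filter_upwards [hAν] with z hz
  have hz_eq : MeasurableEquiv.arrowCongr' e (MeasurableEquiv.refl (ℝ × X)) z = z ∘ e.symm := rfl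
  have hcomp : (fun a => ((z ∘ e.symm) a).1) ∘ e = Prod.fst ∘ z := by
    ext a
    simp
  have hweight : t.weight W (Prod.fst ∘ z) = t.weight (restrictKernel A W) (Prod.fst ∘ z) :=
    RecTree.weight_congr (fun x hx y hy => (restrictKernel_of_mem hx hy).symm) t hz
  rw [hz_eq, h fun a => ((z ∘ e.symm) a).1, hcomp, hweight, RecTree.weight_comp]
  rfl

theorem exists_isEquipartition_opDistLE {n : ℕ} [NeZero n] {Q : Fin n → Fin n → ℝ} {δ : ℝ}
    (hQ : HasRowColSumLE (fun i j => |Q i j| / n) M) (hA : ∀ᵐ x ∂unif01, x ∈ A)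
    (hW : HasDegreeLE unif01 (restrictKernel A W) M) (hδ : weakCutDist (stepKernel n Q) W < δ) :
    ∃ τ : ℝ → Fin n, IsEquipartition unif01 τ ∧
      OpDistLE unif01 (fun a b => Q (τ a) (τ b)) (restrictKernel A W) (4 * δ) := by
  have : Nonempty {σ : ℝ → ℝ // MPB σ} := ⟨⟨id, bijOn_id _, .id _⟩⟩
  obtain ⟨⟨σ, hσ⟩, hσδ⟩ := exists_lt_of_ciInf_lt hδ
  have hτ := isEquipartition_cellIndex (n := n) |>.comp hσ.2
  refine ⟨cellIndex n ∘ σ, hτ, .of_cutDist_le (hτ.hasDegreeLE hQ) hW (hσδ.le.trans' (le_of_eq ?_))⟩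
  have hAσ : ∀ᵐ x ∂unif01, x ∈ A ∩ σ ⁻¹' Ioc 0 1 :=
    hA.and (hσ.2.quasiMeasurePreserving.ae ae_unif01_mem_Ioc)
  exact cutDist_congr_of_ae_mem hAσ
    (fun x hx y hy => (stepKernel_eq_cellIndex Q hx.2 hy.2).symm)
    fun x hx y hy => restrictKernel_of_mem hx.1 hy.1

end RestrictKernel

/-! ### Tree U- and V-statistics -/

theorem exists_one_le_eventually_le {b : ℝ≥0∞} {a : ℕ → ℝ≥0∞} (ha : atTop.limsup a ≠ ⊤)
    (hb : b ≠ ⊤) : ∃ M : ℝ≥0, 1 ≤ M ∧ b ≤ M ∧ ∀ᶠ n in atTop, a n ≤ M := by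
  obtain ⟨M, hM⟩ := ENNReal.lt_iff_exists_nnreal_btwn.mp (max_lt (max_lt ha.lt_top hb.lt_top)
    ENNReal.one_lt_top)
  have hlt := max_lt_iff.mp hM.1
  have hlt' := max_lt_iff.mp hlt.1
  exact ⟨M, by exact_mod_cast hlt.2.le, hlt'.2.le,
    (eventually_lt_of_limsup_lt hlt'.1).mono fun n hn => hn.le⟩

theorem rate0_eq_rateTM {X : Type*} [MeasurableSpace X] {v : ℕ} {G : SimpleGraph (Fin v)}
    [DecidableRel G.Adj] {W : ℝ → ℝ → ℝ} {φ : (Fin v → X) → ℝ} {T : Measure (ℝ × X) → ℝ}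
    (h : ∀ ν, inTM ν → TWphi G W φ ν = T ν) (μ : Measure X) : rate0 G W φ μ = rateTM μ T := by
  funext s
  have hiff (ν : Measure (ℝ × X)) :
      (inTM ν ∧ KLdiv ν (unif01.prod μ) ≠ ⊤ ∧ TWphi G W φ ν = s) ↔
        (inTM ν ∧ KLdiv ν (unif01.prod μ) ≠ ⊤ ∧ T ν = s) :=
    and_congr_right fun hν => by rw [h ν hν]
  exact (Equiv.subtypeEquivRight hiff).iInf_congr fun _ => rfl

section Statistics

variable {m : ℕ} {G : SimpleGraph (Fin (m + 1))} [DecidableRel G.Adj] {t : RecTree m}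
  {e : Fin (m + 1) ≃ Fin (m + 1)} {Q : ∀ n : ℕ, Fin n → Fin n → ℝ} {W : ℝ → ℝ → ℝ} {M : ℝ≥0}

theorem isAsymptoticallyEmpirical_Vstat {X : Type*} [MetricSpace X] [CompactSpace X]
    [MeasurableSpace X] [BorelSpace X] {φ : (Fin (m + 1) → X) → ℝ}
    (h : ∀ n, ∀ z : Fin (m + 1) → Fin n,
      edgeProd G (fun a b => Q n (z a) (z b)) = t.weight (Q n) (z ∘ e))
    (hφ : Continuous φ) (hW : HasDegreeLE unif01 W M)
    (hQ : ∀ᶠ n in atTop, HasRowColSumLE (fun i j => |Q n i j| / n) M)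
    (hQW : ∀ δ > 0, ∀ᶠ n in atTop, ∃ τ : ℝ → Fin n, IsEquipartition unif01 τ ∧
      OpDistLE unif01 (fun a b => Q n (τ a) (τ b)) W δ) :
    IsAsymptoticallyEmpirical (t.functional W fun w => φ (w ∘ e.symm))
      (fun n => Vstat G φ n (Q n)) := by
  intro ε hε
  have hφe : Continuous fun w : Fin (m + 1) → X => φ (w ∘ e.symm) := hφ.comp (by fun_prop)
  obtain ⟨δ, hδ, hclose⟩ := t.exists_abs_functional_sub_le M hφe (half_pos hε)
  filter_upwards [hQ, hQW δ hδ] with n hQn ⟨τ, hτ, hτW⟩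
  have hstep := hclose _ W (hτ.hasDegreeLE hQn) hW hτW
  refine ⟨τ, hτ, fun x => ?_, fun ν ν' hν hν' hmap => ?_⟩
  · rw [Vstat_eq_functional_empiricalMeasure (h n) hφ.measurable hτ x]
    exact (hstep _ (inTM_empiricalMeasure hτ.measurable x)).trans (half_le_self hε.le)
  · have := hν.1
    have := hν'.1
    have hν_close := hstep ν hν
    have hν'_close := hstep ν' hν'
    rw [t.functional_comp_congr hφe.measurable hτ.measurable (Q n) hmap, abs_sub_comm] at hν'_close
    linarith [abs_sub_le (t.functional W (fun w => φ (w ∘ e.symm)) ν')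
      (t.functional (fun a b => Q n (τ a) (τ b)) (fun w => φ (w ∘ e.symm)) ν)
      (t.functional W (fun w => φ (w ∘ e.symm)) ν)]

theorem eventually_abs_Ustat_sub_Vstat_le {X : Type*} [TopologicalSpace X] [CompactSpace X]
    {φ : (Fin (m + 1) → X) → ℝ}
    (h : ∀ n, ∀ z : Fin (m + 1) → Fin n,
      edgeProd G (fun a b => Q n (z a) (z b)) = t.weight (Q n) (z ∘ e))
    (hφ : Continuous φ) (hM : 1 ≤ M) (hdiag : ∀ n i, Q n i i = 0) (hW : HasDegreeLE unif01 W M)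
    (hQ : ∀ᶠ n in atTop, HasRowColSumLE (fun i j => |Q n i j| / n) M)
    (hQW : ∀ δ > 0, ∀ᶠ n in atTop, ∃ τ : ℝ → Fin n, IsEquipartition unif01 τ ∧
      OpDistLE unif01 (fun a b => Q n (τ a) (τ b)) W δ) {ε : ℝ} (hε : 0 < ε) :
    ∀ᶠ n : ℕ in atTop, ∀ x, |Ustat G φ n (Q n) x - Vstat G φ n (Q n) x| ≤ ε := by
  obtain ⟨C, hC⟩ := isCompact_univ.exists_bound_of_continuousOn hφ.continuousOn
  have hC' (w : Fin (m + 1) → X) : |φ w| ≤ |C| := (hC w (mem_univ w)).trans (le_abs_self C)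
  set B : ℝ := |C| * (m ^ 2 * M ^ m)
  obtain ⟨δ, hδ, hsq⟩ := exists_inv_mul_sum_sq_le hW (ε := ε / (B + 1)) (by positivity)
  filter_upwards [hQ, hQW δ hδ, hsq] with n hQn ⟨τ, hτ, hτW⟩ hsqn x
  have hsum : (n : ℝ)⁻¹ * ∑ i, ∑ j, (|Q n i j| / n) ^ 2 ≤ ε / (B + 1) := by
    rw [Finset.sum_comm]
    simpa only [div_pow, sq_abs] using hsqn τ (Q n) hτ
      (fun i => by simpa only [abs_div, Nat.abs_cast] using hQn.sum_col_le i) hτW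
  calc _ ≤ |C| * ((n : ℝ)⁻¹ * ∑ z with ¬Function.Injective z,
          t.weight (fun a b => |Q n a b| / n) z) := abs_Ustat_sub_Vstat_le (h n) hC' x
    _ ≤ |C| * ((n : ℝ)⁻¹ * (m ^ 2 * M ^ m * ∑ i, ∑ j, (|Q n i j| / n) ^ 2)) := by
        gcongr
        exact hQn.sum_weight_not_injective_le (by exact_mod_cast hM) (by simp [hdiag]) t
    _ = B * ((n : ℝ)⁻¹ * ∑ i, ∑ j, (|Q n i j| / n) ^ 2) := by ring
    _ ≤ (B + 1) * (ε / (B + 1)) := by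
        gcongr
        exact le_add_of_nonneg_right zero_le_one
    _ = ε := mul_div_cancel₀ _ (by positivity)

end Statistics

theorem eventually_exists_isEquipartition_opDistLE {Q : ∀ n : ℕ, Fin n → Fin n → ℝ}
    {W : ℝ → ℝ → ℝ} {A : Set ℝ} {M : ℝ≥0}
    (hQ : ∀ᶠ n in atTop, HasRowColSumLE (fun i j => |Q n i j| / n) M)
    (hA : ∀ᵐ x ∂unif01, x ∈ A) (hW : HasDegreeLE unif01 (restrictKernel A W) M)
    (hcut : Tendsto (fun n => weakCutDist (stepKernel n (Q n)) W) atTop (nhds 0)) {δ : ℝ}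
    (hδ : 0 < δ) :
    ∀ᶠ n in atTop, ∃ τ : ℝ → Fin n, IsEquipartition unif01 τ ∧
      OpDistLE unif01 (fun a b => Q n (τ a) (τ b)) (restrictKernel A W) δ := by
  filter_upwards [hQ, hcut.eventually (gt_mem_nhds (by positivity : 0 < δ / 4)),
    eventually_ne_atTop 0] with n hQn hcutn hn
  have : NeZero n := ⟨hn⟩
  simpa only [mul_div_cancel₀ δ four_ne_zero] using
    exists_isEquipartition_opDistLE hQn hA hW hcutn

/-- Theorem 1.2 (iii): the tree case. -/
theorem ldp_inhomogeneous_U_V_statistics_tree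
    {X : Type*} [MetricSpace X] [CompactSpace X] [MeasurableSpace X] [BorelSpace X]
    (μ : Measure X) [IsProbabilityMeasure μ]
    (hnondeg : ∀ x : X, μ ≠ Measure.dirac x)
    {v : ℕ} (hv : 2 ≤ v) (G : SimpleGraph (Fin v)) [DecidableRel G.Adj]
    (htree : G.IsTree)
    (φ : (Fin v → X) → ℝ) (hφ : Continuous φ)
    (Q : ∀ n : ℕ, Fin n → Fin n → ℝ)
    (hQsymm : ∀ n i j, Q n i j = Q n j i) (hQzero : ∀ n i, Q n i i = 0)
    (W : ℝ → ℝ → ℝ) (hWmeas : Measurable (Function.uncurry W))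
    (hWsymm : ∀ x y, W x y = W y x) (hWL1 : kerNorm W 1 ≠ ⊤)
    (hcut : Tendsto (fun n => weakCutDist (stepKernel n (Q n)) W) atTop (nhds 0))
    (hdegQ : Filter.atTop.limsup
      (fun n => eLpNorm (degFun (stepKernel n (Q n))) ⊤ unif01) ≠ ⊤)
    (hdegW : eLpNorm (degFun W) ⊤ unif01 ≠ ⊤) :
    SatisfiesLDP (fun n => Measure.pi fun _ : Fin n => μ)
      (fun n x => Ustat G φ n (Q n) x) (rate0 G W φ μ) ∧
    SatisfiesLDP (fun n => Measure.pi fun _ : Fin n => μ)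
      (fun n x => Vstat G φ n (Q n) x) (rate0 G W φ μ) := by
  obtain ⟨m, rfl⟩ : ∃ m, v = m + 1 := ⟨v - 1, by lia⟩
  obtain ⟨t, e, hte⟩ := exists_recTree_edgeProd_eq G htree
  obtain ⟨M, hM, hMW, hMQ⟩ := exists_one_le_eventually_le hdegQ hdegW
  obtain ⟨A, hA, hWA⟩ := exists_hasDegreeLE_restrictKernel hWmeas hWsymm hWL1 hMW
  have hQ : ∀ᶠ n in atTop, HasRowColSumLE (fun i j => |Q n i j| / n) M := by
    filter_upwards [hMQ, eventually_ne_atTop 0] with n hn hn0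
    have : NeZero n := ⟨hn0⟩
    exact hasRowColSumLE_of_eLpNorm_degFun_le (hQsymm n) hn
  have hQW δ (hδ : 0 < δ) := eventually_exists_isEquipartition_opDistLE hQ hA hWA hcut hδ
  have htQ n := hte (hQsymm n)
  have hpoly := t.isPolyApproximable_functional hWA (φ := fun w => φ (w ∘ e.symm))
    (hφ.comp (by fun_prop))
  have hV := isAsymptoticallyEmpirical_Vstat htQ hφ hWA hQ hQW
  have hU := hV.congr fun ε hε =>
    eventually_abs_Ustat_sub_Vstat_le htQ hφ hM hQzero hWA hQ hQW hε
  rw [rate0_eq_rateTM fun ν hν => TWphi_eq_functional_restrictKernel (hte hWsymm) hA φ hν]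
  exact ⟨hpoly.satisfiesLDP μ hU, hpoly.satisfiesLDP μ hV⟩
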